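/- arXiv:2401.06685 — 4 statements merged into one kernel-verified Lean document; each statement's English description precedes it below -/
import Mathlib

section
/- Let 0 < 4ℓ ≤ n be integers and let H be a set of intervals that is 4ℓ-powerful in (0,n). Then there exists H' ⊆ H, ℓ-powerful in (0,n), which can be written in standard form {(a_i,b_i) : 1 ≤ i ≤ t}, such that the numbers appear in the order 0 = a_1 < a_2 < min(a_3,b_1) ≤ max(a_3,b_1) < min(a_4,b_2) ≤ max(a_4,b_2) < ⋯ < min(a_t,b_{t−2}) ≤ max(a_t,b_{t−2}) < b_{t−1} < b_t = n, and moreover any two of the numbers a_1,…,a_t, b_1,…,b_t differ by at least ℓ, except possibly the pairs (a_1,a_2), (b_{t−1},b_t), and (a_i, b_{i−2}) for 3 ≤ i ≤ t. -/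
/-- `p` captures `q`: intervals `p = (a,b)`, `q = (c,d)` with `a ≤ c ≤ d ≤ b`. -/
def Captures (p q : ℤ × ℤ) : Prop := p.1 ≤ q.1 ∧ q.1 ≤ q.2 ∧ q.2 ≤ p.2

/-- `H` is `ℓ`-powerful in `(0,n)`. -/
def Powerful (ℓ n : ℤ) (H : Finset (ℤ × ℤ)) : Prop :=
  (∀ p ∈ H, 0 ≤ p.1 ∧ p.1 ≤ p.2 ∧ p.2 ≤ n) ∧
  ∀ h : ℤ, 0 ≤ h → h + ℓ ≤ n → ∃ p ∈ H, Captures p (h, h + ℓ)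

/-- `H = {(a_i, b_i) : 1 ≤ i ≤ t}` in standard form (strictly increasing `a`'s and `b`'s). -/
def StdForm (H : Finset (ℤ × ℤ)) (t : ℕ) (a b : ℕ → ℤ) : Prop :=
  (∀ i j : ℕ, 1 ≤ i → i < j → j ≤ t → a i < a j ∧ b i < b j) ∧
  H = (Finset.Icc 1 t).image fun i => (a i, b i)

/-- `H` is minimally `ℓ`-powerful in `(0,n)`. -/
def MinPowerful (ℓ n : ℤ) (H : Finset (ℤ × ℤ)) : Prop :=
  Powerful ℓ n H ∧ ∀ H' ⊆ H, Powerful ℓ n H' → H' = H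

/-- One greedy step: among the members of `H` reaching left to `v - 2ℓ`, take one with maximal
right end. -/
lemma greedy_step (ℓ n : ℤ) (h0 : 0 < 4 * ℓ) (hn : 4 * ℓ ≤ n) (H : Finset (ℤ × ℤ))
    (hpow : Powerful (4 * ℓ) n H) (v : ℤ) (hv : 2 * ℓ ≤ v) (hvn : v ≤ n) :
    ∃ q ∈ H, q.1 ≤ v - 2 * ℓ ∧ min n (v + 2 * ℓ) ≤ q.2 ∧
      ∀ r ∈ H, r.1 ≤ v - 2 * ℓ → r.2 ≤ q.2 := by
  obtain ⟨hb, hc⟩ := hpow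
  have key : ∃ q ∈ H, q.1 ≤ v - 2 * ℓ ∧ min n (v + 2 * ℓ) ≤ q.2 := by
    by_cases h : v + 2 * ℓ ≤ n
    · obtain ⟨q, hq, h1, h2, h3⟩ := hc (v - 2 * ℓ) (by omega) (by omega)
      exact ⟨q, hq, h1, by simp only at h3; omega⟩
    · obtain ⟨q, hq, h1, h2, h3⟩ := hc (n - 4 * ℓ) (by omega) (by omega)
      exact ⟨q, hq, by simp only at h1; omega, by simp only at h3; omega⟩
  obtain ⟨q, hq, h1, h2⟩ := key
  obtain ⟨m, hm, hmax⟩ := Finset.exists_max_image (H.filter fun r => r.1 ≤ v - 2 * ℓ)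
    (fun r => r.2) ⟨q, by simp [hq, h1]⟩
  rw [Finset.mem_filter] at hm
  refine ⟨m, hm.1, hm.2, ?_, ?_⟩
  · have := hmax q (by simp [hq, h1])
    omega
  · intro r hr hr1
    exact hmax r (by simp [hr, hr1])

/-- The greedy chain with overlaps `2ℓ`. -/
lemma greedy_chain (ℓ n : ℤ) (h0 : 0 < 4 * ℓ) (hn : 4 * ℓ ≤ n) (H : Finset (ℤ × ℤ))
    (hpow : Powerful (4 * ℓ) n H) :
    ∃ (s : ℕ) (x y : ℕ → ℤ), (∀ i, (x i, y i) ∈ H) ∧ x 0 = 0 ∧ y s = n ∧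
      (∀ i, i + 1 < s → y i + 2 * ℓ ≤ y (i + 1)) ∧
      (∀ i j, i < j → j ≤ s → y i < y j) ∧
      (∀ i j, i < j → j ≤ s → x i < x j) ∧
      (∀ i, i + 1 ≤ s → x (i + 1) ≤ y i - 2 * ℓ) ∧
      (∀ i, i + 2 ≤ s → y i - 2 * ℓ < x (i + 2)) := by
  have hb := hpow.1
  obtain ⟨p, hp, hp1, hp2, hpm⟩ := greedy_step ℓ n h0 hn H hpow (2 * ℓ) le_rfl (by omega)
  have step : ∀ q : {q : ℤ × ℤ // q ∈ H ∧ 4 * ℓ ≤ q.2}, ∃ q' : {q : ℤ × ℤ // q ∈ H ∧ 4 * ℓ ≤ q.2},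
      q'.1.1 ≤ q.1.2 - 2 * ℓ ∧ min n (q.1.2 + 2 * ℓ) ≤ q'.1.2 ∧
      ∀ r ∈ H, r.1 ≤ q.1.2 - 2 * ℓ → r.2 ≤ q'.1.2 := by
    rintro ⟨q, hq, hq4⟩
    have := hb q hq
    obtain ⟨q', h1, h2, h3, h4⟩ := greedy_step ℓ n h0 hn H hpow q.2 (by omega) (by omega)
    exact ⟨⟨q', h1, by omega⟩, h2, h3, h4⟩
  choose F hF1 hF2 hF3 using step
  let P : ℕ → {q : ℤ × ℤ // q ∈ H ∧ 4 * ℓ ≤ q.2} := fun i => F^[i] ⟨p, hp, by omega⟩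
  have hP0 : P 0 = ⟨p, hp, by omega⟩ := rfl
  have hPs : ∀ i, P (i + 1) = F (P i) := fun i => Function.iterate_succ_apply' _ _ _
  obtain ⟨x, hx⟩ : ∃ x : ℕ → ℤ, ∀ i, x i = (P i).1.1 := ⟨_, fun _ => rfl⟩
  obtain ⟨y, hy⟩ : ∃ y : ℕ → ℤ, ∀ i, y i = (P i).1.2 := ⟨_, fun _ => rfl⟩
  have hmem : ∀ i, (x i, y i) ∈ H := by
    intro i
    rw [hx, hy]
    exact (P i).2.1
  have hbd : ∀ i, 0 ≤ x i ∧ x i ≤ y i ∧ y i ≤ n := fun i => hb _ (hmem i)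
  have hS1 : ∀ i, x (i + 1) ≤ y i - 2 * ℓ := by
    intro i
    rw [hx, hy, hPs]
    exact hF1 _
  have hS2 : ∀ i, min n (y i + 2 * ℓ) ≤ y (i + 1) := by
    intro i
    rw [hy, hy, hPs]
    exact hF2 _
  have hS3 : ∀ i, ∀ r ∈ H, r.1 ≤ y i - 2 * ℓ → r.2 ≤ y (i + 1) := by
    intro i
    rw [hy, hy, hPs]
    exact hF3 _
  have hx0 : x 0 = 0 := by
    have h1 : x 0 = p.1 := by rw [hx, hP0]
    have := hbd 0
    omega
  have hy0 : y 0 = p.2 := by rw [hy, hP0]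
  have hex : ∃ s, y s = n := by
    have hgrow : ∀ k : ℕ, min n (k : ℤ) ≤ y k := by
      intro k
      induction k with
      | zero => have := hbd 0; push_cast; omega
      | succ k ih => have := hS2 k; push_cast; omega
    refine ⟨n.toNat, ?_⟩
    have := hgrow n.toNat
    have := hbd n.toNat
    omega
  classical
  let s := Nat.find hex
  have hs : y s = n := Nat.find_spec hex
  have hlt : ∀ i, i < s → y i < n := by
    intro i hi
    have h1 : y i ≠ n := Nat.find_min hex hi
    have := hbd i
    omega
  have hy1 : ∀ i, i + 1 ≤ s → y i < y (i + 1) := by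
    intro i hi
    have := hlt i (by omega)
    have := hS2 i
    omega
  have hx2 : ∀ i, i + 2 ≤ s → y i - 2 * ℓ < x (i + 2) := by
    intro i hi
    by_contra hcon
    have h1 := hS3 i _ (hmem (i + 2)) (by simp only; omega)
    have h2 := hy1 (i + 1) (by omega)
    simp only at h1
    have h3 : i + 1 + 1 = i + 2 := rfl
    rw [h3] at h2
    omega
  have hx1 : ∀ i, i + 1 ≤ s → x i < x (i + 1) := by
    intro i hi
    rcases i with _ | i
    · by_contra hcon
      have h1 := hpm _ (hmem 1) (by simp only; simp only [zero_add] at hcon; omega)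
      have h2 := hy1 0 hi
      simp only [zero_add] at h1 h2
      omega
    · have h1 := hx2 i (by omega)
      have h2 := hS1 i
      have h3 : i + 1 + 1 = i + 2 := rfl
      rw [h3]
      omega
  refine ⟨s, x, y, hmem, hx0, hs, ?_, ?_, ?_, fun i _ => hS1 i, hx2⟩
  · intro i hi
    have := hlt (i + 1) hi
    have := hS2 i
    omega
  · intro i j hij hj
    induction j, hij using Nat.le_induction with
    | base => exact hy1 i hj
    | succ j hij ih => exact (ih (by omega)).trans (hy1 j hj)
  · intro i j hij hj
    induction j, hij using Nat.le_induction with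
    | base => exact hx1 i hj
    | succ j hij ih => exact (ih (by omega)).trans (hx1 j hj)

/-- The thinned chain: overlaps `ℓ`, and all separations hold. -/
lemma thin_chain (ℓ n : ℤ) (h0 : 0 < 4 * ℓ) (hn : 4 * ℓ ≤ n) (H : Finset (ℤ × ℤ))
    (hpow : Powerful (4 * ℓ) n H) :
    ∃ (T : ℕ) (A B : ℕ → ℤ), (∀ i, (A i, B i) ∈ H) ∧ A 0 = 0 ∧ B T = n ∧
      (∀ k, k + 1 < T → B k + ℓ ≤ B (k + 1)) ∧
      (∀ i j, i < j → j ≤ T → B i < B j) ∧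
      (∀ i j, i < j → j ≤ T → A i < A j) ∧
      (∀ k, k + 1 ≤ T → A (k + 1) ≤ B k - ℓ) ∧
      (∀ k, k + 2 ≤ T → A (k + 1) + ℓ ≤ A (k + 2)) ∧
      (∀ k, k + 3 ≤ T → B k + ℓ ≤ A (k + 3)) := by
  obtain ⟨s, x, y, hmem, hx0, hys, hy2, hym, hxm, hov, hgap⟩ := greedy_chain ℓ n h0 hn H hpow
  classical
  let G : ℕ → ℕ := fun m => if m + 2 ≤ s ∧ x (m + 2) ≤ y m - ℓ then m + 2 else m + 1
  let c : ℕ → ℕ := fun k => G^[k] 0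
  have hc0 : c 0 = 0 := rfl
  have hcs : ∀ k, (c (k + 1) = c k + 2 ∧ c k + 2 ≤ s ∧ x (c k + 2) ≤ y (c k) - ℓ) ∨
      (c (k + 1) = c k + 1 ∧ (c k + 2 ≤ s → y (c k) - ℓ < x (c k + 2))) := by
    intro k
    have h1 : c (k + 1) = G (c k) := Function.iterate_succ_apply' _ _ _
    rw [h1]
    by_cases h : c k + 2 ≤ s ∧ x (c k + 2) ≤ y (c k) - ℓ
    · left
      exact ⟨if_pos h, h⟩
    · right
      refine ⟨if_neg h, fun h2 => ?_⟩
      by_contra h3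
      exact h ⟨h2, by omega⟩
  have hcm : StrictMono c := by
    apply strictMono_nat_of_lt_succ
    intro k
    rcases hcs k with h | h <;> omega
  clear_value c
  have hex : ∃ T, s ≤ c T := ⟨s, hcm.id_le s⟩
  obtain ⟨T, hT, hTlt⟩ : ∃ T, s ≤ c T ∧ ∀ k, k < T → c k < s :=
    ⟨Nat.find hex, Nat.find_spec hex, fun k hk => by have := Nat.find_min hex hk; omega⟩
  have hTs : c T = s := by
    rcases T with _ | k
    · omega
    · have := hTlt k (by omega)
      rcases hcs k with h | h <;> omega
  have hle : ∀ k, k ≤ T → c k ≤ s := by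
    intro k hk
    have := hcm.monotone hk
    omega
  refine ⟨T, fun k => x (c k), fun k => y (c k), fun k => hmem _, ?_, ?_, ?_, ?_, ?_, ?_, ?_, ?_⟩
  · simp only [hc0, hx0]
  · simp only [hTs, hys]
  · intro k hk
    have h1 := hTlt (k + 1) hk
    have h2 : c k < c (k + 1) := hcm (by omega)
    have h3 := hy2 (c k) (by omega)
    have h4 : y (c k + 1) ≤ y (c (k + 1)) := by
      rcases eq_or_lt_of_le (show c k + 1 ≤ c (k + 1) by omega) with h | h
      · rw [h]
      · exact (hym _ _ h (by omega)).le
    simp only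
    omega
  · intro i j hij hj
    exact hym _ _ (hcm hij) (hle j hj)
  · intro i j hij hj
    exact hxm _ _ (hcm hij) (hle j hj)
  · intro k hk
    have h1 := hle (k + 1) hk
    simp only
    rcases hcs k with ⟨h, h2, h3⟩ | ⟨h, h2⟩
    · rw [h]; exact h3
    · rw [h]
      have := hov (c k) (by omega)
      omega
  · intro k hk
    have h1 := hle (k + 2) hk
    simp only
    have e : k + 1 + 1 = k + 2 := rfl
    have hk1 := hcs k
    have hk2 := hcs (k + 1)
    rw [e] at hk2
    generalize c (k + 2) = u at *
    generalize c (k + 1) = v at *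
    generalize c k = m at *
    rcases hk2 with ⟨hu, h2, h3⟩ | ⟨hu, h2⟩
    · obtain ⟨w, rfl⟩ : ∃ w, v = w + 1 := ⟨v - 1, by omega⟩
      subst hu
      have a1 := hgap (w + 1) h2
      have a2 := hov w (by omega)
      have a3 := hy2 w (by omega)
      omega
    · rcases hk1 with ⟨hv, h4, h5⟩ | ⟨hv, h4⟩
      · subst hv
        subst hu
        have a1 := hgap (m + 1) (by omega)
        have a3 := hy2 m (by omega)
        have e2 : m + 1 + 2 = m + 2 + 1 := rfl
        rw [e2] at a1
        omega
      · subst hv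
        subst hu
        have a1 := h4 (by omega)
        have a2 := hov m (by omega)
        have e2 : m + 1 + 1 = m + 2 := rfl
        rw [e2]
        omega
  · intro k hk
    have h1 := hle (k + 3) hk
    simp only
    have e : k + 1 + 1 = k + 2 := rfl
    have e' : k + 2 + 1 = k + 3 := rfl
    have hk1 := hcs k
    have hk2 := hcs (k + 1)
    have hk3 := hcs (k + 2)
    rw [e] at hk2
    rw [e'] at hk3
    generalize c (k + 3) = z at *
    generalize c (k + 2) = u at *
    generalize c (k + 1) = v at *
    generalize c k = m at *
    by_cases hz : m + 4 ≤ z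
    · have a1 := hgap (m + 2) (by omega)
      have a2 := hy2 m (by omega)
      have a3 := hy2 (m + 1) (by omega)
      have e2 : m + 1 + 1 = m + 2 := rfl
      have e3 : m + 2 + 2 = m + 4 := rfl
      rw [e2] at a3
      rw [e3] at a1
      have a4 : x (m + 4) ≤ x z := by
        rcases eq_or_lt_of_le hz with h | h
        · rw [h]
        · exact (hxm _ _ h h1).le
      omega
    · have hv : v = m + 1 := by omega
      have hu : u = m + 2 := by omega
      have hz : z = m + 3 := by omega
      subst hv hu hz
      rcases hk2 with h | ⟨-, h⟩
      · omega
      · have a1 := h (by omega)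
        have a2 := hy2 m (by omega)
        have e3 : m + 1 + 2 = m + 3 := rfl
        rw [e3] at a1
        omega

theorem stmt_4 (ℓ n : ℤ) (h0 : 0 < 4 * ℓ) (hn : 4 * ℓ ≤ n) (H : Finset (ℤ × ℤ))
    (hpow : Powerful (4 * ℓ) n H) :
    ∃ H' ⊆ H, Powerful ℓ n H' ∧
      ∃ (t : ℕ) (a b : ℕ → ℤ), StdForm H' t a b ∧
        a 1 = 0 ∧ b t = n ∧
        -- the interleaving order: a_i < b_{i-1} for 2 ≤ i ≤ t, and b_i < a_{i+3}
        (∀ i : ℕ, 2 ≤ i → i ≤ t → a i < b (i - 1)) ∧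
        (∀ i : ℕ, 1 ≤ i → i + 3 ≤ t → b i < a (i + 3)) ∧
        -- every two of the numbers differ by at least ℓ, with the listed exceptions
        (∀ i j : ℕ, 1 ≤ i → i < j → j ≤ t → ¬(i = 1 ∧ j = 2) → ℓ ≤ a j - a i) ∧
        (∀ i j : ℕ, 1 ≤ i → i < j → j ≤ t → ¬(i = t - 1 ∧ j = t) → ℓ ≤ b j - b i) ∧
        (∀ i j : ℕ, 1 ≤ i → i ≤ t → 1 ≤ j → j ≤ t → i ≠ j + 2 → ℓ ≤ |a i - b j|) := by
  obtain ⟨T, A, B, hmem, hA0, hBT, hB1, hBm, hAm, hov, hgA, hg3⟩ := thin_chain ℓ n h0 hn H hpow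
  have hb := hpow.1
  have hBle : ∀ i j, i ≤ j → j ≤ T → B i ≤ B j := by
    intro i j hij hj
    rcases eq_or_lt_of_le hij with h | h
    · rw [h]
    · exact (hBm _ _ h hj).le
  have hAle : ∀ i j, i ≤ j → j ≤ T → A i ≤ A j := by
    intro i j hij hj
    rcases eq_or_lt_of_le hij with h | h
    · rw [h]
    · exact (hAm _ _ h hj).le
  have hsub : (Finset.Icc 1 (T + 1)).image (fun i => (A (i - 1), B (i - 1))) ⊆ H := by
    intro p hp
    rw [Finset.mem_image] at hp
    obtain ⟨i, -, rfl⟩ := hp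
    exact hmem _
  have hAB : ∀ i j, i ≤ T → j ≤ T → i ≤ j + 1 → A i + ℓ ≤ B j := by
    intro i j hi hj hij
    by_cases hjT : j + 1 ≤ T
    · have := hov j hjT
      have := hAle i (j + 1) hij hjT
      omega
    · have hjT : j = T := by omega
      subst hjT
      rcases j with _ | j
      · have : i = 0 := by omega
        subst this
        omega
      · have := hov j le_rfl
        have := hAle i (j + 1) hi le_rfl
        have := hBm j (j + 1) (by omega) le_rfl
        omega
  refine ⟨_, hsub, ⟨fun p hp => hb p (hsub hp), ?_⟩, T + 1, fun i => A (i - 1), fun i => B (i - 1),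
    ⟨?_, rfl⟩, ?_, ?_, ?_, ?_, ?_, ?_, ?_⟩
  · intro h hh hhn
    have key : ∃ k, k ≤ T ∧ A k ≤ h ∧ h + ℓ ≤ B k := by
      classical
      have hex : ∃ k, h + ℓ ≤ B k := ⟨T, by omega⟩
      refine ⟨Nat.find hex, Nat.find_min' hex (by omega), ?_, Nat.find_spec hex⟩
      have hkT : Nat.find hex ≤ T := Nat.find_min' hex (by omega)
      have hmin : ∀ m, m < Nat.find hex → ¬ h + ℓ ≤ B m := fun m hm => Nat.find_min hex hm
      generalize Nat.find hex = k at *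
      rcases k with _ | k
      · omega
      · have := hmin k (by omega)
        have := hov k hkT
        omega
    obtain ⟨k, hk, h1, h2⟩ := key
    refine ⟨(A k, B k), ?_, h1, by simp only; omega, h2⟩
    rw [Finset.mem_image]
    exact ⟨k + 1, by simp; omega, by simp⟩
  · intro i j hi hij hj
    exact ⟨hAm _ _ (by omega) (by omega), hBm _ _ (by omega) (by omega)⟩
  · simpa using hA0
  · simpa using hBT
  · intro i hi hit
    have := hAB (i - 1) (i - 1 - 1) (by omega) (by omega) (by omega)
    simp only
    omega
  · intro i hi hit
    have := hg3 (i - 1) (by omega)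
    have e : i + 3 - 1 = i - 1 + 3 := by omega
    simp only [e]
    omega
  · intro i j hi hij hj hne
    simp only
    obtain ⟨w, rfl⟩ : ∃ w, j = w + 3 := ⟨j - 3, by omega⟩
    have h1 := hgA w (by omega)
    have h2 := hAle (i - 1) (w + 1) (by omega) (by omega)
    have e : w + 3 - 1 = w + 2 := rfl
    rw [e]
    omega
  · intro i j hi hij hj hne
    simp only
    have h1 := hB1 (i - 1) (by omega)
    have h2 := hBle (i - 1 + 1) (j - 1) (by omega) (by omega)
    omega
  · intro i j hi hit hj hjt hne
    simp only
    by_cases h : i ≤ j + 1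
    · have := hAB (i - 1) (j - 1) (by omega) (by omega) (by omega)
      rw [abs_sub_comm]
      exact le_trans (by omega) (le_abs_self _)
    · have h1 := hg3 (j - 1) (by omega)
      have h2 := hAle (j - 1 + 3) (i - 1) (by omega) (by omega)
      exact le_trans (by omega) (le_abs_self _)
end

section
/- For every integer ℓ > 0 there exists a graph G with maximum degree at most 3 and sets S, T ⊆ V(G) such that: (1) there do not exist three paths between S and T that are pairwise at distance at least 3 in G; and (2) for every set X ⊆ V(G) with |X| ≤ 2, there is a path between S and T all of whose vertices are at distance greater than ℓ from every member of X. -/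
/-- The distance in `G` between vertex sets `A` and `B` is at least `d`:
every walk from `A` to `B` has length at least `d`. -/
def SetDistGE {V : Type} (G : SimpleGraph V) (A B : Set V) (d : ℕ) : Prop :=
  ∀ ⦃x y : V⦄, x ∈ A → y ∈ B → ∀ w : G.Walk x y, d ≤ w.length

/-- The distance in `G` between `x` and `y` is at most `ℓ`. -/
def DistLE {V : Type} (G : SimpleGraph V) (x y : V) (ℓ : ℕ) : Prop :=
  ∃ w : G.Walk x y, w.length ≤ ℓ

/-- `P` is the vertex set of a path of `G` with one end in `S` and one end in `T`. -/
def IsSTPath {V : Type} (G : SimpleGraph V) (S T : Set V) (P : Set V) : Prop :=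
  ∃ (u v : V) (w : G.Walk u v), w.IsPath ∧ u ∈ S ∧ v ∈ T ∧ P = {x | x ∈ w.support}

/-- There are `k` paths between `S` and `T`, pairwise at distance at least `d`. -/
def HasKPaths {V : Type} (G : SimpleGraph V) (S T : Set V) (k d : ℕ) : Prop :=
  ∃ P : Fin k → Set V, (∀ i, IsSTPath G S T (P i)) ∧
    ∀ i j, i ≠ j → SetDistGE G (P i) (P j) d

/-- There is a set `X` of at most `m` vertices such that every path between `S` and `T`
contains a vertex with distance at most `ℓ` from some member of `X`. -/
def CoarseSeparator {V : Type} (G : SimpleGraph V) (S T : Set V) (m ℓ : ℕ) : Prop :=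
  ∃ X : Finset V, X.card ≤ m ∧
    ∀ (u v : V) (w : G.Walk u v), w.IsPath → u ∈ S → v ∈ T →
      ∃ y ∈ w.support, ∃ x ∈ X, DistLE G x y ℓ

namespace CM

/-- Vertices: a long horizontal row, legs (two for each leaf of the tree), tree nodes
(height, index). -/
inductive Vx : Type
  | row : ℕ → Vx
  | leg : Bool → ℕ → ℕ → Vx
  | node : ℕ → ℕ → Vx

open Vx

/-- Where the legs are attached to the row (`false`: left leg, `true`: right leg). -/
def pos (K : ℕ) (b : Bool) (i : ℕ) : ℕ := if b then (2 * i + 3) * K else (2 * i) * K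

/-- The (directed) edges. -/
inductive E (K M h : ℕ) : Vx → Vx → Prop
  | rr (p : ℕ) : E K M h (row p) (row (p + 1))
  | rl (b : Bool) (i : ℕ) : E K M h (row (pos K b i)) (leg b i 0)
  | ll (b : Bool) (i t : ℕ) (ht : t < M) : E K M h (leg b i t) (leg b i (t + 1))
  | ln (b : Bool) (i : ℕ) : E K M h (leg b i M) (node 0 i)
  | nn (k j : ℕ) (hk : k < h) : E K M h (node k j) (node (k + 1) (j / 2))

def Gr (K M h : ℕ) : SimpleGraph Vx := SimpleGraph.fromRel (E K M h)

lemma adj_iff {K M h : ℕ} {a b : Vx} :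
    (Gr K M h).Adj a b ↔ a ≠ b ∧ (E K M h a b ∨ E K M h b a) := by
  simp [Gr]

lemma E_ne {K M h : ℕ} {a b : Vx} (e : E K M h a b) : a ≠ b := by
  cases e <;> simp

lemma E_adj {K M h : ℕ} {a b : Vx} (e : E K M h a b) : (Gr K M h).Adj a b :=
  adj_iff.2 ⟨E_ne e, Or.inl e⟩

lemma pos_inj {K : ℕ} (hK : 0 < K) {b b' : Bool} {i i' : ℕ} (h : pos K b i = pos K b' i') :
    b = b' ∧ i = i' := by
  cases b <;> cases b' <;> simp [pos, hK.ne'] at h ⊢ <;> omega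

lemma degree_le {K M h : ℕ} (hK : 0 < K) (v : Vx) :
    ((Gr K M h).neighborSet v).Finite ∧ ((Gr K M h).neighborSet v).ncard ≤ 3 := by
  suffices H : ∃ a b c : Vx, (Gr K M h).neighborSet v ⊆ {a, b, c} by
    obtain ⟨a, b, c, H⟩ := H
    have hf : ({a, b, c} : Set Vx).Finite := by simp
    refine ⟨hf.subset H, (Set.ncard_le_ncard H hf).trans ?_⟩
    have h1 := Set.ncard_insert_le a ({b, c} : Set Vx)
    have h2 := Set.ncard_insert_le b ({c} : Set Vx)
    rw [Set.ncard_singleton] at h2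
    omega
  cases v with
  | row p =>
    by_cases hp : ∃ b i, pos K b i = p
    · obtain ⟨b, i, rfl⟩ := hp
      refine ⟨row (pos K b i + 1), row (pos K b i - 1), leg b i 0, ?_⟩
      intro y hy
      rw [SimpleGraph.mem_neighborSet, adj_iff] at hy
      rcases hy with ⟨-, hy | hy⟩
      · generalize hz : row (pos K b i) = z at hy
        cases hy <;> simp at hz ⊢
        · omega
        · obtain ⟨rfl, rfl⟩ := pos_inj hK hz
          simp
      · generalize hz : row (pos K b i) = z at hy
        cases hy <;> simp at hz ⊢
        · omega
    · refine ⟨row (p + 1), row (p - 1), row p, ?_⟩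
      intro y hy
      rw [SimpleGraph.mem_neighborSet, adj_iff] at hy
      rcases hy with ⟨-, hy | hy⟩
      · generalize hz : row p = z at hy
        cases hy <;> simp at hz ⊢
        · omega
        · exact hp ⟨_, _, hz.symm⟩
      · generalize hz : row p = z at hy
        cases hy <;> simp at hz ⊢
        · omega
  | leg b i t =>
    refine ⟨if t = 0 then row (pos K b i) else leg b i (t - 1),
      if t = M then node 0 i else leg b i (t + 1), leg b i t, ?_⟩
    intro y hy
    rw [SimpleGraph.mem_neighborSet, adj_iff] at hy
    rcases hy with ⟨-, hy | hy⟩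
    · cases hy with
      | ll _ _ _ ht => simp [ht.ne]
      | ln => simp
    · cases hy with
      | rl => simp
      | ll _ _ _ ht => simp
  | node k j =>
    by_cases hk : k = 0
    · subst hk
      refine ⟨leg false j M, leg true j M, node 1 (j / 2), ?_⟩
      intro y hy
      rw [SimpleGraph.mem_neighborSet, adj_iff] at hy
      rcases hy with ⟨-, hy | hy⟩
      · cases hy; simp
      · cases hy with
        | ln b i => cases b <;> simp
    · refine ⟨node (k - 1) (2 * j), node (k - 1) (2 * j + 1), node (k + 1) (j / 2), ?_⟩
      intro y hy
      rw [SimpleGraph.mem_neighborSet, adj_iff] at hy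
      rcases hy with ⟨-, hy | hy⟩
      · cases hy; simp
      · cases hy with
        | ln b i => simp at hk
        | nn k j hk => simp; omega

/-! ### Two far paths must use the root -/

/-- A path meeting both sides of a cut uses one of the cut edges. -/
lemma one_cut {K M h : ℕ} {x y : Vx} (w : (Gr K M h).Walk x y) (W : Set Vx)
    (hx : x ∈ W) (hy : y ∉ W) :
    ∃ a b, E K M h a b ∧ a ∈ w.support ∧ b ∈ w.support ∧ ¬ (a ∈ W ↔ b ∈ W) := by
  obtain ⟨d, hd, h1, h2⟩ := w.exists_boundary_dart W hx hy
  have ha := d.adj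
  rw [adj_iff] at ha
  have m1 := w.dart_fst_mem_support_of_mem_darts hd
  have m2 := w.dart_snd_mem_support_of_mem_darts hd
  rcases ha.2 with e | e
  · exact ⟨_, _, e, m1, m2, by tauto⟩
  · exact ⟨_, _, e, m2, m1, by tauto⟩

/-- The vertex set of the part left of a cut. -/
def cutSet (p : ℕ) (L : Bool → ℕ → Prop) (c : ℕ → ℕ → Prop) : Set Vx :=
  fun v => match v with
  | row q => q ≤ p
  | leg b i _ => L b i
  | node k j => c k j

/-- `A` is (the vertex set of) a path from the left part of the row to the right part. -/
def LR (K M h N : ℕ) (A : Set Vx) : Prop :=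
  ∃ (p q : ℕ) (w : (Gr K M h).Walk (row p) (row q)), p ≤ K ∧ 2 * N * K ≤ q ∧
    A = {x | x ∈ w.support}

lemma LR_cut {K M h N : ℕ} {A : Set Vx} (hA : LR K M h N A) {p : ℕ} (h1 : K ≤ p)
    (h2 : p < 2 * N * K) (L : Bool → ℕ → Prop) (c : ℕ → ℕ → Prop)
    (hc : ∀ k j, node k j ∈ A → node (k + 1) (j / 2) ∈ A → (c k j ↔ c (k + 1) (j / 2))) :
    (row p ∈ A) ∨
    (∃ b i, row (pos K b i) ∈ A ∧ ¬ (pos K b i ≤ p ↔ L b i)) ∨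
    (∃ b i, node 0 i ∈ A ∧ ¬ (L b i ↔ c 0 i)) := by
  obtain ⟨p', q', w, hp, hq, rfl⟩ := hA
  obtain ⟨a, b, e, ha, hb, hab⟩ := one_cut w (cutSet p L c)
    (show p' ≤ p by omega) (show ¬ (q' ≤ p) by omega)
  cases e with
  | rr q =>
    have hab' : ¬ (q ≤ p ↔ q + 1 ≤ p) := hab
    have : q = p := by omega
    subst this
    exact Or.inl ha
  | rl b i => exact Or.inr (Or.inl ⟨b, i, ha, hab⟩)
  | ll b i t ht => exact absurd Iff.rfl hab
  | ln b i => exact Or.inr (Or.inr ⟨b, i, hb, hab⟩)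
  | nn k j hk => exact absurd (hc k j ha hb) hab

section far
variable {K M h N : ℕ} {A B : Set Vx}

/-- Cut with exactly one exceptional leg. -/
lemma cross (hA : LR K M h N A) (hB : LR K M h N B) (hd : ∀ x, x ∈ A → x ∉ B)
    {p : ℕ} (h1 : K ≤ p) (h2 : p < 2 * N * K) (c : ℕ → ℕ → Prop)
    (hc : ∀ k j, (node k j ∈ A ∨ node k j ∈ B) →
      (node (k + 1) (j / 2) ∈ A ∨ node (k + 1) (j / 2) ∈ B) → (c k j ↔ c (k + 1) (j / 2)))
    (b0 : Bool) (i0 : ℕ)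
    (hl : ∀ b i, ¬ (b = b0 ∧ i = i0) → (pos K b i ≤ p ↔ c 0 i)) :
    (row p ∈ A ∧ row (pos K b0 i0) ∈ B ∧ node 0 i0 ∈ B) ∨
    (row p ∈ B ∧ row (pos K b0 i0) ∈ A ∧ node 0 i0 ∈ A) := by
  have key : ∀ C : Set Vx, LR K M h N C → (∀ x, x ∈ C → x ∈ A ∨ x ∈ B) →
      row p ∈ C ∨ (row (pos K b0 i0) ∈ C ∧ node 0 i0 ∈ C) := by
    intro C hC hCs
    have hc' : ∀ k j, node k j ∈ C → node (k + 1) (j / 2) ∈ C →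
        (c k j ↔ c (k + 1) (j / 2)) := fun k j h1 h2 => hc k j (hCs _ h1) (hCs _ h2)
    have a1 := LR_cut hC h1 h2 (fun _ i => c 0 i) c hc'
    have a2 := LR_cut hC h1 h2 (fun b i => pos K b i ≤ p) c hc'
    rcases a1 with a1 | ⟨b, i, m1, n1⟩ | ⟨b, i, m1, n1⟩
    · exact Or.inl a1
    · rcases a2 with a2 | ⟨b', i', m2, n2⟩ | ⟨b', i', m2, n2⟩
      · exact Or.inl a2
      · exact absurd Iff.rfl n2
      · have e1 : b = b0 ∧ i = i0 := by
          by_contra hne; exact n1 (hl b i hne)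
        have e2 : b' = b0 ∧ i' = i0 := by
          by_contra hne; exact n2 (hl b' i' hne)
        obtain ⟨rfl, rfl⟩ := e1
        obtain ⟨rfl, rfl⟩ := e2
        exact Or.inr ⟨m1, m2⟩
    · exact absurd Iff.rfl n1
  rcases key A hA (fun _ => Or.inl) with a | a <;> rcases key B hB (fun _ => Or.inr) with b | b
  · exact absurd b (hd _ a)
  · exact Or.inl ⟨a, b⟩
  · exact Or.inr ⟨b, a⟩
  · exact absurd b.1 (hd _ a.1)

/-- The subtree at `(k, j)` is isolated from the rest. -/
def Iso (A B : Set Vx) (k j : ℕ) : Prop :=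
  ∃ c : ℕ → ℕ → Prop,
    (∀ k' j', ¬ (k' ≤ k ∧ j' / 2 ^ (k - k') = j) → (node k' j' ∈ A ∨ node k' j' ∈ B) →
      (node (k' + 1) (j' / 2) ∈ A ∨ node (k' + 1) (j' / 2) ∈ B) →
      (c k' j' ↔ c (k' + 1) (j' / 2))) ∧
    ∀ i, i / 2 ^ k ≠ j → (c 0 i ↔ i / 2 ^ k < j)

lemma pos_false_le {K i m : ℕ} (hK : 0 < K) : pos K false i ≤ m * K ↔ 2 * i ≤ m := by
  simp [pos, hK]

lemma pos_true_le {K i m : ℕ} (hK : 0 < K) : pos K true i ≤ m * K ↔ 2 * i + 3 ≤ m := by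
  simp [pos, hK]

lemma leaf_used (hK : 0 < K) (hA : LR K M h N A) (hB : LR K M h N B)
    (hd : ∀ x, x ∈ A → x ∉ B) {l : ℕ} (hl : l < N) (hI : Iso A B 0 l) :
    node 0 l ∈ A ∨ node 0 l ∈ B := by
  by_contra hu
  obtain ⟨c, hc1, hc2⟩ := hI
  have h1 : K ≤ (2 * l + 1) * K := Nat.le_mul_of_pos_left _ (by omega)
  have h2 : (2 * l + 1) * K < 2 * N * K := Nat.mul_lt_mul_of_pos_right (by omega) hK
  have key : ∀ C : Set Vx, LR K M h N C → (∀ x, x ∈ C → x ∈ A ∨ x ∈ B) →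
      row ((2 * l + 1) * K) ∈ C := by
    intro C hC hCs
    have hc' : ∀ k j, node k j ∈ C → node (k + 1) (j / 2) ∈ C →
        (c k j ↔ c (k + 1) (j / 2)) := by
      intro k j m1 m2
      refine hc1 k j ?_ (hCs _ m1) (hCs _ m2)
      rintro ⟨hk, hj⟩
      have : k = 0 := by omega
      subst this
      simp at hj
      subst hj
      exact hu (hCs _ m1)
    rcases LR_cut hC h1 h2 (fun b i => pos K b i ≤ (2 * l + 1) * K) c hc' with
      a | ⟨b, i, m, n⟩ | ⟨b, i, m, n⟩
    · exact a
    · exact absurd Iff.rfl n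
    · exfalso
      by_cases hi : i = l
      · subst hi; exact hu (hCs _ m)
      · apply n
        rw [hc2 i (by simpa using hi)]
        cases b
        · rw [pos_false_le hK]; simp; omega
        · rw [pos_true_le hK]; simp; omega
  exact hd _ (key A hA fun _ => Or.inl) (key B hB fun _ => Or.inr)

lemma node_used (hK : 0 < K) (hN : N ≤ 2 ^ h) (hA : LR K M h N A) (hB : LR K M h N B)
    (hd : SetDistGE (Gr K M h) A B 3) :
    ∀ k, k ≤ h → ∀ j, (j + 1) * 2 ^ k ≤ N → Iso A B k j → node k j ∈ A ∨ node k j ∈ B := by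
  have hdis : ∀ x, x ∈ A → x ∉ B := by
    intro x hx hx'
    have := hd hx hx' SimpleGraph.Walk.nil
    simp at this
  have hdis1 : ∀ x y, (Gr K M h).Adj x y → x ∈ A → y ∉ B := by
    intro x y e hx hy
    have := hd hx hy (SimpleGraph.Walk.cons e SimpleGraph.Walk.nil)
    simp at this
  intro k
  induction k using Nat.strong_induction_on with
  | _ k ih =>
  intro hkh j hj hI
  rcases k with _ | k
  · exact leaf_used hK hA hB hdis (by simpa using hj) hI
  by_contra hu
  obtain ⟨c, hc1, hc2⟩ := hI
  set q := (2 * j + 1) * 2 ^ k with hq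
  have hpk : 0 < 2 ^ k := by positivity
  have hqpos : 0 < q := by positivity
  have hqN : q + 2 ^ k ≤ N := by
    have : q + 2 ^ k = (j + 1) * 2 ^ (k + 1) := by rw [hq]; ring
    omega
  -- the global colouring
  let c' : ℕ → ℕ → Prop := fun k' j' =>
    (k' ≤ k ∧ j' / 2 ^ (k - k') = 2 * j) ∨
      (¬ (k' ≤ k ∧ j' / 2 ^ (k - k') = 2 * j + 1) ∧ c k' j')
  have hc'1 : ∀ k' j', (node k' j' ∈ A ∨ node k' j' ∈ B) →
      (node (k' + 1) (j' / 2) ∈ A ∨ node (k' + 1) (j' / 2) ∈ B) →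
      (c' k' j' ↔ c' (k' + 1) (j' / 2)) := by
    intro k' j' m1 m2
    rcases lt_trichotomy k' k with hlt | rfl | hgt
    · have e1 : j' / 2 / 2 ^ (k - (k' + 1)) = j' / 2 ^ (k - k') := by
        rw [Nat.div_div_eq_div_mul, ← pow_succ']
        congr 2; omega
      have e2 : j' / 2 ^ (k + 1 - k') = j' / 2 ^ (k - k') / 2 := by
        rw [Nat.div_div_eq_div_mul, ← pow_succ]
        congr 2; omega
      have := hc1 k' j'
      rw [e2] at this
      simp only [c', e1]
      have l1 : k' ≤ k := by omega
      have l2 : k' + 1 ≤ k := by omega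
      simp only [l1, l2, true_and]
      by_cases a1 : j' / 2 ^ (k - k') = 2 * j
      · simp [a1]
      by_cases a2 : j' / 2 ^ (k - k') = 2 * j + 1
      · simp [a2]
      simp only [a1, a2, false_or, not_false_eq_true, true_and]
      exact this (by omega) m1 m2
    · by_cases a1 : j' / 2 = j
      · subst a1; exact absurd m2 hu
      have := hc1 k' j' (by
        rintro ⟨-, hh⟩
        apply a1
        simpa using hh) m1 m2
      simp only [c']
      have b1 : ¬ (j' = 2 * j) := by omega
      have b2 : ¬ (j' = 2 * j + 1) := by omega
      simp [b1, b2, this]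
    · have l1 : ¬ (k' ≤ k) := by omega
      have l2 : ¬ (k' + 1 ≤ k) := by omega
      simp only [c', l1, l2, false_and, false_or, not_false_eq_true, true_and]
      refine hc1 k' j' ?_ m1 m2
      rintro ⟨g1, g2⟩
      have : k' = k + 1 := by omega
      subst this
      simp at g2
      subst g2
      exact hu m1
  have hc'2 : ∀ i, c' 0 i ↔ i < q := by
    intro i
    have e2 : i / 2 ^ (k + 1) = i / 2 ^ k / 2 := by
      rw [Nat.div_div_eq_div_mul, ← pow_succ]
    have := hc2 i
    rw [e2] at this
    have e3 : i < q ↔ i / 2 ^ k < 2 * j + 1 := by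
      rw [Nat.div_lt_iff_lt_mul hpk]
    rw [e3]
    simp only [c', Nat.zero_le, true_and, Nat.sub_zero]
    by_cases a1 : i / 2 ^ k = 2 * j
    · simp [a1]
    by_cases a2 : i / 2 ^ k = 2 * j + 1
    · simp [a2]
    simp only [a1, a2, false_or, not_false_eq_true, true_and]
    rw [this (by omega)]
    omega
  -- branches are used
  have hdiv : ∀ i, i ≤ k → ∃ s, 0 < s ∧ q = s * 2 ^ i := by
    intro i hi
    refine ⟨(2 * j + 1) * 2 ^ (k - i), by positivity, ?_⟩
    rw [hq, mul_assoc, ← pow_add]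
    congr 2; omega
  have hR : ∀ i, i ≤ k → node i ((q - 1) / 2 ^ i) ∈ A ∨ node i ((q - 1) / 2 ^ i) ∈ B := by
    intro i hi
    obtain ⟨s, hs, hqs⟩ := hdiv i hi
    have hpi : 0 < 2 ^ i := by positivity
    have e : (q - 1) / 2 ^ i = s - 1 := by
      have h1 : (q - 1) / 2 ^ i < s := by
        rw [Nat.div_lt_iff_lt_mul hpi]; omega
      have h2 : s - 1 ≤ (q - 1) / 2 ^ i := by
        rw [Nat.le_div_iff_mul_le hpi, Nat.sub_mul]; omega
      omega
    rw [e]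
    refine ih i (by omega) (by omega) _ ?_ ⟨c', fun k' j' _ => hc'1 k' j', ?_⟩
    · rw [Nat.sub_add_cancel hs]; omega
    · intro x hx
      rw [hc'2, hqs, ← Nat.div_lt_iff_lt_mul hpi]
      omega
  have hL : ∀ i, i ≤ k → node i (q / 2 ^ i) ∈ A ∨ node i (q / 2 ^ i) ∈ B := by
    intro i hi
    obtain ⟨s, hs, hqs⟩ := hdiv i hi
    have hpi : 0 < 2 ^ i := by positivity
    have e : q / 2 ^ i = s := by rw [hqs]; exact Nat.mul_div_cancel _ hpi
    rw [e]
    refine ih i (by omega) (by omega) _ ?_ ⟨c', fun k' j' _ => hc'1 k' j', ?_⟩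
    · have : 2 ^ i ≤ 2 ^ k := Nat.pow_le_pow_right (by omega) hi
      rw [Nat.add_mul, one_mul]; omega
    · intro x hx
      rw [hc'2, hqs, ← Nat.div_lt_iff_lt_mul hpi]
  -- cuts
  have hb1 : ∀ m, 1 ≤ m → K ≤ m * K := fun m hm => Nat.le_mul_of_pos_left _ (by omega)
  have hb2 : ∀ m, m < 2 * N → m * K < 2 * N * K := fun m hm =>
    Nat.mul_lt_mul_of_pos_right hm hK
  have cut1 := cross hA hB hdis (hb1 (2 * q - 1) (by omega)) (hb2 (2 * q - 1) (by omega)) c' hc'1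
    true (q - 1) (by
      intro b i hbi
      rw [hc'2]
      cases b
      · rw [pos_false_le hK]; omega
      · rw [pos_true_le hK]
        simp at hbi
        omega)
  have cut2 := cross hA hB hdis (hb1 (2 * q + 1) (by omega)) (hb2 (2 * q + 1) (by omega)) c' hc'1
    false q (by
      intro b i hbi
      rw [hc'2]
      cases b
      · rw [pos_false_le hK]
        simp at hbi
        omega
      · rw [pos_true_le hK]; omega)
  have hpos : pos K true (q - 1) = (2 * q + 1) * K := by
    simp only [pos, if_true]
    congr 1; omega
  rw [hpos] at cut1
  have ek1 : (q - 1) / 2 ^ k = 2 * j := by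
    have h1 : (q - 1) / 2 ^ k < 2 * j + 1 := by
      rw [Nat.div_lt_iff_lt_mul hpk]; omega
    have h2 : 2 * j ≤ (q - 1) / 2 ^ k := by
      rw [Nat.le_div_iff_mul_le hpk]
      have : q = 2 * j * 2 ^ k + 2 ^ k := by rw [hq]; ring
      omega
    omega
  have ek2 : q / 2 ^ k = 2 * j + 1 := by rw [hq]; exact Nat.mul_div_cancel _ hpk
  -- propagate along branches
  have prop : ∀ (C D : Set Vx), (∀ x y, (Gr K M h).Adj x y → x ∈ C → y ∉ D) → ∀ n,
      (∀ i, i ≤ k → node i (n / 2 ^ i) ∈ C ∨ node i (n / 2 ^ i) ∈ D) → node 0 n ∈ C →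
      node k (n / 2 ^ k) ∈ C := by
    intro C D hCD n hn h0
    have : ∀ i, i ≤ k → node i (n / 2 ^ i) ∈ C := by
      intro i
      induction i with
      | zero => intro _; simpa using h0
      | succ i ihi =>
        intro hi
        have e : n / 2 ^ (i + 1) = n / 2 ^ i / 2 := by
          rw [Nat.div_div_eq_div_mul, ← pow_succ]
        have ad := E_adj (E.nn (K := K) (M := M) (h := h) i (n / 2 ^ i) (by omega))
        rw [← e] at ad
        exact (hn (i + 1) hi).resolve_right (hCD _ _ ad (ihi (by omega)))
    exact this k le_rfl
  have hdis1' : ∀ x y, (Gr K M h).Adj x y → x ∈ B → y ∉ A := fun x y e hx hy =>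
    hdis1 y x e.symm hy hx
  have a1 := E_adj (E.nn (K := K) (M := M) (h := h) k (2 * j) (by omega))
  have a2 := E_adj (E.nn (K := K) (M := M) (h := h) k (2 * j + 1) (by omega))
  rw [show 2 * j / 2 = j by omega] at a1
  rw [show (2 * j + 1) / 2 = j by omega] at a2
  have hR' : ∀ i, i ≤ k → node i ((q - 1) / 2 ^ i) ∈ B ∨ node i ((q - 1) / 2 ^ i) ∈ A :=
    fun i hi => (hR i hi).symm
  have hL' : ∀ i, i ≤ k → node i (q / 2 ^ i) ∈ B ∨ node i (q / 2 ^ i) ∈ A :=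
    fun i hi => (hL i hi).symm
  rcases cut1 with ⟨-, r1, n1⟩ | ⟨-, r1, n1⟩
  · rcases cut2 with ⟨r2, -, -⟩ | ⟨-, -, n2⟩
    · exact hdis _ r2 r1
    · have u1 := prop B A hdis1' _ hR' n1
      have u2 := prop A B hdis1 _ hL n2
      rw [ek1] at u1
      rw [ek2] at u2
      have := hd u2 u1 (SimpleGraph.Walk.cons a2 (SimpleGraph.Walk.cons a1.symm
        SimpleGraph.Walk.nil))
      simp at this
  · rcases cut2 with ⟨-, -, n2⟩ | ⟨r2, -, -⟩
    · have u1 := prop A B hdis1 _ hR n1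
      have u2 := prop B A hdis1' _ hL' n2
      rw [ek1] at u1
      rw [ek2] at u2
      have := hd u1 u2 (SimpleGraph.Walk.cons a1 (SimpleGraph.Walk.cons a2.symm
        SimpleGraph.Walk.nil))
      simp at this
    · exact hdis _ r1 r2

lemma root_used (hK : 0 < K) (hA : LR K M h (2 ^ h) A) (hB : LR K M h (2 ^ h) B)
    (hd : SetDistGE (Gr K M h) A B 3) : node h 0 ∈ A ∨ node h 0 ∈ B :=
  node_used hK le_rfl hA hB hd h le_rfl 0 (by simp)
    ⟨fun _ _ => False, fun _ _ _ _ _ => Iff.rfl, fun i _ => by simp⟩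

end far

/-! ### The terminals -/

def Sset (K h : ℕ) : Set Vx := {x | x = node h 0 ∨ ∃ p, p ≤ K ∧ x = row p}
def Tset (K h : ℕ) : Set Vx := {x | x = node h 0 ∨ ∃ p, 2 * 2 ^ h * K ≤ p ∧ x = row p}

lemma LR_of {K M h : ℕ} {A : Set Vx} (hA : IsSTPath (Gr K M h) (Sset K h) (Tset K h) A)
    (hr : node h 0 ∉ A) : LR K M h (2 ^ h) A := by
  obtain ⟨u, v, w, -, hu, hv, rfl⟩ := hA
  rcases hu with rfl | ⟨p, hp, rfl⟩
  · exact absurd w.start_mem_support hr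
  rcases hv with rfl | ⟨q, hq, rfl⟩
  · exact absurd w.end_mem_support hr
  exact ⟨p, q, w, hp, hq, rfl⟩

lemma no_three {K M h : ℕ} (hK : 0 < K) :
    ¬ HasKPaths (Gr K M h) (Sset K h) (Tset K h) 3 3 := by
  rintro ⟨P, hP, hd⟩
  have key : ∀ i j, i ≠ j → node h 0 ∈ P i ∨ node h 0 ∈ P j := by
    intro i j hij
    by_contra hc
    push Not at hc
    rcases root_used hK (LR_of (hP i) hc.1) (LR_of (hP j) hc.2) (hd i j hij) with h' | h'
    · exact hc.1 h'
    · exact hc.2 h'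
  have dis : ∀ i j, i ≠ j → node h 0 ∈ P i → node h 0 ∉ P j := by
    intro i j hij h1 h2
    have := hd i j hij h1 h2 SimpleGraph.Walk.nil
    simp at this
  have k01 := key 0 1 (by decide)
  have k02 := key 0 2 (by decide)
  have k12 := key 1 2 (by decide)
  have d01 := dis 0 1 (by decide)
  have d02 := dis 0 2 (by decide)
  have d12 := dis 1 2 (by decide)
  tauto

/-! ### Lipschitz functions -/

lemma lip {K M h : ℕ} (f : Vx → ℕ) (hf : ∀ a b, E K M h a b → f a ≤ f b + 1 ∧ f b ≤ f a + 1)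
    {x y : Vx} (w : (Gr K M h).Walk x y) : f y ≤ f x + w.length := by
  induction w with
  | nil => simp
  | cons e w ih =>
    rw [adj_iff] at e
    simp only [SimpleGraph.Walk.length_cons]
    rcases e.2 with e | e
    · have := hf _ _ e; omega
    · have := hf _ _ e; omega

lemma DistLE_symm {K M h l : ℕ} {x y : Vx} (hh : DistLE (Gr K M h) x y l) :
    DistLE (Gr K M h) y x l := by
  obtain ⟨w, hw⟩ := hh
  exact ⟨w.reverse, by simpa using hw⟩

lemma lip_dist {K M h l : ℕ} (f : Vx → ℕ)
    (hf : ∀ a b, E K M h a b → f a ≤ f b + 1 ∧ f b ≤ f a + 1)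
    {x y : Vx} (hh : DistLE (Gr K M h) x y l) : f y ≤ f x + l := by
  obtain ⟨w, hw⟩ := hh
  have := lip f hf w
  omega

/-- Depth below the root, capped. -/
def depth (h : ℕ) : Vx → ℕ
  | row _ => h
  | leg _ _ _ => h
  | node k _ => h - k

lemma depth_lip {K M h : ℕ} (a b : Vx) (e : E K M h a b) :
    depth h a ≤ depth h b + 1 ∧ depth h b ≤ depth h a + 1 := by
  cases e <;> simp [depth]
  omega

/-- Distance from position `c` of the row, capped. -/
def rd (K Λ c : ℕ) : Vx → ℕ
  | row p => min ((p - c) + (c - p)) Λ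
  | leg b i t => min ((pos K b i - c) + (c - pos K b i) + t + 1) Λ
  | node _ _ => Λ

lemma rd_lip {K M h Λ c : ℕ} (hM : Λ ≤ M + 1) (a b : Vx) (e : E K M h a b) :
    rd K Λ c a ≤ rd K Λ c b + 1 ∧ rd K Λ c b ≤ rd K Λ c a + 1 := by
  cases e <;> simp only [rd] <;> omega

/-! ### Walks with a property -/

def Conn (G : SimpleGraph Vx) (Q : Vx → Prop) (a b : Vx) : Prop :=
  ∃ w : G.Walk a b, ∀ y ∈ w.support, Q y

lemma Conn.trans {G : SimpleGraph Vx} {Q : Vx → Prop} {a b c : Vx} (h1 : Conn G Q a b)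
    (h2 : Conn G Q b c) : Conn G Q a c := by
  obtain ⟨w1, h1⟩ := h1
  obtain ⟨w2, h2⟩ := h2
  refine ⟨w1.append w2, fun y hy => ?_⟩
  rw [SimpleGraph.Walk.mem_support_append_iff] at hy
  exact hy.elim (h1 y) (h2 y)

lemma Conn.symm {G : SimpleGraph Vx} {Q : Vx → Prop} {a b : Vx} (h1 : Conn G Q a b) :
    Conn G Q b a := by
  obtain ⟨w1, h1⟩ := h1
  exact ⟨w1.reverse, fun y hy => h1 y (by simpa using hy)⟩

lemma Conn.single {G : SimpleGraph Vx} {Q : Vx → Prop} {a b : Vx} (e : G.Adj a b) (ha : Q a)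
    (hb : Q b) : Conn G Q a b :=
  ⟨SimpleGraph.Walk.cons e SimpleGraph.Walk.nil, by simp [ha, hb]⟩

lemma Conn.refl {G : SimpleGraph Vx} {Q : Vx → Prop} {a : Vx} (ha : Q a) : Conn G Q a a :=
  ⟨SimpleGraph.Walk.nil, by simp [ha]⟩

lemma conn_row {K M h : ℕ} {Q : Vx → Prop} {p q : ℕ} (hpq : p ≤ q)
    (hQ : ∀ i, p ≤ i → i ≤ q → Q (row i)) : Conn (Gr K M h) Q (row p) (row q) := by
  induction q, hpq using Nat.le_induction with
  | base => exact Conn.refl (hQ p le_rfl le_rfl)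
  | succ q hq ih =>
    exact (ih fun i h1 h2 => hQ i h1 (by omega)).trans
      (Conn.single (E_adj (E.rr q)) (hQ _ hq (by omega)) (hQ _ (by omega) le_rfl))

lemma conn_leg {K M h : ℕ} {Q : Vx → Prop} {b : Bool} {i : ℕ} (h1 : Q (row (pos K b i)))
    (h2 : ∀ t, Q (leg b i t)) (h3 : Q (node 0 i)) :
    Conn (Gr K M h) Q (row (pos K b i)) (node 0 i) := by
  have : ∀ t, t ≤ M → Conn (Gr K M h) Q (leg b i 0) (leg b i t) := by
    intro t
    induction t with
    | zero => intro _; exact Conn.refl (h2 0)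
    | succ t ih =>
      intro ht
      exact (ih (by omega)).trans (Conn.single (E_adj (E.ll b i t (by omega))) (h2 _) (h2 _))
  exact ((Conn.single (E_adj (E.rl b i)) h1 (h2 0)).trans (this M le_rfl)).trans
    (Conn.single (E_adj (E.ln b i)) (h2 _) h3)

lemma Conn.path {G : SimpleGraph Vx} {Q : Vx → Prop} {a b : Vx} (hc : Conn G Q a b) :
    ∃ w : G.Walk a b, w.IsPath ∧ ∀ y ∈ w.support, Q y := by
  classical
  obtain ⟨w, hw⟩ := hc
  exact ⟨w.bypass, w.bypass_isPath, fun y hy => hw y (w.support_bypass_subset_support hy)⟩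

lemma robust {K l : ℕ} (hK : K = 4 * l + 1) (X : Finset Vx) (hX : X.card ≤ 2) :
    ∃ (u v : Vx), u ∈ Sset K (2 * l + 1) ∧ v ∈ Tset K (2 * l + 1) ∧
      Conn (Gr K (2 * l + 1) (2 * l + 1))
        (fun y => ∀ x ∈ X, ¬ DistLE (Gr K (2 * l + 1) (2 * l + 1)) x y l) u v := by
  classical
  set h := 2 * l + 1 with hh
  set G := Gr K h h with hG
  by_cases hr : ∀ x ∈ X, ¬ DistLE G x (node h 0) l
  · exact ⟨node h 0, node h 0, Or.inl rfl, Or.inl rfl, Conn.refl hr⟩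
  push Not at hr
  obtain ⟨x0, hx0, hx0r⟩ := hr
  have hx0d : depth h x0 ≤ l := by
    have := lip_dist (depth h) depth_lip (DistLE_symm hx0r)
    simpa [depth] using this
  have hfar : ∀ z, depth h z = h → ¬ DistLE G x0 z l := by
    intro z hz hd
    have := lip_dist (depth h) depth_lip hd
    omega
  obtain ⟨y, hy⟩ : ∃ y, ∀ x ∈ X, x = x0 ∨ x = y := by
    have hc : (X.erase x0).card ≤ 1 := by
      rw [Finset.card_erase_of_mem hx0]; omega
    rw [Finset.card_le_one] at hc
    by_cases hne : (X.erase x0).Nonempty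
    · obtain ⟨y, hy⟩ := hne
      refine ⟨y, fun x hx => ?_⟩
      by_cases hxx : x = x0
      · exact Or.inl hxx
      · exact Or.inr (hc x (Finset.mem_erase.2 ⟨hxx, hx⟩) y hy)
    · refine ⟨x0, fun x hx => ?_⟩
      by_contra hxx
      exact hne ⟨x, Finset.mem_erase.2 ⟨fun e => hxx (Or.inl e), hx⟩⟩
  have good : ∀ z, depth h z = h → ¬ DistLE G y z l → ∀ x ∈ X, ¬ DistLE G x z l := by
    intro z h1 h2 x hx
    rcases hy x hx with rfl | rfl
    · exact hfar z h1
    · exact h2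
  have hKT : K ≤ 2 * 2 ^ h * K := Nat.le_mul_of_pos_left _ (by positivity)
  by_cases hrow : ∀ p, K ≤ p → p ≤ 2 * 2 ^ h * K → ¬ DistLE G y (row p) l
  · exact ⟨row K, row (2 * 2 ^ h * K), Or.inr ⟨K, le_rfl, rfl⟩, Or.inr ⟨_, le_rfl, rfl⟩,
      conn_row hKT fun i h1 h2 => good _ rfl (hrow i h1 h2)⟩
  push Not at hrow
  obtain ⟨c, hc1, hc2, hc⟩ := hrow
  have hrd : ∀ z, DistLE G y z l → rd K h c z ≤ 2 * l := by
    intro z hz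
    have a1 := lip_dist (rd K h c) (rd_lip (by omega)) (DistLE_symm hc)
    have a2 := lip_dist (rd K h c) (rd_lip (by omega)) hz
    have a3 : rd K h c (row c) = 0 := by simp [rd]
    omega
  have goodrow : ∀ p, (p + 2 * l < c ∨ c + 2 * l < p) → ∀ x ∈ X, ¬ DistLE G x (row p) l := by
    intro p hp
    refine good _ rfl fun hd => ?_
    have := hrd _ hd
    simp only [rd] at this
    omega
  have goodleg : ∀ b i t, (pos K b i + 2 * l < c ∨ c + 2 * l < pos K b i) →
      ∀ x ∈ X, ¬ DistLE G x (leg b i t) l := by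
    intro b i t hp
    refine good _ rfl fun hd => ?_
    have := hrd _ hd
    simp only [rd] at this
    omega
  have goodnode : ∀ i, ∀ x ∈ X, ¬ DistLE G x (node 0 i) l := by
    intro i
    refine good _ rfl fun hd => ?_
    have := hrd _ hd
    simp only [rd] at this
    omega
  -- the jump over `c`
  set i := (c - 2 * l - 1) / (2 * K) with hi
  have e1 : 2 * i * K + 2 * l < c := by
    have := Nat.div_mul_le_self (c - 2 * l - 1) (2 * K)
    rw [← hi] at this
    have e : 2 * i * K = i * (2 * K) := by ring
    omega
  have e2 : c + 2 * l < (2 * i + 3) * K := by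
    have := Nat.lt_div_mul_add (a := c - 2 * l - 1) (b := 2 * K) (by omega)
    rw [← hi] at this
    have e : (2 * i + 3) * K = i * (2 * K) + 2 * K + K := by ring
    omega
  have p1 : pos K false i = 2 * i * K := rfl
  have p2 : pos K true i = (2 * i + 3) * K := rfl
  have jump : Conn G (fun y => ∀ x ∈ X, ¬ DistLE G x y l) (row (2 * i * K))
      (row ((2 * i + 3) * K)) := by
    have j1 := conn_leg (K := K) (M := h) (h := h) (b := false) (i := i)
      (Q := fun y => ∀ x ∈ X, ¬ DistLE G x y l) (goodrow _ (Or.inl (by rw [p1]; exact e1)))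
      (fun t => goodleg _ _ t (Or.inl (by rw [p1]; exact e1))) (goodnode i)
    have j2 := conn_leg (K := K) (M := h) (h := h) (b := true) (i := i)
      (Q := fun y => ∀ x ∈ X, ¬ DistLE G x y l) (goodrow _ (Or.inr (by rw [p2]; exact e2)))
      (fun t => goodleg _ _ t (Or.inr (by rw [p2]; exact e2))) (goodnode i)
    rw [p1] at j1
    rw [p2] at j2
    exact j1.trans j2.symm
  -- left end
  obtain ⟨a, ha, hla⟩ : ∃ a, a ≤ K ∧ Conn G (fun y => ∀ x ∈ X, ¬ DistLE G x y l) (row a)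
      (row (2 * i * K)) := by
    by_cases hz : 2 * i * K ≤ K
    · exact ⟨_, hz, Conn.refl (goodrow _ (Or.inl e1))⟩
    · exact ⟨K, le_rfl, conn_row (by omega) fun p _ h2 => goodrow _ (Or.inl (by omega))⟩
  obtain ⟨b, hb, hrb⟩ : ∃ b, 2 * 2 ^ h * K ≤ b ∧ Conn G (fun y => ∀ x ∈ X, ¬ DistLE G x y l)
      (row ((2 * i + 3) * K)) (row b) := by
    by_cases hz : 2 * 2 ^ h * K ≤ (2 * i + 3) * K
    · exact ⟨_, hz, Conn.refl (goodrow _ (Or.inr e2))⟩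
    · exact ⟨_, le_rfl, conn_row (by omega) fun p h1 _ => goodrow _ (Or.inr (by omega))⟩
  exact ⟨row a, row b, Or.inr ⟨a, ha, rfl⟩, Or.inr ⟨b, hb, rfl⟩, (hla.trans jump).trans hrb⟩

end CM

/-- Theorem 1.3: counterexample to the coarse Menger conjecture for `k = d = 3`,
with maximum degree at most 3. -/
theorem stmt_8 (ℓ : ℕ) (hl : 0 < ℓ) :
    ∃ (V : Type) (G : SimpleGraph V) (S T : Set V),
      (∀ v : V, (G.neighborSet v).Finite ∧ (G.neighborSet v).ncard ≤ 3) ∧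
      ¬ HasKPaths G S T 3 3 ∧
      ∀ X : Finset V, X.card ≤ 2 →
        ∃ (u v : V) (w : G.Walk u v), w.IsPath ∧ u ∈ S ∧ v ∈ T ∧
          ∀ x ∈ X, ∀ y ∈ w.support, ¬ DistLE G x y ℓ := by
  refine ⟨CM.Vx, CM.Gr (4 * ℓ + 1) (2 * ℓ + 1) (2 * ℓ + 1), CM.Sset (4 * ℓ + 1) (2 * ℓ + 1),
    CM.Tset (4 * ℓ + 1) (2 * ℓ + 1), CM.degree_le (by omega), CM.no_three (by omega), ?_⟩
  intro X hX
  obtain ⟨u, v, hu, hv, hc⟩ := CM.robust (K := 4 * ℓ + 1) (l := ℓ) rfl X hX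
  obtain ⟨w, hw, hQ⟩ := hc.path
  exact ⟨u, v, w, hw, hu, hv, fun x hx y hy => hQ y hy x hx⟩
end

section
/- Let c ≥ 7 and ℓ ≥ 2c+5 be integers. For every non-null graph G and S,T ⊆ V(G), either there are two paths between S and T at distance at least three from each other, or there exists a vertex x ∈ V(G) such that every path between S and T contains a vertex at distance at most 8ℓ + c + 2 from x. In particular (taking c = 7, ℓ = 19), the bound 161 suffices. -/
namespace CM

open SimpleGraph

variable {V : Type} {G : SimpleGraph V}

theorem dl_refl (x : V) (k : ℕ) : DistLE G x x k := ⟨Walk.nil, by simp⟩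

theorem dl_symm {x y : V} {k : ℕ} (h : DistLE G x y k) : DistLE G y x k := by
  obtain ⟨w, hw⟩ := h
  exact ⟨w.reverse, by simpa using hw⟩

theorem dl_trans {x y z : V} {k l : ℕ} (h : DistLE G x y k) (h' : DistLE G y z l) :
    DistLE G x z (k + l) := by
  obtain ⟨w, hw⟩ := h
  obtain ⟨w', hw'⟩ := h'
  exact ⟨w.append w', by rw [Walk.length_append]; omega⟩

theorem dl_mono {x y : V} {k l : ℕ} (h : DistLE G x y k) (hkl : k ≤ l) : DistLE G x y l := by
  obtain ⟨w, hw⟩ := h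
  exact ⟨w, by omega⟩

theorem dl_adj {x y : V} (h : G.Adj x y) : DistLE G x y 1 := ⟨Walk.cons h Walk.nil, by simp⟩

/-- `y` can be reached from `x` inside `A`. -/
def Rea (G : SimpleGraph V) (A : Set V) (x y : V) : Prop :=
  ∃ w : G.Walk x y, ∀ z ∈ w.support, z ∈ A

theorem rea_refl {A : Set V} {x : V} (h : x ∈ A) : Rea G A x x :=
  ⟨Walk.nil, by simpa using h⟩

theorem rea_symm {A : Set V} {x y : V} (h : Rea G A x y) : Rea G A y x := by
  obtain ⟨w, hw⟩ := h
  exact ⟨w.reverse, by simpa using hw⟩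

theorem rea_trans {A : Set V} {x y z : V} (h : Rea G A x y) (h' : Rea G A y z) :
    Rea G A x z := by
  obtain ⟨w, hw⟩ := h
  obtain ⟨w', hw'⟩ := h'
  refine ⟨w.append w', fun u hu => ?_⟩
  rw [Walk.mem_support_append_iff] at hu
  rcases hu with hu | hu
  · exact hw _ hu
  · exact hw' _ hu

theorem rea_mono {A B : Set V} {x y : V} (h : Rea G A x y) (hAB : ∀ z ∈ A, z ∈ B) :
    Rea G B x y := by
  obtain ⟨w, hw⟩ := h
  exact ⟨w, fun z hz => hAB _ (hw z hz)⟩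

theorem rea_adj {A : Set V} {x y : V} (h : G.Adj x y) (hx : x ∈ A) (hy : y ∈ A) :
    Rea G A x y := by
  refine ⟨Walk.cons h Walk.nil, fun z hz => ?_⟩
  simp at hz
  rcases hz with rfl | rfl <;> assumption

theorem rea_end {A : Set V} {x y : V} (h : Rea G A x y) : y ∈ A := by
  obtain ⟨w, hw⟩ := h
  exact hw _ w.end_mem_support

theorem rea_seq {A : Set V} (g : ℕ → V) (i j : ℕ) (hij : i ≤ j)
    (hadj : ∀ t, i ≤ t → t < j → G.Adj (g t) (g (t + 1)))
    (hA : ∀ t, i ≤ t → t ≤ j → g t ∈ A) : Rea G A (g i) (g j) := by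
  induction j, hij using Nat.le_induction with
  | base => exact rea_refl (hA _ le_rfl le_rfl)
  | succ j hij ih =>
    refine rea_trans (ih (fun t h1 h2 => hadj t h1 (by omega)) fun t h1 h2 => hA t h1 (by omega)) ?_
    exact rea_adj (hadj j hij (by omega)) (hA _ hij (by omega)) (hA _ (by omega) le_rfl)

theorem dl_seq (g : ℕ → V) (i j : ℕ) (hij : i ≤ j)
    (hadj : ∀ t, i ≤ t → t < j → G.Adj (g t) (g (t + 1))) : DistLE G (g i) (g j) (j - i) := by
  induction j, hij using Nat.le_induction with
  | base => exact dl_refl _ _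
  | succ j hij ih =>
    exact dl_mono (dl_trans (ih (fun t h1 h2 => hadj t h1 (by omega)))
      (dl_adj (hadj j hij (by omega)))) (by omega)

/-- A geodesic parametrization. -/
structure Geo (G : SimpleGraph V) (p : ℕ → V) (n : ℕ) : Prop where
  adj : ∀ i, i < n → G.Adj (p i) (p (i + 1))
  geod : ∀ i j k, i ≤ n → j ≤ n → DistLE G (p i) (p j) k → i ≤ j + k

/-- `v` is at distance at most `k` from the geodesic. -/
def Low (G : SimpleGraph V) (p : ℕ → V) (n k : ℕ) (v : V) : Prop :=
  ∃ j, j ≤ n ∧ DistLE G v (p j) k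

theorem low_mono {p : ℕ → V} {n k l : ℕ} {v : V} (h : Low G p n k v) (hkl : k ≤ l) :
    Low G p n l v := by
  obtain ⟨j, hj, h⟩ := h
  exact ⟨j, hj, dl_mono h hkl⟩

theorem low_dl {p : ℕ → V} {n k l : ℕ} {v u : V} (h : Low G p n k v) (h' : DistLE G u v l) :
    Low G p n (k + l) u := by
  obtain ⟨j, hj, h⟩ := h
  exact ⟨j, hj, dl_mono (dl_trans h' h) (by omega)⟩

/-- `v` is in the component of `u` of the set of vertices far from the geodesic. -/
def HC (G : SimpleGraph V) (p : ℕ → V) (n : ℕ) (u v : V) : Prop :=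
  Rea G {z | ¬ Low G p n 12 z} u v

theorem hc_high {p : ℕ → V} {n : ℕ} {u v : V} (h : HC G p n u v) : ¬ Low G p n 12 v :=
  rea_end h

/-- The component of `u` attaches at index `j`. -/
def Att (G : SimpleGraph V) (p : ℕ → V) (n : ℕ) (u : V) (j : ℕ) : Prop :=
  j ≤ n ∧ ∃ v, HC G p n u v ∧ DistLE G v (p j) 13

theorem cross_s11 {p : ℕ → V} {n : ℕ} {u x y : V} (w : G.Walk x y) (hx : HC G p n u x)
    (hy : Low G p n 12 y) :
    ∃ x' z, HC G p n u x' ∧ G.Adj x' z ∧ Low G p n 12 z ∧ DistLE G z y w.length := by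
  induction w with
  | nil => exact absurd hy (hc_high hx)
  | @cons x z y h w ih =>
    by_cases hz : Low G p n 12 z
    · exact ⟨x, z, hx, h, hz, w, by simp⟩
    · obtain ⟨x', z', h1, h2, h3, h4⟩ :=
        ih (rea_trans hx (rea_adj h (hc_high hx) hz)) hy
      exact ⟨x', z', h1, h2, h3, dl_mono h4 (by simp)⟩

theorem att_near {p : ℕ → V} {n : ℕ} (hg : Geo G p n) {u x : V} {j H : ℕ} (hx : HC G p n u x)
    (hj : j ≤ n) (h : DistLE G x (p j) H) :
    ∃ j', Att G p n u j' ∧ j ≤ j' + (H + 12) ∧ j' ≤ j + (H + 12) := by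
  obtain ⟨w, hw⟩ := h
  obtain ⟨x', z, h1, h2, ⟨j', hj', h3⟩, h4⟩ := cross_s11 w hx ⟨j, hj, dl_refl _ _⟩
  have h5 : DistLE G (p j) (p j') (H + 12) := dl_mono (dl_trans (dl_symm h4) h3) (by omega)
  exact ⟨j', ⟨hj', x', h1, dl_mono (dl_trans (dl_adj h2) h3) (by omega)⟩,
    hg.geod _ _ _ hj hj' h5, hg.geod _ _ _ hj' hj (dl_symm h5)⟩

theorem walk_split {x y : V} {k : ℕ} (h : DistLE G x y k) (Q : V → Prop) :
    Rea G {z | ¬ Q z} x y ∨ ∃ z s t, Q z ∧ s + t ≤ k ∧ DistLE G x z s ∧ DistLE G z y t := by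
  classical
  obtain ⟨w, hw⟩ := h
  by_cases hq : ∃ z ∈ w.support, Q z
  · obtain ⟨z, hz, hQ⟩ := hq
    refine Or.inr ⟨z, (w.takeUntil z hz).length, (w.dropUntil z hz).length, hQ, ?_,
      ⟨_, le_rfl⟩, ⟨_, le_rfl⟩⟩
    have := congrArg Walk.length (w.take_spec hz)
    rw [Walk.length_append] at this
    omega
  · push Not at hq
    exact Or.inl ⟨w, hq⟩

/-- two vertices of components that are close: either the same component or a
close pair of attachments -/
theorem two_comps {p : ℕ → V} {n : ℕ} (hg : Geo G p n) {u u' x x' : V} {k : ℕ}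
    (hx : HC G p n u x) (hx' : HC G p n u' x') (h : DistLE G x x' k) :
    HC G p n u x' ∨ ∃ j j', Att G p n u j ∧ Att G p n u' j' ∧ j ≤ j' + (k + 48) := by
  rcases walk_split h (Low G p n 12) with h1 | ⟨z, s, t, ⟨i, hi, hz⟩, hst, hs, ht⟩
  · exact Or.inl (rea_trans hx h1)
  · obtain ⟨j, hj, h1, h2⟩ := att_near hg hx hi (dl_trans hs hz)
    obtain ⟨j', hj', h3, h4⟩ := att_near hg hx' hi (dl_trans (dl_symm ht) hz)
    exact Or.inr ⟨j, j', hj, hj', by omega⟩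

/-- A leg. -/
structure Leg (G : SimpleGraph V) (p : ℕ → V) (n : ℕ) (g : ℕ → V) (j : ℕ) (u : V) : Prop where
  zero : g 0 = p j
  adj : ∀ t, t < 13 → G.Adj (g t) (g (t + 1))
  top : HC G p n u (g 13)
  dist : ∀ t, t ≤ 13 → DistLE G (g t) (p j) t
  lev : ∀ t s, t ≤ 13 → Low G p n s (g t) → t ≤ s

theorem exists_leg {p : ℕ → V} {n : ℕ} {u : V} {j : ℕ} (h : Att G p n u j) :
    ∃ g, Leg G p n g j u := by
  obtain ⟨hj, v, hv, w, hw⟩ := h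
  have hlen : w.length = 13 := by
    by_contra hne
    exact hc_high hv ⟨j, hj, w, by omega⟩
  have hr : w.reverse.length = 13 := by simpa using hlen
  have hd : ∀ t, t ≤ 13 → DistLE G (w.reverse.getVert t) (p j) t := by
    intro t ht
    refine dl_symm ⟨w.reverse.take t, ?_⟩
    simp
  have htop : w.reverse.getVert 13 = v := by
    have := w.reverse.getVert_length
    rwa [hr] at this
  refine ⟨w.reverse.getVert, by simp, ?_, ?_, hd, ?_⟩
  · intro t ht
    exact w.reverse.adj_getVert_succ (by omega)
  · rw [htop]; exact hv
  · intro t s ht hlow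
    by_contra hlt
    have h1 : DistLE G v (w.reverse.getVert t) (13 - t) := by
      refine dl_symm ⟨(w.reverse.drop t), ?_⟩
      rw [Walk.drop_length, hr]
    exact hc_high hv (low_mono (low_dl hlow h1) (by omega))

end CM

namespace CM

open SimpleGraph

variable {V : Type} {G : SimpleGraph V}

theorem link {x y : V} {g : ℕ} (h : DistLE G x y (g + 1)) :
    ∃ L : Set V, y ∈ L ∧ (∀ z ∈ L, Rea G L x z) ∧ (∀ z ∈ L, z = y ∨ DistLE G x z g) ∧
      ∀ z ∈ L, DistLE G x z (g + 1) := by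
  classical
  obtain ⟨w, hw⟩ := h
  have key : ∀ z ∈ w.support, z = y ∨ DistLE G x z g := by
    intro z hz
    have h1 := congrArg Walk.length (w.take_spec hz)
    rw [Walk.length_append] at h1
    by_cases h0 : (w.dropUntil z hz).length = 0
    · exact Or.inl (Walk.eq_of_length_eq_zero h0)
    · exact Or.inr ⟨w.takeUntil z hz, by omega⟩
  refine ⟨{z | z ∈ w.support}, w.end_mem_support, fun z hz => ⟨w.takeUntil z hz, fun q hq => w.support_takeUntil_subset_support hz hq⟩, key, fun z hz => ?_⟩
  rcases key z hz with rfl | h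
  · exact ⟨w, hw⟩
  · exact dl_mono h (by omega)

/-- Chain data. -/
structure CD (G : SimpleGraph V) (S T : Set V) (p : ℕ → V) (n : ℕ) where
  geo : Geo G p n
  m : ℕ
  c : ℕ → V
  a : ℕ → ℕ
  b : ℕ → ℕ
  al : ℕ → ℕ → V
  be : ℕ → ℕ → V
  m1 : 1 ≤ m
  pS : p 0 ∈ S
  pT : p n ∈ T
  high : ∀ k, 1 ≤ k → k ≤ m → ¬ Low G p n 12 (c k)
  hS : ∃ s ∈ S, HC G p n (c 1) s
  hT : ∃ t ∈ T, HC G p n (c m) t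
  an : ∀ k, 2 ≤ k → k ≤ m → a k ≤ n
  bn : ∀ k, k < m → b k ≤ n
  aleg : ∀ k, 2 ≤ k → k ≤ m → Leg G p n (al k) (a k) (c k)
  bleg : ∀ k, 1 ≤ k → k < m → Leg G p n (be k) (b k) (c k)
  aatt : ∀ k j, 2 ≤ k → k ≤ m → Att G p n (c k) j → a k ≤ j
  batt : ∀ k j, 1 ≤ k → k < m → Att G p n (c k) j → j ≤ b k
  b0 : b 0 = 0
  bb : ∀ k, k + 1 < m → b k + 149 ≤ b (k + 1)
  ab : ∀ k, 1 ≤ k → k < m → a (k + 1) + 40 ≤ b k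
  aa : ∀ k, 2 ≤ k → k + 1 ≤ m → a k + 40 ≤ a (k + 1)
  ba : ∀ k, k + 3 ≤ m → b k + 69 ≤ a (k + 3)

variable {S T : Set V} {p : ℕ → V} {n : ℕ}

namespace CD

variable (X : CD G S T p n)

theorem bmono {k l : ℕ} (h : k ≤ l) (hl : l < X.m) : X.b k ≤ X.b l := by
  induction l, h using Nat.le_induction with
  | base => exact le_rfl
  | succ l h ih => have := X.bb l hl; have := ih (by omega); omega

theorem bstrict {k l : ℕ} (h : k < l) (hl : l < X.m) : X.b k + 149 ≤ X.b l := by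
  have := X.bmono (k := k + 1) (l := l) h hl
  have := X.bb k (by omega)
  omega

theorem astrict {k l : ℕ} (hk : 2 ≤ k) (h : k < l) (hl : l ≤ X.m) : X.a k + 40 ≤ X.a l := by
  induction l, (show k + 1 ≤ l from h) using Nat.le_induction with
  | base => exact X.aa k hk hl
  | succ l h ih => have := X.aa l (by omega) hl; have := ih (by omega) (by omega); omega

theorem bafar {k l : ℕ} (h : k + 3 ≤ l) (hl : l ≤ X.m) : X.b k + 69 ≤ X.a l := by
  have := X.ba (l - 3) (by omega)
  have := X.bmono (k := k) (l := l - 3) (by omega) (by omega)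
  rw [show l - 3 + 3 = l by omega] at *
  omega

/-- vertices of the right leg -/
def BL (k : ℕ) : Set V := {v | 1 ≤ k ∧ k < X.m ∧ ∃ t, t ≤ 13 ∧ v = X.be k t}

/-- component with upper part of the left leg -/
def XX (s k : ℕ) : Set V := {v | HC G p n (X.c k) v ∨ ∃ t, s ≤ t ∧ t ≤ 13 ∧ v = X.al k t}

def Core (k : ℕ) (x : V) : Prop :=
  (∃ l, 1 ≤ l ∧ l ≤ k ∧ HC G p n (X.c l) x) ∨
    ∃ l j, l ≤ k ∧ l < X.m ∧ j ≤ X.b l ∧ j ≤ n ∧ DistLE G x (p j) 13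

theorem core_mono {k l : ℕ} {x : V} (h : X.Core k x) (hkl : k ≤ l) : X.Core l x := by
  rcases h with ⟨i, h1, h2, h3⟩ | ⟨i, j, h1, h2⟩
  · exact Or.inl ⟨i, h1, by omega, h3⟩
  · exact Or.inr ⟨i, j, by omega, h2⟩

structure Pr (k : ℕ) (D : Set V) (k' : ℕ) (D' : Set V) : Prop where
  conn : ∃ s ∈ S, s ∈ D ∧ ∀ v ∈ D, Rea G D s v
  comp : ∀ v, HC G p n (X.c k) v → v ∈ D
  core : ∀ v ∈ D, ∃ x, DistLE G x v 6 ∧ X.Core k x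
  sep : ∀ x ∈ D ∪ X.BL k, ∀ y ∈ D' ∪ X.BL k', ¬ DistLE G x y 2
  low2 : ∀ v ∈ D, Low G p n 2 v → ∃ j, j ≤ n ∧ DistLE G v (p j) 21 ∧ j + 40 ≤ X.b k'
  low8 : ∀ v ∈ D, Low G p n 8 v → ∃ j, j ≤ n ∧ DistLE G v (p j) 21 ∧
    ∀ i, k < i → i ≤ X.m → j + 40 ≤ X.a i

inductive Hist : ℕ → Set V → Prop
  | zero : Hist 0 {p 0}
  | cons (k k' : ℕ) (D D' : Set V) (h : Hist k' D') (hk : k' < k) (hm : k ≤ X.m)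
      (pr : X.Pr k D k' D') : Hist k D

theorem hist_core {k : ℕ} {D : Set V} (h : X.Hist k D) (hk : k < X.m) :
    ∀ v ∈ D ∪ X.BL k, ∃ x, DistLE G x v 6 ∧ X.Core k x := by
  rintro v (hv | ⟨h1, h2, t, ht, rfl⟩)
  · cases h with
    | zero =>
      refine ⟨v, dl_refl _ _, Or.inr ⟨0, 0, le_rfl, by omega, by omega, by omega, ?_⟩⟩
      rw [show v = p 0 from hv]
      exact dl_refl _ _
    | cons k k' D D' h hk hm pr => exact pr.core v hv
  · exact ⟨_, dl_refl _ _, Or.inr ⟨k, X.b k, le_rfl, hk, le_rfl, X.bn k hk,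
      dl_mono ((X.bleg k h1 h2).dist t ht) ht⟩⟩

theorem hist_conn {k : ℕ} {D : Set V} (h : X.Hist k D) :
    ∃ s ∈ S, s ∈ D ∧ ∀ v ∈ D ∪ X.BL k, Rea G (D ∪ X.BL k) s v := by
  cases h with
  | zero =>
    refine ⟨p 0, X.pS, rfl, ?_⟩
    rintro v (hv | ⟨h1, h2, t, ht, rfl⟩)
    · rw [show v = p 0 from hv]
      exact rea_refl (Or.inl rfl)
    · omega
  | cons k k' D D' h hk hm pr =>
    obtain ⟨s, hs, hsD, hc⟩ := pr.conn
    refine ⟨s, hs, hsD, ?_⟩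
    rintro v (hv | ⟨h1, h2, t, ht, rfl⟩)
    · exact rea_mono (hc v hv) fun z hz => Or.inl hz
    · have hl := X.bleg k h1 h2
      have h3 : Rea G (D ∪ X.BL k) s (X.be k 13) :=
        rea_mono (hc _ (pr.comp _ hl.top)) fun z hz => Or.inl hz
      refine rea_trans h3 (rea_symm (rea_seq _ t 13 ht (fun i _ hi => hl.adj i hi) ?_))
      intro i _ hi
      exact Or.inr ⟨h1, h2, i, hi, rfl⟩

theorem hist_end {k : ℕ} {D : Set V} (h : X.Hist k D) (hk : k < X.m) :
    p (X.b k) ∈ D ∪ X.BL k := by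
  cases h with
  | zero => rw [X.b0]; exact Or.inl rfl
  | cons k k' D D' h hk' hm pr =>
    refine Or.inr ⟨by omega, hk, 0, by omega, ?_⟩
    exact (X.bleg k (by omega) hk).zero.symm

/-- F2 -/
theorem far_bleg {j k : ℕ} {E : Set V} (h : X.Hist j E) (hjk : j < k) :
    ∀ x ∈ X.BL k, ∀ y ∈ E ∪ X.BL j, ¬ DistLE G x y 2 := by
  rintro x ⟨h1, h2, t, ht, rfl⟩ y hy hxy
  obtain ⟨z, hz, hcore⟩ := X.hist_core h (by omega) y hy
  have hl := (X.bleg k h1 h2).dist t ht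
  have hzb : DistLE G z (p (X.b k)) 21 :=
    dl_mono (dl_trans hz (dl_trans (dl_symm hxy) hl)) (by omega)
  have hbn := X.bn k h2
  rcases hcore with ⟨l, hl1, hl2, hc⟩ | ⟨l, i, hl1, hl2, hi, hin, hd⟩
  · obtain ⟨j', hj', h5, h6⟩ := att_near X.geo hc hbn hzb
    have := X.batt l j' hl1 (by omega) hj'
    have := X.bstrict (k := l) (l := k) (by omega) h2
    omega
  · have := X.geo.geod _ _ _ hbn hin (dl_trans (dl_symm hzb) hd)
    have := X.bstrict (k := l) (l := k) (by omega) h2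
    omega

/-- F1 -/
theorem far_X {j k : ℕ} {E : Set V} (h : X.Hist j E) (hjk : j + 3 ≤ k) (hk : k ≤ X.m) (s : ℕ) :
    ∀ x ∈ X.XX s k, ∀ y ∈ E ∪ X.BL j, ¬ DistLE G x y 5 := by
  intro x hx y hy hxy
  obtain ⟨z, hz, hcore⟩ := X.hist_core h (by omega) y hy
  have hxz : DistLE G x z 11 := dl_trans hxy (dl_symm hz)
  have hfar := X.bafar hjk hk
  have hleg := X.aleg k (by omega) hk
  have han := X.an k (by omega) hk
  rcases hx with hx | ⟨t, _, ht, rfl⟩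
  · rcases hcore with ⟨l, hl1, hl2, hc⟩ | ⟨l, i, hl1, hl2, hi, hin, hd⟩
    · have hbl := X.bmono hl2 (by omega)
      rcases two_comps X.geo hx hc hxz with hsame | ⟨i, i', hi, hi', hle⟩
      · have : Att G p n (X.c l) (X.a k) :=
          ⟨han, _, rea_trans (rea_trans hc (rea_symm hsame)) hleg.top, hleg.dist 13 le_rfl⟩
        have := X.batt l _ hl1 (by omega) this
        omega
      · have := X.aatt k i (by omega) hk hi
        have := X.batt l i' hl1 (by omega) hi'
        omega
    · have hbl := X.bmono hl1 (by omega)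
      obtain ⟨i', hi', h5, h6⟩ := att_near X.geo hx hin (dl_trans hxz hd)
      have := X.aatt k i' (by omega) hk hi'
      omega
  · have hza : DistLE G z (p (X.a k)) 24 :=
      dl_mono (dl_trans (dl_symm hxz) (hleg.dist t ht)) (by omega)
    rcases hcore with ⟨l, hl1, hl2, hc⟩ | ⟨l, i, hl1, hl2, hi, hin, hd⟩
    · have hbl := X.bmono hl2 (by omega)
      obtain ⟨i', hi', h5, h6⟩ := att_near X.geo hc han hza
      have := X.batt l i' hl1 (by omega) hi'
      omega
    · have hbl := X.bmono hl1 (by omega)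
      have := X.geo.geod _ _ _ han hin (dl_trans (dl_symm hza) hd)
      omega

theorem high_lev {u v : V} {s : ℕ} (h : HC G p n u v) (hs : Low G p n s v) : 13 ≤ s := by
  by_contra hlt
  exact hc_high h (low_mono hs (by omega))

theorem XX_lev {k s t : ℕ} (hk : 2 ≤ k) (hm : k ≤ X.m) (ht : t ≤ 13) {x : V} (hx : x ∈ X.XX t k)
    (hs : Low G p n s x) : t ≤ s := by
  rcases hx with hx | ⟨i, hi, hi', rfl⟩
  · have := high_lev hx hs
    omega
  · have := (X.aleg k hk hm).lev i s hi' hs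
    omega

theorem XX_conn {k s : ℕ} (hk : 2 ≤ k) (hm : k ≤ X.m) {x y : V}
    (hx : x ∈ X.XX s k) (hy : y ∈ X.XX s k) : Rea G (X.XX s k) x y := by
  have hl := X.aleg k hk hm
  have key : ∀ z ∈ X.XX s k, Rea G (X.XX s k) (X.al k 13) z := by
    have hC : ∀ z, HC G p n (X.c k) z → Rea G (X.XX s k) (X.c k) z := by
      intro z hz
      obtain ⟨w, hw⟩ := hz
      classical
      refine ⟨w, fun q hq => Or.inl ⟨w.takeUntil q hq, fun r hr => ?_⟩⟩
      exact hw r (w.support_takeUntil_subset_support hq hr)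
    rintro z (hz | ⟨i, hi, hi', rfl⟩)
    · exact rea_trans (rea_symm (hC _ hl.top)) (hC z hz)
    · refine rea_symm (rea_seq _ i 13 hi' (fun t _ ht => hl.adj t ht) fun t ht ht' => ?_)
      exact Or.inr ⟨t, by omega, ht', rfl⟩
  exact rea_trans (rea_symm (key x hx)) (key y hy)

end CD

end CM

namespace CM

section chain

variable {ι : Type} {a b : ι → ℤ} {n : ℤ}

theorem argmax (hb : ∀ x, b x ≤ n + 149) (q : ℤ) (h : ∃ x, a x ≤ q) :
    ∃ x, a x ≤ q ∧ ∀ z, a z ≤ q → b z ≤ b x := by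
  obtain ⟨x0, hx0⟩ := h
  obtain ⟨M, ⟨x, hx, rfl⟩, hM⟩ := Int.exists_greatest_of_bdd
    (P := fun t => ∃ x, a x ≤ q ∧ b x = t) ⟨n + 149, by rintro t ⟨x, _, rfl⟩; exact hb x⟩
    ⟨b x0, x0, hx0, rfl⟩
  exact ⟨x, hx, fun z hz => hM _ ⟨z, hz, rfl⟩⟩

/-- there is a chain starting with `x` whose next member has left end at least `r` -/
def Chain (a b : ι → ℤ) (n : ℤ) (x : ι) (r : ℤ) : Prop :=
  ∃ (m : ℕ) (c : ℕ → ι), c 0 = x ∧ (1 ≤ m → r ≤ a (c 1)) ∧ n < b (c m) ∧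
    (∀ k, k < m → b (c k) ≤ n ∧ a (c (k + 1)) ≤ b (c k) - 40 ∧ b (c k) + 149 ≤ b (c (k + 1))) ∧
    ∀ k, k + 2 ≤ m → a (c (k + 1)) + 40 ≤ a (c (k + 2)) ∧ b (c k) - 80 ≤ a (c (k + 2))

theorem chain_cons {x x' : ι} {r' : ℤ} (h : Chain a b n x' r') (h0 : b x ≤ n)
    (h1 : a x' ≤ b x - 40) (h2 : b x + 149 ≤ b x') (h3 : b x' ≤ n → a x' + 40 ≤ r')
    (h4 : b x' ≤ n → b x - 80 ≤ r') : Chain a b n x (a x') := by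
  obtain ⟨m, c, rfl, hr, hn, hp, ht⟩ := h
  refine ⟨m + 1, fun k => Nat.casesOn k x c, rfl, fun _ => le_rfl, hn, ?_, ?_⟩
  · rintro (_ | k) hk
    · exact ⟨h0, h1, h2⟩
    · exact hp k (by omega)
  · rintro (_ | k) hk
    · have h5 := (hp 0 (by omega)).1
      have := hr (by omega)
      have := h3 h5
      have := h4 h5
      exact ⟨by simp; omega, by simp; omega⟩
    · exact ht k (by omega)

theorem chain_mono {x : ι} {r r' : ℤ} (h : Chain a b n x r) (hr : r' ≤ r) : Chain a b n x r' := by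
  obtain ⟨m, c, h0, h1, h2⟩ := h
  exact ⟨m, c, h0, fun h => hr.trans (h1 h), h2⟩

theorem chain_end {x : ι} (h : n < b x) (r : ℤ) : Chain a b n x r :=
  ⟨0, fun _ => x, rfl, by omega, h, by omega, by omega⟩

theorem chain_run (hb : ∀ x, b x ≤ n + 149)
    (deep : ∀ i, 0 ≤ i → i ≤ n → ∃ x, a x ≤ i - 149 ∧ i + 149 ≤ b x) (N : ℕ) :
    ∀ x y, n - b x < N → 0 ≤ b x → b x ≤ n → a y ≤ b x - 80 → b x + 149 ≤ b y →
      (∀ z, a z ≤ b x - 80 → b z ≤ b y) → Chain a b n x (a y) := by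
  have next : ∀ y, 0 ≤ b y → b y ≤ n →
      ∃ z, a z ≤ b y - 80 ∧ b y + 149 ≤ b z ∧ ∀ u, a u ≤ b y - 80 → b u ≤ b z := by
    intro y h0 h1
    obtain ⟨u, hu, hu'⟩ := deep (b y) h0 h1
    obtain ⟨z, hz, hz'⟩ := argmax (a := a) hb (b y - 80) ⟨u, by omega⟩
    exact ⟨z, hz, hu'.trans (hz' u (by omega)), hz'⟩
  induction N with
  | zero => intro x y h; omega
  | succ N ih =>
    intro x y hN h0 hn hay hby hmax
    by_cases hyn : n < b y
    · exact chain_cons (chain_end hyn (a y + b x + n)) hn (by omega) hby (by omega) (by omega)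
    · obtain ⟨z, hz1, hz2, hz3⟩ := next y (by omega) (by omega)
      have hz4 : b x - 80 < a z := by
        by_contra hle
        have := hmax z (by omega)
        omega
      by_cases hA : b x - 40 < a z
      · exact chain_cons (ih y z (by omega) (by omega) (by omega) hz1 hz2 hz3) hn (by omega) hby
          (by omega) (by omega)
      · refine chain_mono (r := a z) ?_ (by omega)
        by_cases hzn : n < b z
        · exact chain_cons (chain_end hzn 0) hn (by omega) (by omega) (by omega) (by omega)
        · obtain ⟨w, hw1, hw2, hw3⟩ := next z (by omega) (by omega)
          have hw4 : b y - 80 < a w := by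
            by_contra hle
            have := hz3 w (by omega)
            omega
          exact chain_cons (ih z w (by omega) (by omega) (by omega) hw1 hw2 hw3) hn (by omega)
            (by omega) (by omega) (by omega)

theorem chain_exists (hn : 0 ≤ n) (hb : ∀ x, b x ≤ n + 149)
    (deep : ∀ i, 0 ≤ i → i ≤ n → ∃ x, a x ≤ i - 149 ∧ i + 149 ≤ b x) :
    ∃ (m : ℕ) (c : ℕ → ι), a (c 0) ≤ -149 ∧ 149 ≤ b (c 0) ∧ n < b (c m) ∧
    (∀ k, k < m → b (c k) ≤ n ∧ a (c (k + 1)) ≤ b (c k) - 40 ∧ b (c k) + 149 ≤ b (c (k + 1)) ∧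
      -149 < a (c (k + 1)) ∧ 149 ≤ b (c k)) ∧
    ∀ k, k + 2 ≤ m → a (c (k + 1)) + 40 ≤ a (c (k + 2)) ∧ b (c k) - 80 ≤ a (c (k + 2)) := by
  obtain ⟨u, hu, hu'⟩ := deep 0 le_rfl hn
  obtain ⟨x, hx, hx'⟩ := argmax (a := a) hb (-149) ⟨u, by omega⟩
  have hbx := hx' u (by omega)
  have : ∃ r, Chain a b n x r := by
    by_cases hxn : n < b x
    · exact ⟨0, chain_end hxn 0⟩
    · obtain ⟨u, hu, hu'⟩ := deep (b x) (by omega) (by omega)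
      obtain ⟨y, hy, hy'⟩ := argmax (a := a) hb (b x - 80) ⟨u, by omega⟩
      have := hy' u (by omega)
      exact ⟨_, chain_run hb deep (n - b x + 1).toNat x y (by omega) (by omega) (by omega) hy
        (by omega) hy'⟩
  obtain ⟨r, m, c, rfl, _, h1, h2, h3⟩ := this
  have hmono : ∀ k, k ≤ m → b (c 0) ≤ b (c k) := by
    intro k
    induction k with
    | zero => intro _; exact le_rfl
    | succ k ih =>
      intro hk
      have := ih (by omega)
      have := (h2 k (by omega)).2.2
      omega
  refine ⟨m, c, hx, by omega, h1, fun k hk => ?_, h3⟩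
  obtain ⟨h4, h5, h6⟩ := h2 k hk
  have := hmono k hk.le
  refine ⟨h4, h5, h6, ?_, by omega⟩
  by_contra hle
  have := hx' (c (k + 1)) (by omega)
  omega

end chain

end CM

namespace CM

open SimpleGraph

variable {V : Type} {G : SimpleGraph V} {S T : Set V} {p : ℕ → V} {n : ℕ}

namespace CD

variable (X : CD G S T p n)

theorem merge_leg {j k : ℕ} (hj : 1 ≤ j) (hjm : j < X.m) (hk : 1 ≤ k) (hkm : k < X.m)
    {E : Set V} {s : V} (hc : ∀ v ∈ E, Rea G E s v)
    (hcomp : ∀ v, HC G p n (X.c j) v → v ∈ E) {x y : V}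
    (hx : x ∈ X.XX 7 (k + 1)) (hy : y ∈ E ∪ X.BL j) (hxy : DistLE G x y 4) :
    ∃ F : Set V, (∀ z ∈ F, z ∈ X.BL j) ∧ y ∈ E ∪ F ∧ (∀ z ∈ E ∪ F, Rea G (E ∪ F) s z) ∧
      (∀ z ∈ F, ¬ Low G p n 2 z) ∧
      (∀ z ∈ F, Low G p n 8 z → DistLE G z (p (X.a (k + 1))) 21) := by
  rcases hy with hy | ⟨_, _, t, ht, rfl⟩
  · refine ⟨∅, by simp, Or.inl hy, ?_, by simp, by simp⟩
    rintro z (hz | hz)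
    · exact rea_mono (hc z hz) fun q hq => Or.inl hq
    · exact absurd hz (by simp)
  · have hl := X.bleg j hj hjm
    have hlowx : Low G p n (t + 4) x :=
      low_dl ⟨X.b j, X.bn j hjm, hl.dist t ht⟩ hxy
    have ht3 := X.XX_lev (by omega) (by omega) (by omega) hx hlowx
    refine ⟨{z | ∃ i, t ≤ i ∧ i ≤ 13 ∧ z = X.be j i}, ?_, ?_, ?_, ?_, ?_⟩
    · rintro z ⟨i, h1, h2, rfl⟩
      exact ⟨hj, hjm, i, h2, rfl⟩
    · exact Or.inr ⟨t, le_rfl, ht, rfl⟩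
    · rintro z (hz | ⟨i, h1, h2, rfl⟩)
      · exact rea_mono (hc z hz) fun q hq => Or.inl hq
      · refine rea_trans (rea_mono (hc _ (hcomp _ hl.top)) fun q hq => Or.inl hq)
          (rea_symm (rea_seq _ i 13 h2 (fun q _ hq => hl.adj q hq) fun q h3 h4 => ?_))
        exact Or.inr ⟨q, by omega, h4, rfl⟩
    · rintro z ⟨i, h1, h2, rfl⟩ hz
      have := hl.lev i 2 h2 hz
      omega
    · rintro z ⟨i, h1, h2, rfl⟩ hz
      have hi8 := hl.lev i 8 h2 hz
      rcases hx with hx | ⟨t0, h3, h4, rfl⟩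
      · have := high_lev hx hlowx
        omega
      · have hla := X.aleg (k + 1) (by omega) (by omega)
        have ht0 := hla.lev t0 _ h4 hlowx
        have h5 : DistLE G (X.be j t) (X.be j i) (i - t) :=
          dl_seq _ t i h1 (fun q _ hq => hl.adj q (by omega))
        exact dl_mono (dl_trans (dl_symm h5) (dl_trans (dl_symm hxy) (hla.dist t0 h4)))
          (by omega)

theorem merge {j k j' g : ℕ} (hj : 1 ≤ j) (hjk : j ≤ k) (hkm : k < X.m)
    {E E' : Set V} (hE' : X.Hist j' E') (hj' : j' < j) (hE : X.Pr j E j' E') (hg : g ≤ 3)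
    {x y : V} (hx : x ∈ X.XX 7 (k + 1)) (hy : y ∈ E ∪ X.BL j) (hxy : DistLE G x y (g + 1))
    (hfar : ∀ x ∈ X.XX 7 (k + 1), ∀ z ∈ E' ∪ X.BL j', ¬ DistLE G x z (g + 2)) :
    ∃ D, X.Hist (k + 1) D := by
  obtain ⟨s, hs, hsE, hc⟩ := hE.conn
  have hla := X.aleg (k + 1) (by omega) (by omega)
  have han := X.an (k + 1) (by omega) (by omega)
  obtain ⟨F, hF1, hF2, hF3, hF4, hF5⟩ := X.merge_leg hj (by omega) (by omega) hkm hc hE.comp hx hy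
    (dl_mono hxy (by omega))
  obtain ⟨L, hL0, hL1, hL2, hL3⟩ := link hxy
  have hxcore : ∀ v ∈ X.XX 7 (k + 1), X.Core (k + 1) v := by
    rintro v (hv | ⟨t, h1, h2, rfl⟩)
    · exact Or.inl ⟨k + 1, by omega, le_rfl, hv⟩
    · have := X.ab k (by omega) hkm
      exact Or.inr ⟨k, X.a (k + 1), by omega, hkm, by omega, han, dl_mono (hla.dist t h2) h2⟩
  have hX8 : ∀ v ∈ X.XX 7 (k + 1), Low G p n 12 v → DistLE G v (p (X.a (k + 1))) 13 := by
    rintro v (hv | ⟨t, h1, h2, rfl⟩) hlow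
    · exact absurd hlow (hc_high hv)
    · exact dl_mono (hla.dist t h2) h2
  have haa : ∀ i, k + 1 < i → i ≤ X.m → X.a (k + 1) + 40 ≤ X.a i :=
    fun i h1 h2 => X.astrict (by omega) h1 h2
  set D : Set V := (E ∪ F) ∪ (L ∪ X.XX 7 (k + 1)) with hD
  refine ⟨D, Hist.cons (k + 1) j' D E' hE' (by omega) (by omega) ⟨?_, ?_, ?_, ?_, ?_, ?_⟩⟩
  · refine ⟨s, hs, Or.inl (Or.inl hsE), ?_⟩
    have hEF : ∀ z ∈ E ∪ F, Rea G D s z := fun z hz => rea_mono (hF3 z hz) fun q hq => Or.inl hq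
    have hLD : ∀ z ∈ L, Rea G D x z :=
      fun z hz => rea_mono (hL1 z hz) fun q hq => Or.inr (Or.inl hq)
    have hsx : Rea G D s x := rea_trans (hEF y hF2) (rea_symm (hLD y hL0))
    rintro v (hv | hv | hv)
    · exact hEF v hv
    · exact rea_trans hsx (hLD v hv)
    · exact rea_trans hsx (rea_mono (X.XX_conn (by omega) (by omega) hx hv)
        fun q hq => Or.inr (Or.inr hq))
  · intro v hv
    exact Or.inr (Or.inr (Or.inl hv))
  · rintro v ((hv | hv) | hv | hv)
    · obtain ⟨z, h1, h2⟩ := hE.core v hv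
      exact ⟨z, h1, X.core_mono h2 (by omega)⟩
    · obtain ⟨h1, h2, t, ht, rfl⟩ := hF1 v hv
      exact ⟨_, dl_refl _ _, Or.inr ⟨j, X.b j, by omega, h2, le_rfl, X.bn j h2,
        dl_mono ((X.bleg j h1 h2).dist t ht) ht⟩⟩
    · exact ⟨x, dl_mono (hL3 v hv) (by omega), hxcore x hx⟩
    · exact ⟨v, dl_refl _ _, hxcore v hv⟩
  · rintro v (((hv | hv) | hv | hv) | hv) z hz hvz
    · exact hE.sep v (Or.inl hv) z hz hvz
    · exact hE.sep v (Or.inr (hF1 v hv)) z hz hvz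
    · rcases hL2 v hv with rfl | h
      · exact hE.sep v hy z hz hvz
      · exact hfar x hx z hz (dl_trans h hvz)
    · exact hfar v hv z hz (dl_mono hvz (by omega))
    · exact X.far_bleg hE' (by omega) v hv z hz hvz
  · rintro v ((hv | hv) | hv | hv) hlow
    · exact hE.low2 v hv hlow
    · exact absurd hlow (hF4 v hv)
    · have := X.XX_lev (by omega) (by omega) (by omega) hx (low_dl hlow (hL3 v hv))
      omega
    · have := X.XX_lev (by omega) (by omega) (by omega) hv hlow
      omega
  · rintro v ((hv | hv) | hv | hv) hlow
    · obtain ⟨i, h1, h2, h3⟩ := hE.low8 v hv hlow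
      exact ⟨i, h1, h2, fun q hq hq' => h3 q (by omega) hq'⟩
    · exact ⟨_, han, hF5 v hv hlow, haa⟩
    · have h1 := hX8 x hx (low_mono (low_dl hlow (hL3 v hv)) (by omega))
      exact ⟨_, han, dl_mono (dl_trans (dl_symm (hL3 v hv)) h1) (by omega), haa⟩
    · exact ⟨_, han, dl_mono (hX8 v hv (low_mono hlow (by omega))) (by omega), haa⟩

end CD

end CM

namespace CM

open SimpleGraph

variable {V : Type} {G : SimpleGraph V} {S T : Set V} {p : ℕ → V} {n : ℕ}

namespace CD

variable (X : CD G S T p n)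

theorem hist_low2 {k k' : ℕ} {D' : Set V} (h : X.Hist k' D') (hk : k' < k) (hm : k < X.m) :
    ∀ v ∈ D' ∪ X.BL k', Low G p n 2 v →
      ∃ j, j ≤ n ∧ DistLE G v (p j) 21 ∧ j + 40 ≤ X.b k := by
  rintro v (hv | ⟨h1, h2, t, ht, rfl⟩) hlow
  · cases h with
    | zero =>
      have := X.bstrict hk hm
      rw [show v = p 0 from hv]
      exact ⟨0, by omega, dl_refl _ _, by omega⟩
    | cons k' k'' D' D'' h hk' hm' pr =>
      obtain ⟨j, hj, hd, hb⟩ := pr.low2 v hv hlow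
      have := X.bmono (k := k'') (l := k) (by omega) hm
      exact ⟨j, hj, hd, by omega⟩
  · have := X.bstrict hk hm
    exact ⟨X.b k', X.bn k' h2, dl_mono ((X.bleg k' h1 h2).dist t ht) (by omega), by omega⟩

theorem hist_low8 {k' : ℕ} {D' : Set V} (h : X.Hist k' D') :
    ∀ v ∈ D' ∪ X.BL k', Low G p n 8 v →
      ∃ j, j ≤ n ∧ DistLE G v (p j) 21 ∧ ∀ i, k' + 3 ≤ i → i ≤ X.m → j + 40 ≤ X.a i := by
  rintro v (hv | ⟨h1, h2, t, ht, rfl⟩) hlow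
  · cases h with
    | zero =>
      rw [show v = p 0 from hv]
      refine ⟨0, by omega, dl_refl _ _, fun i hi him => ?_⟩
      have := X.bafar hi him
      omega
    | cons k' k'' D' D'' h hk' hm' pr =>
      obtain ⟨j, hj, hd, hb⟩ := pr.low8 v hv hlow
      exact ⟨j, hj, hd, fun i hi him => hb i (by omega) him⟩
  · refine ⟨X.b k', X.bn k' h2, dl_mono ((X.bleg k' h1 h2).dist t ht) (by omega), fun i hi him => ?_⟩
    have := X.bafar hi him
    omega

theorem seg_conn (X : CD G S T p n) {i j : ℕ} (hi : i ≤ n) (hj : j ≤ n) :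
    Rea G {v | ∃ q, ((i ≤ q ∧ q ≤ j) ∨ (j ≤ q ∧ q ≤ i)) ∧ v = p q} (p i) (p j) := by
  rcases le_total i j with h | h
  · exact rea_seq p i j h (fun t h1 h2 => X.geo.adj t (by omega)) fun t h1 h2 =>
      ⟨t, Or.inl ⟨h1, h2⟩, rfl⟩
  · exact rea_symm (rea_seq p j i h (fun t h1 h2 => X.geo.adj t (by omega)) fun t h1 h2 =>
      ⟨t, Or.inr ⟨h1, h2⟩, rfl⟩)

theorem append {k k' : ℕ} {D D' : Set V} (hk' : k' < k) (hkm : k < X.m)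
    (hD' : X.Hist k' D') (hD : X.Hist k D) (pr : X.Pr k D k' D')
    (hno : ∀ x ∈ X.XX 0 (k + 1), ∀ y ∈ D ∪ X.BL k, ¬ DistLE G x y 2) :
    ∃ D, X.Hist (k + 1) D := by
  have hla := X.aleg (k + 1) (by omega) (by omega)
  have han := X.an (k + 1) (by omega) (by omega)
  have hab := X.ab k (by omega) hkm
  have hbb := X.bstrict hk' hkm
  have hbn := X.bn k hkm
  have haa : ∀ i, k + 1 < i → i ≤ X.m → X.a (k + 1) + 40 ≤ X.a i :=
    fun i h1 h2 => X.astrict (by omega) h1 h2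
  set P : Set V := {v | ∃ q, ((X.b k' ≤ q ∧ q ≤ X.a (k + 1)) ∨
    (X.a (k + 1) ≤ q ∧ q ≤ X.b k')) ∧ v = p q} with hP
  set N : Set V := (D' ∪ X.BL k') ∪ (P ∪ X.XX 0 (k + 1)) with hN
  have hX8 : ∀ v ∈ X.XX 0 (k + 1), Low G p n 12 v → DistLE G v (p (X.a (k + 1))) 21 := by
    rintro v (hv | ⟨t, h1, h2, rfl⟩) hlow
    · exact absurd hlow (hc_high hv)
    · exact dl_mono (hla.dist t h2) (by omega)
  refine ⟨N, Hist.cons (k + 1) k N D hD (by omega) (by omega) ⟨?_, ?_, ?_, ?_, ?_, ?_⟩⟩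
  · obtain ⟨s, hs, hsD, hc⟩ := X.hist_conn hD'
    refine ⟨s, hs, Or.inl (Or.inl hsD), ?_⟩
    have h1 : ∀ v ∈ D' ∪ X.BL k', Rea G N s v := fun v hv =>
      rea_mono (hc v hv) fun q hq => Or.inl hq
    have h2 : ∀ v ∈ P, Rea G N (p (X.b k')) v := by
      rintro v ⟨q, hq, rfl⟩
      refine rea_mono (X.seg_conn (i := X.b k') (j := q) (by omega) (by omega)) ?_
      rintro z ⟨r, hr, rfl⟩
      exact Or.inr (Or.inl ⟨r, by omega, rfl⟩)
    have h3 := h1 _ (X.hist_end hD' (by omega))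
    have h4 : Rea G N (p (X.b k')) (p (X.a (k + 1))) := h2 _ ⟨X.a (k + 1), by omega, rfl⟩
    rintro v (hv | hv | hv)
    · exact h1 v hv
    · exact rea_trans h3 (h2 v hv)
    · refine rea_trans (rea_trans h3 h4) (rea_mono (X.XX_conn (s := 0) (by omega) (by omega) ?_ hv)
        fun q hq => Or.inr (Or.inr hq))
      exact Or.inr ⟨0, by omega, by omega, hla.zero.symm⟩
  · intro v hv
    exact Or.inr (Or.inr (Or.inl hv))
  · rintro v (hv | ⟨q, hq, rfl⟩ | hv)
    · obtain ⟨z, h1, h2⟩ := X.hist_core hD' (by omega) v hv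
      exact ⟨z, h1, X.core_mono h2 (by omega)⟩
    · exact ⟨_, dl_refl _ _, Or.inr ⟨k, q, by omega, hkm, by omega, by omega, dl_refl _ _⟩⟩
    · refine ⟨v, dl_refl _ _, ?_⟩
      rcases hv with hv | ⟨t, h1, h2, rfl⟩
      · exact Or.inl ⟨k + 1, by omega, le_rfl, hv⟩
      · exact Or.inr ⟨k, X.a (k + 1), by omega, hkm, by omega, han, dl_mono (hla.dist t h2) h2⟩
  · rintro v ((hv | ⟨q, hq, rfl⟩ | hv) | hv) z hz hvz
    · exact pr.sep z hz v hv (dl_symm hvz)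
    · rcases hz with hz | ⟨h1, h2, t, ht, rfl⟩
      · have hlow : Low G p n 2 z := ⟨q, by omega, dl_symm hvz⟩
        obtain ⟨j1, h1, h2, h3⟩ := pr.low2 z hz hlow
        obtain ⟨j2, h4, h5, h6⟩ := pr.low8 z hz (low_mono hlow (by omega))
        have h7 := h6 (k + 1) (by omega) (by omega)
        have h8 := X.geo.geod q j1 _ (by omega) h1 (dl_trans hvz h2)
        have h9 := X.geo.geod q j2 _ (by omega) h4 (dl_trans hvz h5)
        omega
      · have := X.geo.geod (X.b k) q _ hbn (by omega)
          (dl_symm (dl_trans hvz ((X.bleg k h1 h2).dist t ht)))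
        omega
    · exact hno v hv z hz hvz
    · exact X.far_bleg hD (by omega) v hv z hz hvz
  · rintro v (hv | ⟨q, hq, rfl⟩ | hv) hlow
    · exact X.hist_low2 hD' hk' hkm v hv hlow
    · exact ⟨q, by omega, dl_refl _ _, by omega⟩
    · exact ⟨_, han, hX8 v hv (low_mono hlow (by omega)), by omega⟩
  · rintro v (hv | ⟨q, hq, rfl⟩ | hv) hlow
    · obtain ⟨j, h1, h2, h3⟩ := X.hist_low8 hD' v hv hlow
      exact ⟨j, h1, h2, fun i hi him => h3 i (by omega) him⟩
    · refine ⟨q, by omega, dl_refl _ _, fun i hi him => ?_⟩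
      have := X.bafar (k := k') (l := i) (by omega) him
      have := haa i hi him
      omega
    · exact ⟨_, han, hX8 v hv (low_mono hlow (by omega)), haa⟩

theorem step {k : ℕ} {D : Set V} (hk : 1 ≤ k) (hkm : k < X.m) (hD : X.Hist k D) :
    ∃ D, X.Hist (k + 1) D := by
  have hD0 := hD
  cases hD with
  | zero => omega
  | cons k k' D D' hD' hk' hm pr =>
  have hla := X.aleg (k + 1) (by omega) (by omega)
  have han := X.an (k + 1) (by omega) (by omega)
  by_cases hcon : ∃ x ∈ X.XX 0 (k + 1), ∃ y ∈ D ∪ X.BL k, DistLE G x y 2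
  · obtain ⟨x, hx, y, hy, hxy⟩ := hcon
    have hx7 : x ∈ X.XX 7 (k + 1) := by
      rcases hx with hx | ⟨t, h1, h2, rfl⟩
      · exact Or.inl hx
      · refine Or.inr ⟨t, ?_, h2, rfl⟩
        by_contra hlt
        have hya := dl_trans (dl_symm hxy) (hla.dist t h2)
        rcases hy with hy | ⟨h3, h4, t', ht', rfl⟩
        · obtain ⟨j, h3, h4, h5⟩ := pr.low8 y hy ⟨_, han, dl_mono hya (by omega)⟩
          have := h5 (k + 1) (by omega) (by omega)
          have := X.geo.geod _ _ _ han h3 (dl_trans (dl_symm hya) h4)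
          omega
        · have := X.ab k hk hkm
          have := X.geo.geod _ _ _ (X.bn k hkm) han
            (dl_trans (dl_symm ((X.bleg k h3 h4).dist t' ht')) hya)
          omega
    by_cases hcon2 : ∃ x ∈ X.XX 7 (k + 1), ∃ y ∈ D' ∪ X.BL k', DistLE G x y 4
    · obtain ⟨x', hx', y', hy', hxy'⟩ := hcon2
      cases hD' with
      | zero =>
        rcases hy' with hy' | ⟨h3, _⟩
        · rw [show y' = p 0 from hy'] at hxy'
          have := X.XX_lev (by omega) (by omega) (by omega) hx' ⟨0, by omega, hxy'⟩
          omega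
        · omega
      | cons k' k'' D' D'' hD'' hk'' hm' pr' =>
        exact X.merge (g := 3) (by omega) (by omega) hkm hD'' hk'' pr' (by omega) hx' hy' hxy'
          (X.far_X hD'' (by omega) (by omega) 7)
    · push Not at hcon2
      refine X.merge (g := 1) hk le_rfl hkm hD' hk' pr (by omega) hx7 hy hxy ?_
      intro u hu z hz huz
      exact hcon2 u hu z hz (dl_mono huz (by omega))
  · push Not at hcon
    exact X.append hk' hkm hD' hD0 pr hcon

theorem base : ∃ D, X.Hist 1 D := by
  refine ⟨{v | HC G p n (X.c 1) v}, Hist.cons 1 0 _ _ Hist.zero (by omega) X.m1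
    ⟨?_, fun v hv => hv, ?_, ?_, ?_, ?_⟩⟩
  · obtain ⟨s, hs, hc⟩ := X.hS
    have hC : ∀ z, HC G p n (X.c 1) z → Rea G {v | HC G p n (X.c 1) v} (X.c 1) z := by
      intro z hz
      obtain ⟨w, hw⟩ := hz
      classical
      refine ⟨w, fun q hq => ⟨w.takeUntil q hq, fun r hr => ?_⟩⟩
      exact hw r (w.support_takeUntil_subset_support hq hr)
    exact ⟨s, hs, hc, fun v hv => rea_trans (rea_symm (hC s hc)) (hC v hv)⟩
  · intro v hv
    exact ⟨v, dl_refl _ _, Or.inl ⟨1, le_rfl, le_rfl, hv⟩⟩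
  · rintro v (hv | hv) z hz hvz
    · rcases hz with hz | ⟨h, _⟩
      · rw [show z = p 0 from hz] at hvz
        have := high_lev hv ⟨0, by omega, hvz⟩
        omega
      · omega
    · exact X.far_bleg Hist.zero (by omega) v hv z hz hvz
  · intro v hv hlow
    have := high_lev hv hlow
    omega
  · intro v hv hlow
    have := high_lev hv hlow
    omega

theorem all {k : ℕ} (hk : 1 ≤ k) (hkm : k ≤ X.m) : ∃ D, X.Hist k D := by
  induction k, hk using Nat.le_induction with
  | base => exact X.base
  | succ k hk ih =>
    obtain ⟨D, hD⟩ := ih (by omega)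
    exact X.step hk (by omega) hD

end CD

theorem rea_path {A : Set V} {s t : V} (h : Rea G A s t) (hs : s ∈ S) (ht : t ∈ T) :
    ∃ P, IsSTPath G S T P ∧ P ⊆ A := by
  classical
  obtain ⟨w, hw⟩ := h
  refine ⟨{x | x ∈ w.bypass.support}, ⟨s, t, w.bypass, w.bypass_isPath, hs, ht, rfl⟩, ?_⟩
  intro z hz
  exact hw z (w.support_bypass_subset_support hz)

theorem two_paths {A B : Set V} (hA : ∃ P, IsSTPath G S T P ∧ P ⊆ A)
    (hB : ∃ P, IsSTPath G S T P ∧ P ⊆ B) (h : ∀ x ∈ A, ∀ y ∈ B, ¬ DistLE G x y 2) :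
    HasKPaths G S T 2 3 := by
  obtain ⟨P, hP, hPA⟩ := hA
  obtain ⟨Q, hQ, hQB⟩ := hB
  refine ⟨![P, Q], ?_, ?_⟩
  · intro i
    fin_cases i
    · exact hP
    · exact hQ
  · intro i j hij x y hx hy w
    by_contra hlt
    have hd : DistLE G x y 2 := ⟨w, by omega⟩
    fin_cases i <;> fin_cases j
    · exact hij rfl
    · exact h x (hPA hx) y (hQB hy) hd
    · exact h y (hPA hy) x (hQB hx) (dl_symm hd)
    · exact hij rfl

theorem CD.final (X : CD G S T p n) : HasKPaths G S T 2 3 := by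
  obtain ⟨D, hD⟩ := X.all X.m1 le_rfl
  have := X.m1
  generalize hm : X.m = m at hD
  cases hD with
  | zero => omega
  | cons m k' D D' hD' hk' hm' pr =>
    have hbn := X.bn k' (by omega)
    refine two_paths (A := D) (B := (D' ∪ X.BL k') ∪ {v | ∃ q, X.b k' ≤ q ∧ q ≤ n ∧ v = p q})
      ?_ ?_ ?_
    · obtain ⟨s, hs, hsD, hc⟩ := pr.conn
      obtain ⟨t, ht, htc⟩ := X.hT
      rw [hm] at htc
      exact rea_path (hc t (pr.comp t htc)) hs ht
    · obtain ⟨s, hs, hsD, hc⟩ := X.hist_conn hD'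
      refine rea_path (rea_trans (rea_mono (hc _ (X.hist_end hD' (by omega)))
        fun q hq => Or.inl hq) ?_) hs X.pT
      exact rea_seq p _ n hbn (fun t _ h => X.geo.adj t h)
        fun t h1 h2 => Or.inr ⟨t, h1, h2, rfl⟩
    · rintro x hx y (hy | ⟨q, h1, h2, rfl⟩) hxy
      · exact pr.sep x (Or.inl hx) y hy hxy
      · obtain ⟨j, h3, h4, h5⟩ := pr.low2 x hx ⟨q, h2, hxy⟩
        have := X.geo.geod q j _ h2 h3 (dl_trans (dl_symm hxy) h4)
        omega

end CM

namespace CM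

open SimpleGraph

variable {V : Type} {G : SimpleGraph V} {S T : Set V} {p : ℕ → V} {n : ℕ}

def LeftX (G : SimpleGraph V) (S : Set V) (p : ℕ → V) (n i : ℕ) (x : V) : Prop :=
  (∃ s ∈ S, HC G p n x s) ∨ ∃ j, Att G p n x j ∧ j + 149 ≤ i

def RightX (G : SimpleGraph V) (T : Set V) (p : ℕ → V) (n i : ℕ) (x : V) : Prop :=
  (∃ t ∈ T, HC G p n x t) ∨ ∃ j, Att G p n x j ∧ i + 149 ≤ j

def LState (G : SimpleGraph V) (S : Set V) (p : ℕ → V) (n i : ℕ) (x : V) : Prop :=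
  (∃ j, j ≤ n ∧ DistLE G x (p j) 12 ∧ j < i) ∨ (¬ Low G p n 12 x ∧ LeftX G S p n i x)

theorem far_idx (hg : Geo G p n) {i j : ℕ} {z : V} (hi : i ≤ n) (hj : j ≤ n)
    (hz : DistLE G z (p j) 12) (hf : ¬ DistLE G (p i) z 161) : j + 150 ≤ i ∨ i + 150 ≤ j := by
  by_contra hcon
  apply hf
  rcases le_total i j with h | h
  · exact dl_mono (dl_trans (dl_seq p i j h fun t _ h2 => hg.adj t (by omega)) (dl_symm hz))
      (by omega)
  · exact dl_mono (dl_trans (dl_symm (dl_seq p j i h fun t _ h2 => hg.adj t (by omega)))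
      (dl_symm hz)) (by omega)

theorem lstate_adj (hg : Geo G p n) {i : ℕ} (hi : i ≤ n)
    (hno : ∀ x, ¬ Low G p n 12 x → LeftX G S p n i x → ¬ RightX G T p n i x)
    {x y : V} (hxy : G.Adj x y) (hfx : ¬ DistLE G (p i) x 161) (hfy : ¬ DistLE G (p i) y 161)
    (hx : LState G S p n i x) : LState G S p n i y := by
  rcases hx with ⟨j, hj, hd, hji⟩ | ⟨hh, hx⟩
  · have h1 := far_idx hg hi hj hd hfx
    by_cases hy : Low G p n 12 y
    · obtain ⟨j', hj', hd'⟩ := hy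
      have h2 := far_idx hg hi hj' hd' hfy
      have h3 := hg.geod j' j _ hj' hj
        (dl_trans (dl_symm hd') (dl_trans (dl_symm (dl_adj hxy)) hd))
      exact Or.inl ⟨j', hj', hd', by omega⟩
    · refine Or.inr ⟨hy, Or.inr ⟨j, ⟨hj, y, rea_refl hy, ?_⟩, by omega⟩⟩
      exact dl_mono (dl_trans (dl_symm (dl_adj hxy)) hd) (by omega)
  · by_cases hy : Low G p n 12 y
    · obtain ⟨j', hj', hd'⟩ := hy
      have h2 := far_idx hg hi hj' hd' hfy
      refine Or.inl ⟨j', hj', hd', ?_⟩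
      by_contra hlt
      refine hno x hh hx (Or.inr ⟨j', ⟨hj', x, rea_refl hh, ?_⟩, by omega⟩)
      exact dl_mono (dl_trans (dl_adj hxy) hd') (by omega)
    · have hc : HC G p n y x := rea_adj hxy.symm hy hh
      refine Or.inr ⟨hy, ?_⟩
      rcases hx with ⟨s, hs, h⟩ | ⟨j, ⟨hj, v, hv, hd⟩, hji⟩
      · exact Or.inl ⟨s, hs, rea_trans hc h⟩
      · exact Or.inr ⟨j, ⟨hj, v, rea_trans hc hv, hd⟩, hji⟩

theorem lstate_walk (hg : Geo G p n) {i : ℕ} (hi : i ≤ n)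
    (hno : ∀ x, ¬ Low G p n 12 x → LeftX G S p n i x → ¬ RightX G T p n i x)
    {x y : V} (w : G.Walk x y) (hf : ∀ z ∈ w.support, ¬ DistLE G (p i) z 161)
    (hx : LState G S p n i x) : LState G S p n i y := by
  induction w with
  | nil => exact hx
  | @cons x z y h w ih =>
    refine ih (fun q hq => hf q (by simp [hq])) ?_
    exact lstate_adj hg hi hno h (hf x (by simp)) (hf z (by simp)) hx

theorem deep_exists (hg : Geo G p n)
    (hpS : ∀ s ∈ S, ∀ j k, j ≤ n → DistLE G s (p j) k → j ≤ k)
    (hpT : ∀ t ∈ T, ∀ j k, j ≤ n → DistLE G t (p j) k → n ≤ j + k)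
    {i : ℕ} (hi : i ≤ n) {u v : V} (w : G.Walk u v) (hu : u ∈ S) (hv : v ∈ T)
    (hf : ∀ z ∈ w.support, ¬ DistLE G (p i) z 161) :
    ∃ x, ¬ Low G p n 12 x ∧ LeftX G S p n i x ∧ RightX G T p n i x := by
  by_contra hcon
  push Not at hcon
  have h0 : LState G S p n i u := by
    by_cases hl : Low G p n 12 u
    · obtain ⟨j, hj, hd⟩ := hl
      have := far_idx hg hi hj hd (hf u w.start_mem_support)
      have := hpS u hu j 12 hj hd
      exact Or.inl ⟨j, hj, hd, by omega⟩
    · exact Or.inr ⟨hl, Or.inl ⟨u, hu, rea_refl hl⟩⟩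
  rcases lstate_walk hg hi hcon w hf h0 with ⟨j, hj, hd, hji⟩ | ⟨hh, hx⟩
  · have := far_idx hg hi hj hd (hf v w.end_mem_support)
    have := hpT v hv j 12 hj hd
    omega
  · exact hcon v hh hx (Or.inl ⟨v, hv, rea_refl hh⟩)

theorem exists_A (G : SimpleGraph V) (S : Set V) (p : ℕ → V) (n : ℕ) (u : V) :
    ∃ z : ℤ, ((∃ s ∈ S, HC G p n u s) → z = -149) ∧ (∀ j, Att G p n u j → z ≤ j) ∧
      (-149 < z → z ≤ n → ∃ j : ℕ, z = j ∧ Att G p n u j) ∧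
      (z ≤ -149 → ∃ s ∈ S, HC G p n u s) := by
  classical
  by_cases h : ∃ s ∈ S, HC G p n u s
  · exact ⟨-149, fun _ => rfl, fun j _ => by omega, fun h => by omega, fun _ => h⟩
  · by_cases h' : ∃ j, Att G p n u j
    · refine ⟨(Nat.find h' : ℕ), fun q => absurd q h, fun j hj => ?_, fun _ _ =>
        ⟨_, rfl, Nat.find_spec h'⟩, fun q => by omega⟩
      exact_mod_cast Nat.find_min' h' hj
    · exact ⟨n + 1, fun q => absurd q h, fun j hj => absurd ⟨j, hj⟩ h', fun _ q => by omega,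
        fun q => by omega⟩

theorem exists_B (G : SimpleGraph V) (T : Set V) (p : ℕ → V) (n : ℕ) (u : V) :
    ∃ z : ℤ, z ≤ n + 149 ∧ ((∃ t ∈ T, HC G p n u t) → z = n + 149) ∧
      (∀ j, Att G p n u j → j ≤ z) ∧
      (0 ≤ z → z ≤ n → ∃ j : ℕ, z = j ∧ Att G p n u j) ∧
      (n < z → ∃ t ∈ T, HC G p n u t) := by
  classical
  by_cases h : ∃ t ∈ T, HC G p n u t
  · exact ⟨n + 149, le_rfl, fun _ => rfl, fun j hj => by have := hj.1; omega, fun _ h => by omega,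
      fun _ => h⟩
  · by_cases h' : ∃ j, Att G p n u j
    · obtain ⟨j0, hj0⟩ := h'
      have hsp : Att G p n u (Nat.findGreatest (Att G p n u) n) :=
        Nat.findGreatest_spec (P := Att G p n u) hj0.1 hj0
      have hle := hsp.1
      refine ⟨(Nat.findGreatest (Att G p n u) n : ℕ), by omega, fun q => absurd q h,
        fun j hj => ?_, fun _ _ => ⟨_, rfl, hsp⟩, fun q => by omega⟩
      exact_mod_cast Nat.le_findGreatest hj.1 hj
    · exact ⟨-1, by omega, fun q => absurd q h, fun j hj => absurd ⟨j, hj⟩ h', fun q => by omega,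
        fun q => by omega⟩

theorem build (hg : Geo G p n) (h0S : p 0 ∈ S) (hnT : p n ∈ T)
    (hdeep : ∀ i, i ≤ n → ∃ x, ¬ Low G p n 12 x ∧ LeftX G S p n i x ∧ RightX G T p n i x) :
    Nonempty (CD G S T p n) := by
  choose A hA1 hA2 hA3 hA4 using exists_A G S p n
  choose B hB0 hB1 hB2 hB3 hB4 using exists_B G T p n
  obtain ⟨m, c, hc1, hc2, hc3, hc4, hc5⟩ :=
    chain_exists (ι := {u // ¬ Low G p n 12 u}) (a := fun u => A u.1) (b := fun u => B u.1)
      (n := (n : ℤ)) (by omega) (fun u => hB0 u.1) (by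
        intro i h1 h2
        obtain ⟨i, rfl⟩ := Int.eq_ofNat_of_zero_le h1
        obtain ⟨x, hx, hl, hr⟩ := hdeep i (by omega)
        refine ⟨⟨x, hx⟩, ?_, ?_⟩
        · rcases hl with h | ⟨j, hj, hji⟩
          · have := hA1 x h
            simp only []
            omega
          · have := hA2 x j hj
            simp only []
            omega
        · rcases hr with h | ⟨j, hj, hji⟩
          · have := hB1 x h
            simp only []
            omega
          · have := hB2 x j hj
            simp only []
            omega)
  have hAt : ∀ k, k < m → ((A (c (k + 1)).1).toNat : ℤ) = A (c (k + 1)).1 ∧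
      Att G p n (c (k + 1)).1 (A (c (k + 1)).1).toNat := by
    intro k hk
    obtain ⟨h1, h2, h3, h4, h5⟩ := hc4 k hk
    obtain ⟨j, hj, hj'⟩ := hA3 (c (k + 1)).1 h4 (by omega)
    rw [hj]
    exact ⟨by simp, by simpa using hj'⟩
  have hBt : ∀ k, k < m → ((B (c k).1).toNat : ℤ) = B (c k).1 ∧
      Att G p n (c k).1 (B (c k).1).toNat := by
    intro k hk
    obtain ⟨h1, h2, h3, h4, h5⟩ := hc4 k hk
    obtain ⟨j, hj, hj'⟩ := hB3 (c k).1 (by omega) h1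
    rw [hj]
    exact ⟨by simp, by simpa using hj'⟩
  have hal : ∀ k, ∃ g, 2 ≤ k → k ≤ m + 1 →
      Leg G p n g (A (c k.pred).1).toNat (c k.pred).1 := by
    intro k
    by_cases hk : 2 ≤ k ∧ k ≤ m + 1
    · obtain ⟨q, rfl⟩ : ∃ q, k = q + 2 := ⟨k - 2, by omega⟩
      obtain ⟨g, hg⟩ := exists_leg (hAt q (by omega)).2
      exact ⟨g, fun _ _ => hg⟩
    · exact ⟨fun _ => p 0, fun h h' => absurd ⟨h, h'⟩ hk⟩
  have hbe : ∀ k, ∃ g, k < m → Leg G p n g (B (c k).1).toNat (c k).1 := by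
    intro k
    by_cases hk : k < m
    · obtain ⟨g, hg⟩ := exists_leg (hBt k hk).2
      exact ⟨g, fun _ => hg⟩
    · exact ⟨fun _ => p 0, fun h => absurd h hk⟩
  choose al hal using hal
  choose be hbe using hbe
  refine ⟨{ geo := hg
            m := m + 1
            c := fun k => (c k.pred).1
            a := fun k => (A (c k.pred).1).toNat
            b := fun k => Nat.casesOn k 0 (fun q => (B (c q).1).toNat)
            al := al
            be := fun k => be k.pred
            m1 := by omega
            pS := h0S
            pT := hnT
            high := fun k _ _ => (c k.pred).2
            hS := hA4 _ hc1
            hT := hB4 _ hc3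
            an := ?_
            bn := ?_
            aleg := hal
            bleg := ?_
            aatt := ?_
            batt := ?_
            b0 := rfl
            bb := ?_
            ab := ?_
            aa := ?_
            ba := ?_ }⟩
  · intro k h1 h2
    obtain ⟨q, rfl⟩ : ∃ q, k = q + 2 := ⟨k - 2, by omega⟩
    exact (hAt q (by omega)).2.1
  · rintro (_ | q) h1
    · exact Nat.zero_le _
    · exact (hBt q (by omega)).2.1
  · rintro (_ | q) h1 h2
    · omega
    · exact hbe q (by omega)
  · intro k j h1 h2 hj
    obtain ⟨q, rfl⟩ : ∃ q, k = q + 2 := ⟨k - 2, by omega⟩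
    have h3 := (hAt q (by omega)).1
    have h4 := hA2 (c (q + 1)).1 j hj
    change (A (c (q + 1)).1).toNat ≤ j
    omega
  · rintro (_ | q) j h1 h2 hj
    · omega
    · have h3 := (hBt q (by omega)).1
      have h4 := hB2 (c q).1 j hj
      change j ≤ (B (c q).1).toNat
      omega
  · rintro (_ | q) h1
    · change 0 + 149 ≤ (B (c 0).1).toNat
      omega
    · change (B (c q).1).toNat + 149 ≤ (B (c (q + 1)).1).toNat
      have := hc4 q (by omega)
      omega
  · rintro (_ | q) h1 h2
    · omega
    · change (A (c (q + 1)).1).toNat + 40 ≤ (B (c q).1).toNat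
      have := hc4 q (by omega)
      have := hAt q (by omega)
      omega
  · intro k h1 h2
    obtain ⟨q, rfl⟩ : ∃ q, k = q + 2 := ⟨k - 2, by omega⟩
    change (A (c (q + 1)).1).toNat + 40 ≤ (A (c (q + 2)).1).toNat
    have := hc5 q (by omega)
    have := hAt q (by omega)
    omega
  · rintro (_ | q) h1
    · change 0 + 69 ≤ (A (c 2).1).toNat
      have := hc5 0 (by omega)
      simp only [zero_add] at this
      omega
    · change (B (c q).1).toNat + 69 ≤ (A (c (q + 3)).1).toNat
      have := hc5 (q + 1) (by omega)
      have := hc4 q (by omega)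
      have e : q + 1 + 2 = q + 3 := rfl
      simp only [e] at *
      omega

theorem main161 (V : Type) (hV : Nonempty V) (G : SimpleGraph V) (S T : Set V) :
    HasKPaths G S T 2 3 ∨
      ∃ x : V, ∀ (u v : V) (w : G.Walk u v), w.IsPath → u ∈ S → v ∈ T →
        ∃ y ∈ w.support, DistLE G x y 161 := by
  classical
  by_cases hex : ∃ n, ∃ u ∈ S, ∃ v ∈ T, ∃ w : G.Walk u v, w.length = n
  swap
  · right
    obtain ⟨x⟩ := hV
    exact ⟨x, fun u v w _ hu hv => absurd ⟨_, u, hu, v, hv, w, rfl⟩ hex⟩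
  by_cases hno : ∃ x : V, ∀ (u v : V) (w : G.Walk u v), w.IsPath → u ∈ S → v ∈ T →
        ∃ y ∈ w.support, DistLE G x y 161
  · exact Or.inr hno
  left
  push Not at hno
  obtain ⟨u, hu, v, hv, w, hw⟩ := Nat.find_spec hex
  have hmin : ∀ s ∈ S, ∀ t ∈ T, ∀ k, DistLE G s t k → w.length ≤ k := by
    rintro s hs t ht k ⟨w', hw'⟩
    have := Nat.find_min' hex ⟨s, hs, t, ht, w', rfl⟩
    omega
  have hadj : ∀ i, i < w.length → G.Adj (w.getVert i) (w.getVert (i + 1)) :=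
    fun i hi => w.adj_getVert_succ hi
  have hL : ∀ i, i ≤ w.length → DistLE G u (w.getVert i) i := by
    intro i hi
    have := dl_seq w.getVert 0 i (by omega) fun t _ h => hadj t (by omega)
    simpa using this
  have hR : ∀ i, i ≤ w.length → DistLE G (w.getVert i) v (w.length - i) := by
    intro i hi
    have := dl_seq w.getVert i w.length hi fun t _ h => hadj t h
    simpa using this
  have hg : Geo G w.getVert w.length := by
    refine ⟨hadj, fun i j k hi hj h => ?_⟩
    have := hmin u hu v hv _ (dl_trans (dl_trans (hL j hj) (dl_symm h)) (hR i hi))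
    omega
  obtain ⟨X⟩ := build (S := S) (T := T) hg (by simpa using hu) (by simpa using hv) (by
    intro i hi
    obtain ⟨u', v', w', _, hu', hv', hf⟩ := hno (w.getVert i)
    refine deep_exists hg ?_ ?_ hi w' hu' hv' hf
    · intro s hs j k hj h
      have := hmin s hs v hv _ (dl_trans h (hR j hj))
      omega
    · intro t ht j k hj h
      have := hmin u hu t ht _ (dl_trans (hL j hj) (dl_symm h))
      omega)
  exact X.final

end CM

/-- Theorem 3.4: the `k = 2`, `d = 3` coarse Menger theorem with explicit constants:
for `c ≥ 7` and `ℓ ≥ 2c+5`, the bound `8ℓ + c + 2` works; in particular 161 suffices. -/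
theorem stmt_11 :
    (∀ c ℓ : ℕ, 7 ≤ c → 2 * c + 5 ≤ ℓ →
      ∀ (V : Type), Nonempty V → ∀ (G : SimpleGraph V) (S T : Set V),
        HasKPaths G S T 2 3 ∨
        ∃ x : V, ∀ (u v : V) (w : G.Walk u v), w.IsPath → u ∈ S → v ∈ T →
          ∃ y ∈ w.support, DistLE G x y (8 * ℓ + c + 2)) ∧
    (∀ (V : Type), Nonempty V → ∀ (G : SimpleGraph V) (S T : Set V),
      HasKPaths G S T 2 3 ∨
      ∃ x : V, ∀ (u v : V) (w : G.Walk u v), w.IsPath → u ∈ S → v ∈ T →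
        ∃ y ∈ w.support, DistLE G x y 161) := by
  refine ⟨?_, CM.main161⟩
  intro c ℓ hc hl V hV G S T
  rcases CM.main161 V hV G S T with h | ⟨x, hx⟩
  · exact Or.inl h
  · refine Or.inr ⟨x, fun u v w hw hu hv => ?_⟩
    obtain ⟨y, hy, hd⟩ := hx u v w hw hu hv
    exact ⟨y, hy, CM.dl_mono hd (by omega)⟩
end

section
/- For all integers k, d ≥ 1 there exists ℓ > 0 such that for every graph G and S,T ⊆ V(G), either there are 2 paths between S and T pairwise at distance at least d, or there is a set X ⊆ V(G) with |X| ≤ 1 such that every S–T path contains a vertex at distance at most ℓ from some member of X. (The coarse Menger conjecture holds for k = 2.) -/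
lemma cm_min (p : ℕ → Prop) (h : ∃ i, p i) : ∃ q, p q ∧ ∀ i < q, ¬ p i := by
  classical
  exact ⟨Nat.find h, Nat.find_spec h, fun i hi => Nat.find_min h hi⟩

lemma cm_argmax {ι : Type} (β : ι → ℕ) (N : ℕ) (hN : ∀ c, β c ≤ N) (p : ι → Prop)
    (h : ∃ c, p c) : ∃ c, p c ∧ ∀ c', p c' → β c' ≤ β c := by
  by_contra hcon
  push Not at hcon
  have key : ∀ k : ℕ, ∃ c, p c ∧ k ≤ β c := by
    intro k
    induction k with
    | zero => obtain ⟨c, hc⟩ := h; exact ⟨c, hc, Nat.zero_le _⟩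
    | succ k ih =>
      obtain ⟨c, hc, hk⟩ := ih
      obtain ⟨c', hc', hlt⟩ := hcon c hc
      exact ⟨c', hc', by omega⟩
  obtain ⟨c, _, hc⟩ := key (N + 1)
  have := hN c
  omega

/-- The greedy chain of intervals. -/
lemma cm_greedy {ι : Type} (α β : ι → ℕ) (M n L K : ℕ) (hL : 0 < L) (hM : 0 < M) (hKL : K ≤ L)
    (hβ : ∀ c, β c ≤ n + M ∨ β c = n + 2 * M) (hα : ∀ c, α c = 0 ∨ M ≤ α c)
    (cover : ∀ x, M ≤ x → x ≤ n + M → ∃ c, α c + L ≤ x ∧ x + L ≤ β c) :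
    ∃ (C : ℕ → ι) (m : ℕ), α (C 0) = 0 ∧ M + L ≤ β (C 0) ∧ β (C m) = n + 2 * M ∧
      (∀ j < m, β (C j) ≤ n + M) ∧ (∀ j < m, α (C (j+1)) + K ≤ β (C j)) ∧
      (∀ j < m, β (C j) + L ≤ β (C (j+1))) ∧
      (∀ j, j + 2 ≤ m → β (C j) < α (C (j+2)) + K) ∧
      (∀ j, 0 < j → j ≤ m → M ≤ α (C j)) := by
  have hN : ∀ c, β c ≤ n + 2 * M := fun c => by rcases hβ c with h | h <;> omega
  obtain ⟨c0, hc0, hc0max⟩ := cm_argmax β _ hN (fun c => α c = 0) (by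
    obtain ⟨c, h1, h2⟩ := cover M le_rfl (by omega)
    exact ⟨c, by rcases hα c with h | h <;> omega⟩)
  have hc0L : M + L ≤ β c0 := by
    obtain ⟨c, h1, h2⟩ := cover M le_rfl (by omega)
    have := hc0max c (by rcases hα c with h | h <;> omega)
    omega
  have hnext : ∀ c, ∃ c', M ≤ β c → β c ≤ n + M → (α c' + K ≤ β c ∧ β c + L ≤ β c' ∧
      ∀ c'', α c'' + K ≤ β c → β c'' ≤ β c') := by
    intro c
    by_cases h : M ≤ β c ∧ β c ≤ n + M
    · obtain ⟨c1, h1, h2⟩ := cover (β c) h.1 h.2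
      obtain ⟨c', h3, h4⟩ := cm_argmax β _ hN (fun c' => α c' + K ≤ β c) ⟨c1, by omega⟩
      exact ⟨c', fun _ _ => ⟨h3, le_trans h2 (h4 c1 (by omega)), h4⟩⟩
    · exact ⟨c, fun h1 h2 => absurd ⟨h1, h2⟩ h⟩
  choose nx hnx using hnext
  let C : ℕ → ι := fun j => Nat.rec c0 (fun _ c => nx c) j
  have hC0 : C 0 = c0 := rfl
  have hCs : ∀ j, C (j+1) = nx (C j) := fun j => rfl
  have hex : ∃ j, ¬ β (C j) ≤ n + M := by
    by_contra hcon
    push Not at hcon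
    have : ∀ j, M + j ≤ β (C j) := by
      intro j
      induction j with
      | zero => rw [hC0]; omega
      | succ j ih =>
        have := (hnx (C j) (by omega) (hcon j)).2.1
        rw [hCs]; omega
    have h1 := this (n + 2 * M + 1)
    have h2 := hN (C (n + 2 * M + 1))
    omega
  classical
  obtain ⟨m, hm, hmin⟩ : ∃ m, ¬ β (C m) ≤ n + M ∧ ∀ j < m, β (C j) ≤ n + M :=
    ⟨Nat.find hex, Nat.find_spec hex, fun j hj => by
      have := Nat.find_min hex hj; simpa using this⟩
  have hMβ : ∀ j ≤ m, M + L ≤ β (C j) := by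
    intro j
    induction j with
    | zero => intro _; rw [hC0]; exact hc0L
    | succ j ih =>
      intro hj
      have h1 := ih (by omega)
      have := (hnx (C j) (by omega) (hmin j (by omega))).2.1
      rw [hCs]; omega
  have hst : ∀ j < m, α (C (j+1)) + K ≤ β (C j) ∧ β (C j) + L ≤ β (C (j+1)) ∧
      ∀ c'', α c'' + K ≤ β (C j) → β c'' ≤ β (C (j+1)) := fun j hj =>
    hnx (C j) (by have := hMβ j hj.le; omega) (hmin j hj)
  have hmono : ∀ j ≤ m, β c0 + j ≤ β (C j) := by
    intro j
    induction j with
    | zero => intro _; rw [hC0]; omega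
    | succ j ih =>
      intro hj
      have h1 := ih (by omega)
      have := (hst j (by omega)).2.1
      omega
  refine ⟨C, m, hc0, hc0L, ?_, hmin, fun j hj => (hst j hj).1, fun j hj => (hst j hj).2.1, ?_, ?_⟩
  · rcases hβ (C m) with h | h
    · exact absurd h hm
    · exact h
  · intro j hj
    by_contra hcon
    have h1 := (hst j (by omega)).2.2 (C (j+2)) (by omega)
    have h2 := (hst (j+1) (by omega)).2.1
    rw [show j + 1 + 1 = j + 2 from rfl] at h2
    omega
  · intro j hj hjm
    rcases hα (C j) with h | h
    · have h1 := hc0max _ h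
      have := hmono j hjm
      omega
    · exact h

/-- The thinned chain. -/
lemma cm_chain {ι : Type} (α β : ι → ℕ) (Cl : ι → ι → Prop) (M n L K g R : ℕ)
    (hM : 0 < M) (hKL : K + R + g < L)
    (hβ : ∀ c, β c ≤ n + M ∨ β c = n + 2 * M) (hα : ∀ c, α c = 0 ∨ M ≤ α c)
    (cover : ∀ x, M ≤ x → x ≤ n + M → ∃ c, α c + L ≤ x ∧ x + L ≤ β c)
    (hCl : ∀ c c', Cl c c' → β c < β c' → α c' ≤ β c + R) :
    ∃ (c : ℕ → ι) (q : ℕ) (long : ℕ → Prop), α (c 0) = 0 ∧ M + L ≤ β (c 0) ∧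
      β (c q) = n + 2 * M ∧
      (∀ i < q, β (c i) ≤ n + M) ∧
      (∀ i, 0 < i → i ≤ q → M ≤ α (c i)) ∧
      (∀ x y, x < y → y ≤ q → β (c x) + L ≤ β (c y)) ∧
      (∀ x y, x + 2 ≤ y → y ≤ q → β (c x) < α (c y) + K) ∧
      (∀ x y, x + 2 ≤ y → y ≤ q → ¬ Cl (c x) (c y)) ∧
      (∀ i < q, ¬ long i → α (c (i+1)) + K ≤ β (c i) ∧
        (i + 2 ≤ q → α (c (i+1)) + g ≤ α (c (i+2)))) ∧
      (∀ i < q, long i → (α (c (i+1)) + K ≤ β (c i) + g ∨ Cl (c i) (c (i+1))) ∧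
        β (c i) < α (c (i+1)) + K ∧ (i + 2 ≤ q → β (c i) + L < α (c (i+2)) + K)) := by
  obtain ⟨C, m, h0, h1, h2, h3, h4, h5, h6, h7⟩ :=
    cm_greedy α β M n L K (by omega) hM (by omega) hβ hα cover
  classical
  let W : ℕ → Prop := fun j => j + 2 ≤ m ∧
    (α (C (j+2)) < α (C (j+1)) + g ∨ Cl (C j) (C (j+2)))
  obtain ⟨κ, κ0, κs⟩ : ∃ κ : ℕ → ℕ, κ 0 = 0 ∧
      ∀ i, κ (i+1) = if W (κ i) then κ i + 2 else κ i + 1 :=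
    ⟨fun i => Nat.rec (motive := fun _ => ℕ) 0 (fun _ j => if W j then j + 2 else j + 1) i,
      rfl, fun i => rfl⟩
  have κlt : ∀ i, κ i + 1 ≤ κ (i+1) := by
    intro i; rw [κs]; split_ifs <;> omega
  have κge : ∀ i, i ≤ κ i := by
    intro i
    induction i with
    | zero => omega
    | succ i ih => have := κlt i; omega
  have κmono : ∀ x y, x ≤ y → κ x + (y - x) ≤ κ y := by
    intro x y hxy
    induction y, hxy using Nat.le_induction with
    | base => omega
    | succ y hy ih => have := κlt y; omega
  have hex : ∃ i, m ≤ κ i := ⟨m, κge m⟩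
  obtain ⟨q, hq, hqmin⟩ : ∃ q, m ≤ κ q ∧ ∀ i < q, κ i < m :=
    by simpa using cm_min (fun i => m ≤ κ i) hex
  have hqm : κ q = m := by
    rcases q with _ | q
    · omega
    · have h := hqmin q (by omega)
      have h' := κs q
      split_ifs at h' with hW
      · have := hW.1; omega
      · omega
  have κle : ∀ i ≤ q, κ i ≤ m := by
    intro i hi
    have := κmono i q hi
    omega
  -- monotonicity of β along C
  have βmono : ∀ x y, x ≤ y → y ≤ m → β (C x) ≤ β (C y) := by
    intro x y hxy
    induction y, hxy using Nat.le_induction with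
    | base => intro _; exact le_rfl
    | succ y hy ih =>
      intro hym
      have := ih (by omega)
      have := h5 y (by omega)
      omega
  have βmono' : ∀ x y, x < y → y ≤ m → β (C x) + L ≤ β (C y) := by
    intro x y hxy hy
    have := h5 x (by omega)
    have := βmono (x+1) y hxy hy
    omega
  have hab : ∀ x y, x + 2 ≤ y → y ≤ m → β (C x) < α (C y) + K := by
    intro x y hxy hy
    obtain ⟨z, rfl⟩ : ∃ z, y = z + 2 := ⟨y - 2, by omega⟩
    have := h6 z hy
    have := βmono x z (by omega) (by omega)
    omega
  have hfar : ∀ x y, x + 3 ≤ y → y ≤ m → β (C x) + L < α (C y) + K := by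
    intro x y hxy hy
    have := hab (x+1) y (by omega) hy
    have := h5 x (by omega)
    omega
  have hfarCl : ∀ x y, x < y → y ≤ m → β (C x) + L < α (C y) + K → ¬ Cl (C x) (C y) := by
    intro x y hxy hy h hcl
    have := hCl _ _ hcl (by have := βmono' x y hxy hy; omega)
    omega
  refine ⟨fun i => C (κ i), q, fun i => W (κ i), by simpa [κ0] using h0,
    by simpa [κ0] using h1, by simpa [hqm] using h2,
    fun i hi => h3 _ (hqmin i hi), ?_, ?_, ?_, ?_, ?_, ?_⟩
  · intro i hi hiq
    exact h7 _ (by have := κge i; omega) (κle i hiq)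
  · intro x y hxy hy
    exact βmono' _ _ (by have := κmono x y hxy.le; omega) (κle y hy)
  · intro x y hxy hy
    exact hab _ _ (by have := κmono x y (by omega); omega) (κle y hy)
  · intro x y hxy hy
    have hym := κle y hy
    have hk := κmono x y (by omega)
    by_cases h : κ x + 3 ≤ κ y
    · exact hfarCl _ _ (by omega) hym (hfar _ _ h hym)
    · have hy2 : κ y = κ x + 2 := by omega
      have hW : ¬ W (κ x) := by
        intro hW
        have e := κs x
        rw [if_pos hW] at e
        have := κmono (x+1) y (by omega)
        omega
      have : ¬ Cl (C (κ x)) (C (κ x + 2)) := fun hcl => hW ⟨by omega, Or.inr hcl⟩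
      simpa [hy2] using this
  · intro i hi hW
    have e := κs i
    rw [if_neg hW] at e
    refine ⟨by simpa [e] using h4 (κ i) (hqmin i hi), fun hi2 => ?_⟩
    have hm2 := κle (i+2) hi2
    have e2 := κlt (i+1)
    rw [show i + 1 + 1 = i + 2 from rfl] at e2
    by_cases h : κ i + 3 ≤ κ (i+2)
    · have := hfar _ _ h hm2
      have := h4 (κ i) (hqmin i hi)
      simp only [e]
      omega
    · have hy2 : κ (i+2) = κ i + 2 := by omega
      simp only [e, hy2]
      by_contra hcon
      exact hW ⟨by omega, Or.inl (by omega)⟩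
  · intro i hi hW
    have e := κs i
    rw [if_pos hW] at e
    have hm1 := κle (i+1) hi
    refine ⟨?_, ?_, fun hi2 => ?_⟩
    · simp only [e]
      rcases hW.2 with h | h
      · left
        have := h4 (κ i) (hqmin i hi)
        omega
      · exact Or.inr h
    · exact hab _ _ (by omega) hm1
    · have := κlt (i+1)
      exact hfar _ _ (by rw [show i + 1 + 1 = i + 2 from rfl] at this; omega) (κle _ hi2)

section cm_basic
variable {V : Type} {G : SimpleGraph V}

lemma DistLE.cm_refl (x : V) (k : ℕ) : DistLE G x x k := ⟨SimpleGraph.Walk.nil, by simp⟩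

lemma DistLE.cm_symm {x y : V} {k : ℕ} (h : DistLE G x y k) : DistLE G y x k := by
  obtain ⟨w, hw⟩ := h
  exact ⟨w.reverse, by simpa using hw⟩

lemma DistLE.cm_mono {x y : V} {k l : ℕ} (h : DistLE G x y k) (hl : k ≤ l) : DistLE G x y l := by
  obtain ⟨w, hw⟩ := h
  exact ⟨w, hw.trans hl⟩

lemma DistLE.cm_trans {x y z : V} {k l : ℕ} (h : DistLE G x y k) (h' : DistLE G y z l) :
    DistLE G x z (k + l) := by
  obtain ⟨w, hw⟩ := h
  obtain ⟨w', hw'⟩ := h'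
  exact ⟨w.append w', by rw [SimpleGraph.Walk.length_append]; omega⟩

lemma DistLE.cm_adj {x y : V} (h : G.Adj x y) : DistLE G x y 1 :=
  ⟨SimpleGraph.Walk.cons h SimpleGraph.Walk.nil, by simp⟩

lemma cm_walk_split {x y z : V} (w : G.Walk x y) (hz : z ∈ w.support) :
    ∃ a b, a + b = w.length ∧ DistLE G x z a ∧ DistLE G z y b := by
  classical
  refine ⟨(w.takeUntil z hz).length, (w.dropUntil z hz).length, ?_, ⟨_, le_rfl⟩, ⟨_, le_rfl⟩⟩
  rw [← SimpleGraph.Walk.length_append, SimpleGraph.Walk.take_spec]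

/-- `u` and `v` are joined by a walk inside `A`. -/
def CmConn (G : SimpleGraph V) (A : Set V) (u v : V) : Prop :=
  ∃ w : G.Walk u v, ∀ x ∈ w.support, x ∈ A

lemma CmConn.cm_refl {A : Set V} {u : V} (h : u ∈ A) : CmConn G A u u :=
  ⟨SimpleGraph.Walk.nil, by simpa using h⟩

lemma CmConn.cm_symm {A : Set V} {u v : V} (h : CmConn G A u v) : CmConn G A v u := by
  obtain ⟨w, hw⟩ := h
  exact ⟨w.reverse, by simpa using hw⟩

lemma CmConn.cm_trans {A : Set V} {u v z : V} (h : CmConn G A u v) (h' : CmConn G A v z) :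
    CmConn G A u z := by
  obtain ⟨w, hw⟩ := h
  obtain ⟨w', hw'⟩ := h'
  refine ⟨w.append w', fun x hx => ?_⟩
  rw [SimpleGraph.Walk.mem_support_append_iff] at hx
  exact hx.elim (hw x) (hw' x)

lemma CmConn.cm_mono {A B : Set V} {u v : V} (h : CmConn G A u v) (hAB : A ⊆ B) :
    CmConn G B u v := by
  obtain ⟨w, hw⟩ := h
  exact ⟨w, fun x hx => hAB (hw x hx)⟩

lemma CmConn.cm_left {A : Set V} {u v : V} (h : CmConn G A u v) : u ∈ A := by
  obtain ⟨w, hw⟩ := h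
  exact hw u w.start_mem_support

lemma CmConn.cm_right {A : Set V} {u v : V} (h : CmConn G A u v) : v ∈ A := by
  obtain ⟨w, hw⟩ := h
  exact hw v w.end_mem_support

lemma CmConn.cm_adj {A : Set V} {u v : V} (h : G.Adj u v) (hu : u ∈ A) (hv : v ∈ A) :
    CmConn G A u v :=
  ⟨SimpleGraph.Walk.cons h SimpleGraph.Walk.nil, by simp [hu, hv]⟩

/-- Every two vertices of `A` are joined inside `A`. -/
def CmConnSet (G : SimpleGraph V) (A : Set V) : Prop :=
  ∀ u ∈ A, ∀ v ∈ A, CmConn G A u v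

lemma CmConnSet.cm_union {A B : Set V} (hA : CmConnSet G A) (hB : CmConnSet G B)
    (h : (A ∩ B).Nonempty) : CmConnSet G (A ∪ B) := by
  obtain ⟨z, hzA, hzB⟩ := h
  have key : ∀ u ∈ A ∪ B, CmConn G (A ∪ B) u z := by
    rintro u (hu | hu)
    · exact (hA u hu z hzA).cm_mono Set.subset_union_left
    · exact (hB u hu z hzB).cm_mono Set.subset_union_right
  exact fun u hu v hv => (key u hu).cm_trans (key v hv).cm_symm

lemma cm_support_connSet {x y : V} (w : G.Walk x y) : CmConnSet G {z | z ∈ w.support} := by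
  classical
  have key : ∀ u ∈ {z | z ∈ w.support}, CmConn G {z | z ∈ w.support} x u := fun u hu =>
    ⟨w.takeUntil u hu, fun z hz => w.support_takeUntil_subset_support hu hz⟩
  exact fun u hu v hv => (key u hu).cm_symm.cm_trans (key v hv)

/-- A chain of connected sets, consecutive ones meeting. -/
lemma cm_chain_conn (Y : ℕ → Set V) (m : ℕ) (hY : ∀ k ≤ m, CmConnSet G (Y k))
    (ht : ∀ k < m, (Y k ∩ Y (k+1)).Nonempty) (Z : Set V) (hZ : ∀ k ≤ m, Y k ⊆ Z)
    (u : V) (hu : u ∈ Y 0) : ∀ k ≤ m, ∀ v ∈ Y k, CmConn G Z u v := by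
  intro k
  induction k with
  | zero => intro hk v hv; exact (hY 0 hk u hu v hv).cm_mono (hZ 0 hk)
  | succ k ih =>
    intro hk v hv
    obtain ⟨z, hz1, hz2⟩ := ht k (by omega)
    exact (ih (by omega) z hz1).cm_trans ((hY (k+1) hk z hz2 v hv).cm_mono (hZ (k+1) hk))

lemma cm_two_paths (S T : Set V) (d : ℕ) (A B : Set V)
    (hA : ∃ u ∈ S, ∃ v ∈ T, CmConn G A u v) (hB : ∃ u ∈ S, ∃ v ∈ T, CmConn G B u v)
    (hAB : ∀ a ∈ A, ∀ b ∈ B, ¬ DistLE G a b d) : HasKPaths G S T 2 d := by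
  classical
  obtain ⟨u, hu, v, hv, w, hw⟩ := hA
  obtain ⟨u', hu', v', hv', w', hw'⟩ := hB
  have key : ∀ x ∈ w.bypass.support, ∀ y ∈ w'.bypass.support, ¬ DistLE G x y d :=
    fun x hx y hy => hAB x (hw x (w.support_bypass_subset_support hx)) y
      (hw' y (w'.support_bypass_subset_support hy))
  refine ⟨![{x | x ∈ w.bypass.support}, {x | x ∈ w'.bypass.support}], ?_, ?_⟩
  · intro i
    fin_cases i
    · exact ⟨u, v, w.bypass, w.bypass_isPath, hu, hv, rfl⟩
    · exact ⟨u', v', w'.bypass, w'.bypass_isPath, hu', hv', rfl⟩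
  · intro i j hij
    fin_cases i <;> fin_cases j
    · exact absurd rfl hij
    · intro x y hx hy z
      by_contra hcon
      exact key x hx y hy ⟨z, by omega⟩
    · intro x y hx hy z
      by_contra hcon
      exact key y hy x hx ⟨z.reverse, by rw [SimpleGraph.Walk.length_reverse]; omega⟩
    · exact absurd rfl hij

lemma cm_assemble (S T : Set V) (d : ℕ) (U R : ℕ → Set V) (m : ℕ)
    (hU : ∀ k ≤ m, CmConnSet G (U k)) (hR : ∀ k ≤ m, CmConnSet G (R k))
    (hUU : ∀ k k', k < k' → k' ≤ m → ∀ u ∈ U k, ∀ v ∈ U k', ¬ DistLE G u v d)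
    (hRR : ∀ k k', k < k' → k' ≤ m → ∀ u ∈ R k, ∀ v ∈ R k', ¬ DistLE G u v d)
    (hUR : ∀ k k', k ≤ m → k' ≤ m → k' ≠ k + 1 → k ≠ k' + 1 →
      ∀ u ∈ U k, ∀ v ∈ R k', ¬ DistLE G u v d)
    (t1 : ∀ k < m, (U k ∩ R (k+1)).Nonempty) (t2 : ∀ k < m, (R k ∩ U (k+1)).Nonempty)
    (sU : (U 0 ∩ S).Nonempty) (sR : (R 0 ∩ S).Nonempty)
    (tU : (U m ∩ T).Nonempty) (tR : (R m ∩ T).Nonempty) : HasKPaths G S T 2 d := by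
  let Y : ℕ → ℕ → Set V := fun c k => if k % 2 = c then U k else R k
  have conn : ∀ c, c < 2 → ∃ u ∈ S, ∃ v ∈ T, CmConn G {x | ∃ k ≤ m, x ∈ Y c k} u v := by
    intro c hc
    have h0 : (Y c 0 ∩ S).Nonempty := by
      by_cases h : 0 % 2 = c
      · simpa only [Y, if_pos h] using sU
      · simpa only [Y, if_neg h] using sR
    have h1 : (Y c m ∩ T).Nonempty := by
      by_cases h : m % 2 = c
      · simpa only [Y, if_pos h] using tU
      · simpa only [Y, if_neg h] using tR
    obtain ⟨u, hu, huS⟩ := h0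
    obtain ⟨v, hv, hvT⟩ := h1
    refine ⟨u, huS, v, hvT, cm_chain_conn (Y c) m ?_ ?_ _ ?_ u hu m le_rfl v hv⟩
    · intro k hk
      by_cases h : k % 2 = c
      · simpa only [Y, if_pos h] using hU k hk
      · simpa only [Y, if_neg h] using hR k hk
    · intro k hk
      by_cases h : k % 2 = c
      · have h' : ¬ (k + 1) % 2 = c := by omega
        simpa only [Y, if_pos h, if_neg h'] using t1 k hk
      · have h' : (k + 1) % 2 = c := by omega
        simpa only [Y, if_neg h, if_pos h'] using t2 k hk
    · exact fun k hk x hx => ⟨k, hk, hx⟩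
  refine cm_two_paths S T d _ _ (conn 0 (by omega)) (conn 1 (by omega)) ?_
  rintro a ⟨k, hk, ha⟩ b ⟨k', hk', hb⟩ hd
  by_cases h : k % 2 = 0 <;> by_cases h' : k' % 2 = 1
  · simp only [Y, if_pos h] at ha
    simp only [Y, if_pos h'] at hb
    rcases lt_trichotomy k k' with hlt | heq | hlt
    · exact hUU k k' hlt hk' a ha b hb hd
    · omega
    · exact hUU k' k hlt hk b hb a ha hd.cm_symm
  · simp only [Y, if_pos h] at ha
    simp only [Y, if_neg h'] at hb
    exact hUR k k' hk hk' (by omega) (by omega) a ha b hb hd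
  · simp only [Y, if_neg h] at ha
    simp only [Y, if_pos h'] at hb
    exact hUR k' k hk' hk (by omega) (by omega) b hb a ha hd.cm_symm
  · simp only [Y, if_neg h] at ha
    simp only [Y, if_neg h'] at hb
    rcases lt_trichotomy k k' with hlt | heq | hlt
    · exact hRR k k' hlt hk' a ha b hb hd
    · omega
    · exact hRR k' k hlt hk b hb a ha hd.cm_symm

/-- A walk leaving the `O`-component of its start has an exit edge. -/
lemma cm_exit (O : Set V) {x y : V} (w : G.Walk x y) (hx : x ∈ O) (hn : ¬ CmConn G O x y) :
    ∃ v z, CmConn G O x v ∧ G.Adj v z ∧ z ∉ O ∧ z ∈ w.support := by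
  induction w with
  | nil => exact absurd (CmConn.cm_refl hx) hn
  | @cons a b c hab w ih =>
    by_cases hb : b ∈ O
    · have hc := CmConn.cm_adj hab hx hb
      obtain ⟨v, z, h1, h2, h3, h4⟩ := ih hb (fun h => hn (hc.cm_trans h))
      exact ⟨v, z, hc.cm_trans h1, h2, h3, by simp [h4]⟩
    · exact ⟨a, b, CmConn.cm_refl hx, hab, hb, by simp⟩

end cm_basic

section cm_geo
variable {V : Type} {G : SimpleGraph V} {S T : Set V} {p : ℕ → V} {n : ℕ}

/-- `p 0, …, p n` is a shortest path between `S` and `T`. -/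
structure CmGeo (G : SimpleGraph V) (S T : Set V) (p : ℕ → V) (n : ℕ) : Prop where
  adj : ∀ t < n, G.Adj (p t) (p (t+1))
  geo : ∀ s t k, s ≤ n → t ≤ n → DistLE G (p s) (p t) k → s ≤ t + k
  sgeo : ∀ u ∈ S, ∀ t k, t ≤ n → DistLE G u (p t) k → t ≤ k
  tgeo : ∀ v ∈ T, ∀ t k, t ≤ n → DistLE G v (p t) k → n ≤ t + k
  p0 : p 0 ∈ S
  pn : p n ∈ T

lemma cm_path_dist (hadj : ∀ t < n, G.Adj (p t) (p (t+1))) :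
    ∀ s t, s ≤ t → t ≤ n → DistLE G (p s) (p t) (t - s) := by
  intro s t hst
  induction t, hst using Nat.le_induction with
  | base => intro _; exact DistLE.cm_refl _ _
  | succ t ht ih =>
    intro h
    exact ((ih (by omega)).cm_trans (DistLE.cm_adj (hadj t (by omega)))).cm_mono (by omega)

lemma cm_exists_geo (h : ∃ u ∈ S, ∃ v ∈ T, ∃ _ : G.Walk u v, True) :
    ∃ (p : ℕ → V) (n : ℕ), CmGeo G S T p n := by
  obtain ⟨n, ⟨u, hu, v, hv, w, hw⟩, hmin⟩ := cm_min
    (fun k => ∃ u ∈ S, ∃ v ∈ T, ∃ w : G.Walk u v, w.length = k)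
    (by obtain ⟨u, hu, v, hv, w, _⟩ := h; exact ⟨w.length, u, hu, v, hv, w, rfl⟩)
  have hm : ∀ u ∈ S, ∀ v ∈ T, ∀ k, DistLE G u v k → n ≤ k := by
    intro u hu v hv k ⟨w, hw⟩
    by_contra hcon
    exact hmin w.length (by omega) ⟨u, hu, v, hv, w, rfl⟩
  have hadj : ∀ t < n, G.Adj (w.getVert t) (w.getVert (t+1)) := fun t ht =>
    w.adj_getVert_succ (by omega)
  have hd := cm_path_dist hadj
  have h0 : w.getVert 0 = u := w.getVert_zero
  have hn : w.getVert n = v := by rw [← hw]; exact w.getVert_length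
  refine ⟨w.getVert, n, hadj, ?_, ?_, ?_, by rw [h0]; exact hu, by rw [hn]; exact hv⟩
  · intro s t k hs ht h
    have h1 := hd 0 t (by omega) ht
    have h2 := hd s n hs le_rfl
    rw [h0] at h1
    rw [hn] at h2
    have := hm u hu v hv _ ((h1.cm_trans h.cm_symm).cm_trans h2)
    omega
  · intro u' hu' t k ht h
    have h2 := hd t n ht le_rfl
    rw [hn] at h2
    have := hm u' hu' v hv _ (h.cm_trans h2)
    omega
  · intro v' hv' t k ht h
    have h1 := hd 0 t (by omega) ht
    rw [h0] at h1
    have := hm u hu v' hv' _ (h1.cm_trans h.cm_symm)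
    omega

/-- The vertices at distance more than `r` from the path. -/
def cmO (G : SimpleGraph V) (p : ℕ → V) (n r : ℕ) : Set V :=
  {v | ¬ ∃ t ≤ n, DistLE G v (p t) r}

/-- The attachment positions of the component of `v` in `cmO`. -/
def cmPos (G : SimpleGraph V) (S T : Set V) (p : ℕ → V) (n r M : ℕ) (v : V) : Set ℕ :=
  {x | (x = 0 ∧ ∃ u ∈ S, CmConn G (cmO G p n r) v u) ∨
    (x = n + 2 * M ∧ ∃ u ∈ T, CmConn G (cmO G p n r) v u) ∨
    ∃ t ≤ n, x = t + M ∧ ∃ c, CmConn G (cmO G p n r) v c ∧ DistLE G c (p t) (r+1)}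

lemma cmPos_trans {r M : ℕ} {v v' : V} {x : ℕ} (h : CmConn G (cmO G p n r) v v')
    (hx : x ∈ cmPos G S T p n r M v) : x ∈ cmPos G S T p n r M v' := by
  rcases hx with ⟨h1, u, hu, h2⟩ | ⟨h1, u, hu, h2⟩ | ⟨t, ht, h1, c, hc, h2⟩
  · exact Or.inl ⟨h1, u, hu, h.cm_symm.cm_trans h2⟩
  · exact Or.inr (Or.inl ⟨h1, u, hu, h.cm_symm.cm_trans h2⟩)
  · exact Or.inr (Or.inr ⟨t, ht, h1, c, h.cm_symm.cm_trans hc, h2⟩)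

lemma cm_cover (hg : CmGeo G S T p n) (r L M l : ℕ) (hLM : L ≤ M) (hl : 2 * r + L + 2 ≤ l)
    (hL : r < L)
    (hno : ∀ i ≤ n, ∃ u ∈ S, ∃ v ∈ T, ∃ w : G.Walk u v, ∀ y ∈ w.support, ¬ DistLE G (p i) y l) :
    ∀ x, M ≤ x → x ≤ n + M → ∃ v ∈ cmO G p n r, ∃ a ∈ cmPos G S T p n r M v,
      ∃ b ∈ cmPos G S T p n r M v, a + L ≤ x ∧ x + L ≤ b := by
  intro x hMx hxn
  obtain ⟨i, rfl⟩ : ∃ i, x = i + M := ⟨x - M, by omega⟩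
  have hi : i ≤ n := by omega
  by_contra hcon
  push Not at hcon
  have hd := cm_path_dist hg.adj
  let LF : V → Prop := fun v => (∃ t ≤ n, t + L ≤ i ∧ DistLE G v (p t) r) ∨
    (v ∈ cmO G p n r ∧ ∃ a ∈ cmPos G S T p n r M v, a + L ≤ i + M)
  -- a vertex close to `p t` but far from `p i`
  have hfar : ∀ v t, t ≤ n → DistLE G v (p t) r → ¬ DistLE G (p i) v l →
      t + (l - r) < i ∨ i + (l - r) < t := by
    intro v t ht h h'
    by_contra hc
    push Not at hc
    apply h'
    rcases le_total t i with hti | hti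
    · exact ((h.cm_trans (hd t i hti hi)).cm_symm).cm_mono (by omega)
    · exact ((hd i t hti ht).cm_trans h.cm_symm).cm_mono (by omega)
  have step : ∀ v v', G.Adj v v' → LF v → ¬ DistLE G (p i) v' l → LF v' := by
    intro v v' hvv hv hv'
    by_cases hO : v' ∈ cmO G p n r
    · right
      refine ⟨hO, ?_⟩
      rcases hv with ⟨t, ht, hti, htd⟩ | ⟨hvO, a, ha, hai⟩
      · refine ⟨t + M, Or.inr (Or.inr ⟨t, ht, rfl, v', CmConn.cm_refl hO, ?_⟩), by omega⟩
        exact ((DistLE.cm_adj hvv.symm).cm_trans htd).cm_mono (by omega)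
      · exact ⟨a, cmPos_trans (CmConn.cm_adj hvv hvO hO) ha, hai⟩
    · have hO' : ∃ t ≤ n, DistLE G v' (p t) r := by
        by_contra hh; exact hO hh
      obtain ⟨s, hs, hsd⟩ := hO'
      rcases hfar v' s hs hsd hv' with h | h
      · exact Or.inl ⟨s, hs, by omega, hsd⟩
      · exfalso
        rcases hv with ⟨t, ht, hti, htd⟩ | ⟨hvO, a, ha, hai⟩
        · have := hg.geo s t _ hs ht
            ((hsd.cm_symm.cm_trans (DistLE.cm_adj hvv.symm)).cm_trans htd)
          omega
        · have hb : s + M ∈ cmPos G S T p n r M v := Or.inr (Or.inr ⟨s, hs, rfl, v,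
            CmConn.cm_refl hvO, ((DistLE.cm_adj hvv).cm_trans hsd).cm_mono (by omega)⟩)
          have := hcon v hvO a ha (s + M) hb hai
          omega
  have walkstep : ∀ {u v : V} (w : G.Walk u v), (∀ y ∈ w.support, ¬ DistLE G (p i) y l) →
      LF u → LF v := by
    intro u v w
    induction w with
    | nil => intro _ h; exact h
    | @cons a b c hab w ih =>
      intro h hu
      exact ih (fun y hy => h y (by simp [hy])) (step a b hab hu (h b (by simp)))
  obtain ⟨u, hu, v, hv, w, hw⟩ := hno i hi
  have huLF : LF u := by
    by_cases hO : u ∈ cmO G p n r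
    · exact Or.inr ⟨hO, 0, Or.inl ⟨rfl, u, hu, CmConn.cm_refl hO⟩, by omega⟩
    · have hO' : ∃ t ≤ n, DistLE G u (p t) r := by
        by_contra hh; exact hO hh
      obtain ⟨t, ht, htd⟩ := hO'
      have h1 := hg.sgeo u hu t r ht htd
      left
      refine ⟨t, ht, ?_, htd⟩
      rcases hfar u t ht htd (hw u w.start_mem_support) with h | h <;> omega
  rcases walkstep w hw huLF with ⟨t, ht, hti, htd⟩ | ⟨hvO, a, ha, hai⟩
  · have := hg.tgeo v hv t r ht htd
    omega
  · have := hcon v hvO a ha (n + 2 * M) (Or.inr (Or.inl ⟨rfl, v, hv, CmConn.cm_refl hvO⟩)) hai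
    omega

/-- Location of a walk joining two distinct components. -/
lemma cm_loc (r M F : ℕ) {v v' c c' : V}
    (hg : CmGeo G S T p n)
    (hc : CmConn G (cmO G p n r) v c) (hc' : CmConn G (cmO G p n r) v' c')
    (hne : ¬ CmConn G (cmO G p n r) v v') (w : G.Walk c c') (hw : w.length ≤ F) :
    ∃ t t', t ≤ n ∧ t + M ∈ cmPos G S T p n r M v ∧ t' + M ∈ cmPos G S T p n r M v' ∧
      t' ≤ t + 2 * (r + F) ∧ ∀ z ∈ w.support, DistLE G z (p t) (r + F) := by
  have hcc : ¬ CmConn G (cmO G p n r) c c' := fun h =>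
    hne ((hc.cm_trans h).cm_trans hc'.cm_symm)
  obtain ⟨a, z, h1, h2, h3, h4⟩ := cm_exit _ w hc.cm_right hcc
  obtain ⟨a', z', h1', h2', h3', h4'⟩ := cm_exit _ w.reverse hc'.cm_right
    (fun h => hcc h.cm_symm)
  have hz : ∃ t ≤ n, DistLE G z (p t) r := by by_contra hh; exact h3 hh
  have hz' : ∃ t ≤ n, DistLE G z' (p t) r := by by_contra hh; exact h3' hh
  obtain ⟨t, ht, htd⟩ := hz
  obtain ⟨t', ht', htd'⟩ := hz'
  rw [SimpleGraph.Walk.support_reverse, List.mem_reverse] at h4'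
  have hin : ∀ x ∈ w.support, ∀ y ∈ w.support, DistLE G x y F := by
    classical
    intro x hx y hy
    rw [← w.take_spec hx, SimpleGraph.Walk.mem_support_append_iff] at hy
    have hlen : (w.takeUntil x hx).length + (w.dropUntil x hx).length = w.length := by
      rw [← SimpleGraph.Walk.length_append, SimpleGraph.Walk.take_spec]
    rcases hy with hy | hy
    · obtain ⟨i, j, hij, _, hj⟩ := cm_walk_split _ hy
      exact hj.cm_symm.cm_mono (by omega)
    · obtain ⟨i, j, hij, hj, _⟩ := cm_walk_split _ hy
      exact hj.cm_mono (by omega)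
  refine ⟨t, t', ht, ?_, ?_, ?_, ?_⟩
  · exact Or.inr (Or.inr ⟨t, ht, rfl, a, hc.cm_trans h1,
      ((DistLE.cm_adj h2).cm_trans htd).cm_mono (by omega)⟩)
  · exact Or.inr (Or.inr ⟨t', ht', rfl, a', hc'.cm_trans h1',
      ((DistLE.cm_adj h2').cm_trans htd').cm_mono (by omega)⟩)
  · have := hg.geo t' t _ ht' ht ((htd'.cm_symm.cm_trans (hin z' h4' z h4)).cm_trans htd)
    omega
  · intro y hy
    exact ((hin y hy z h4).cm_trans htd).cm_mono (by omega)

end cm_geo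

section cm_pieces
variable {V : Type} {G : SimpleGraph V} {S T : Set V} {p : ℕ → V} {n : ℕ}

/-- The components of `v` and the other vertex are at distance at most `k`. -/
def CmClose (G : SimpleGraph V) (O : Set V) (k : ℕ) (v v' : V) : Prop :=
  ∃ x y, CmConn G O v x ∧ CmConn G O v' y ∧ DistLE G x y k

lemma CmClose.cm_symm {O : Set V} {k : ℕ} {v v' : V} (h : CmClose G O k v v') :
    CmClose G O k v' v := by
  obtain ⟨x, y, hx, hy, h⟩ := h
  exact ⟨y, x, hy, hx, h.cm_symm⟩

lemma CmClose.cm_mono {O : Set V} {k l : ℕ} {v v' : V} (h : CmClose G O k v v') (hl : k ≤ l) :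
    CmClose G O l v v' := by
  obtain ⟨x, y, hx, hy, h⟩ := h
  exact ⟨x, y, hx, hy, h.cm_mono hl⟩

/-- `z` lies on a geodesic from the component of `v` down to `p t`. -/
def CmSpike (G : SimpleGraph V) (O : Set V) (p : ℕ → V) (r : ℕ) (v : V) (t : ℕ) (z : V) : Prop :=
  ∃ x δ, CmConn G O v x ∧ δ ≤ r + 1 ∧ DistLE G x z δ ∧ DistLE G z (p t) (r + 1 - δ)

/-- `z` lies on a walk of length at most `F` joining the components of `v` and the other vertex. -/
def CmLink (G : SimpleGraph V) (O : Set V) (F : ℕ) (v v' z : V) : Prop :=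
  ∃ x y y1 y2, CmConn G O v x ∧ CmConn G O v' y ∧ y1 + y2 ≤ F ∧ DistLE G x z y1 ∧ DistLE G z y y2

lemma cm_high {r t k : ℕ} {v : V} (hv : v ∈ cmO G p n r) (ht : t ≤ n) (h : DistLE G v (p t) k) :
    r < k := by
  by_contra hcon
  exact hv ⟨t, ht, h.cm_mono (by omega)⟩

lemma cm_spike_class {r d t : ℕ} {v v' z u : V} (ht : t ≤ n)
    (hz : CmSpike G (cmO G p n r) p r v t z) (hu : CmConn G (cmO G p n r) v' u)
    (h : DistLE G u z d) : CmClose G (cmO G p n r) (2 * d) v v' := by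
  obtain ⟨x, δ, hx, hδ, h1, h2⟩ := hz
  have := cm_high hu.cm_right ht (h.cm_trans h2)
  exact ⟨x, u, hx, hu, (h1.cm_trans h.cm_symm).cm_mono (by omega)⟩

lemma cm_spike_link {r d t F : ℕ} {v v' v'' z u : V} (ht : t ≤ n)
    (hz : CmSpike G (cmO G p n r) p r v t z) (hu : CmLink G (cmO G p n r) F v' v'' u)
    (h : DistLE G u z d) : CmClose G (cmO G p n r) (F + 2 * d) v v' ∧
      CmClose G (cmO G p n r) (F + 2 * d) v v'' := by
  obtain ⟨x, δ, hx, hδ, h1, h2⟩ := hz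
  obtain ⟨a, b, y1, y2, ha, hb, hy, h3, h4⟩ := hu
  have e1 := cm_high ha.cm_right ht ((h3.cm_trans h).cm_trans h2)
  have e2 := cm_high hb.cm_right ht ((h4.cm_symm.cm_trans h).cm_trans h2)
  exact ⟨⟨x, a, hx, ha, ((h1.cm_trans h.cm_symm).cm_trans h3.cm_symm).cm_mono (by omega)⟩,
    ⟨x, b, hx, hb, ((h1.cm_trans h.cm_symm).cm_trans h4).cm_mono (by omega)⟩⟩

lemma cm_link_class {O : Set V} {d F : ℕ} {v v' v'' z u : V} (hu : CmLink G O F v' v'' u)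
    (hz : CmConn G O v z) (h : DistLE G z u d) :
    CmClose G O (F / 2 + d) v v' ∨ CmClose G O (F / 2 + d) v v'' := by
  obtain ⟨a, b, y1, y2, ha, hb, hy, h3, h4⟩ := hu
  by_cases hc : y1 ≤ F / 2
  · exact Or.inl ⟨z, a, hz, ha, (h.cm_trans h3.cm_symm).cm_mono (by omega)⟩
  · exact Or.inr ⟨z, b, hz, hb, (h.cm_trans h4).cm_mono (by omega)⟩

lemma cm_link_high {r d F t : ℕ} {v' v'' u : V} (hu : CmLink G (cmO G p n r) F v' v'' u)
    (ht : t ≤ n) (h : DistLE G u (p t) d) : r < F / 2 + d := by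
  obtain ⟨a, b, y1, y2, ha, hb, hy, h3, h4⟩ := hu
  have e1 := cm_high ha.cm_right ht (h3.cm_trans h)
  have e2 := cm_high hb.cm_right ht (h4.cm_symm.cm_trans h)
  omega

lemma cm_desc {r M t : ℕ} {v : V} (hM : 0 < M) (ht : t ≤ n)
    (h : t + M ∈ cmPos G S T p n r M v) :
    ∃ D : Set V, CmConnSet G D ∧ p t ∈ D ∧ (∃ x ∈ D, CmConn G (cmO G p n r) v x) ∧
      ∀ z ∈ D, CmSpike G (cmO G p n r) p r v t z := by
  rcases h with ⟨h1, _⟩ | ⟨h1, _⟩ | ⟨s, hs, h1, c, hc, w, hw⟩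
  · omega
  · omega
  · obtain rfl : t = s := by omega
    refine ⟨{z | z ∈ w.support}, cm_support_connSet w, w.end_mem_support,
      ⟨c, w.start_mem_support, hc⟩, fun z hz => ?_⟩
    obtain ⟨i, j, hij, h2, h3⟩ := cm_walk_split w hz
    exact ⟨c, i, hc, by omega, h2, h3.cm_mono (by omega)⟩

lemma cm_linkset {r M F : ℕ} {v v' : V} (hg : CmGeo G S T p n)
    (h : CmClose G (cmO G p n r) F v v') (hne : ¬ CmConn G (cmO G p n r) v v') :
    ∃ W : Set V, CmConnSet G W ∧ (∃ x ∈ W, CmConn G (cmO G p n r) v x) ∧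
      (∃ x ∈ W, CmConn G (cmO G p n r) v' x) ∧
      (∀ z ∈ W, CmLink G (cmO G p n r) F v v' z) ∧
      ∃ t t', t ≤ n ∧ t + M ∈ cmPos G S T p n r M v ∧ t' + M ∈ cmPos G S T p n r M v' ∧
        t' ≤ t + 2 * (r + F) ∧ ∀ z ∈ W, DistLE G z (p t) (r + F) := by
  obtain ⟨x, y, hx, hy, w, hw⟩ := h
  refine ⟨{z | z ∈ w.support}, cm_support_connSet w, ⟨x, w.start_mem_support, hx⟩,
      ⟨y, w.end_mem_support, hy⟩, fun z hz => ?_, cm_loc r M F hg hx hy hne w hw⟩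
  obtain ⟨i, j, hij, h2, h3⟩ := cm_walk_split w hz
  exact ⟨x, y, i, j, hx, hy, by omega, h2, h3⟩

lemma cm_seg (hadj : ∀ t < n, G.Adj (p t) (p (t+1))) (lo hi : ℕ) (hhi : hi ≤ n) :
    CmConnSet G {z | ∃ t, lo ≤ t ∧ t ≤ hi ∧ z = p t} := by
  have key : ∀ t, lo ≤ t → t ≤ hi →
      CmConn G {z | ∃ t, lo ≤ t ∧ t ≤ hi ∧ z = p t} (p lo) (p t) := by
    intro t ht
    induction t, ht using Nat.le_induction with
    | base => intro h; exact CmConn.cm_refl ⟨lo, le_rfl, h, rfl⟩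
    | succ t ht ih =>
      intro h
      exact (ih (by omega)).cm_trans (CmConn.cm_adj (hadj t (by omega))
        ⟨t, ht, by omega, rfl⟩ ⟨t+1, by omega, h, rfl⟩)
  rintro u ⟨t, h1, h2, rfl⟩ v ⟨t', h1', h2', rfl⟩
  exact (key t h1 h2).cm_symm.cm_trans (key t' h1' h2')

/-- A block-counting function for a predicate on indices. -/
lemma cm_blocks (X : ℕ → Prop) : ∃ blk : ℕ → ℕ, blk 0 = 0 ∧ (∀ i, X i → blk (i+1) = blk i + 1) ∧
    (∀ i, ¬ X i → blk (i+1) = blk i) ∧ (∀ i j, i ≤ j → blk i ≤ blk j) ∧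
    ∀ q k, k < blk q → ∃ x < q, X x ∧ blk x = k := by
  classical
  let blk : ℕ → ℕ := fun i => Nat.count X i
  have e0 : blk 0 = 0 := Nat.count_zero X
  have e1 : ∀ i, X i → blk (i+1) = blk i + 1 := fun i hi => by
    simp [blk, Nat.count_succ, hi]
  have e2 : ∀ i, ¬ X i → blk (i+1) = blk i := fun i hi => by
    simp [blk, Nat.count_succ, hi]
  refine ⟨blk, e0, e1, e2, fun i j hij => Nat.count_monotone X hij, ?_⟩
  intro q
  induction q with
  | zero => intro k hk; omega
  | succ q ih =>
    intro k hk
    by_cases hX : X q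
    · have := e1 q hX
      by_cases hkq : k < blk q
      · obtain ⟨x, hx, h⟩ := ih k hkq
        exact ⟨x, by omega, h⟩
      · exact ⟨q, by omega, hX, by omega⟩
    · have := e2 q hX
      obtain ⟨x, hx, h⟩ := ih k (by omega)
      exact ⟨x, by omega, h⟩

end cm_pieces

section cm_final
variable {V : Type} {G : SimpleGraph V} {S T : Set V} {p : ℕ → V} {n : ℕ}

lemma cm_far (hg : CmGeo G S T p n) {z z' : V} {t t' e e' d : ℕ} (ht : t ≤ n) (ht' : t' ≤ n)
    (hz : DistLE G z (p t) e) (hz' : DistLE G z' (p t') e')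
    (h : t + e + e' + d < t' ∨ t' + e + e' + d < t) : ¬ DistLE G z z' d := by
  intro hd
  have h1 := (hz.cm_symm.cm_trans hd).cm_trans hz'
  have e1 := hg.geo _ _ _ ht ht' h1
  have e2 := hg.geo _ _ _ ht' ht h1.cm_symm
  omega

/-- The thinned chain of components. -/
structure CmData (G : SimpleGraph V) (S T : Set V) (p : ℕ → V) (n d : ℕ) (c : ℕ → V)
    (a b : ℕ → ℕ) (q : ℕ) (long : ℕ → Prop) : Prop where
  hd : 1 ≤ d
  hg : CmGeo G S T p n
  hO : ∀ i, c i ∈ cmO G p n (10 * d)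
  ha : ∀ i, a i ∈ cmPos G S T p n (10 * d) (1000 * d) (c i)
  hb : ∀ i, b i ∈ cmPos G S T p n (10 * d) (1000 * d) (c i)
  hab : ∀ i, ∀ x ∈ cmPos G S T p n (10 * d) (1000 * d) (c i), a i ≤ x ∧ x ≤ b i
  a0 : a 0 = 0
  b0 : 1000 * d + 1000 * d ≤ b 0
  bq : b q = n + 2 * (1000 * d)
  bn : ∀ i < q, b i ≤ n + 1000 * d
  aM : ∀ i, 0 < i → i ≤ q → 1000 * d ≤ a i
  bb : ∀ x y, x < y → y ≤ q → b x + 1000 * d ≤ b y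
  ba : ∀ x y, x + 2 ≤ y → y ≤ q → b x < a y + 48 * d
  ncl : ∀ x y, x + 2 ≤ y → y ≤ q → ¬ CmClose G (cmO G p n (10 * d)) (8 * d) (c x) (c y)
  short : ∀ i < q, ¬ long i → a (i+1) + 48 * d ≤ b i ∧ (i + 2 ≤ q → a (i+1) + 24 * d ≤ a (i+2))
  lng : ∀ i < q, long i → (a (i+1) + 48 * d ≤ b i + 24 * d ∨
    CmClose G (cmO G p n (10 * d)) (8 * d) (c i) (c (i+1))) ∧ b i < a (i+1) + 48 * d ∧
    (i + 2 ≤ q → b i + 1000 * d < a (i+2) + 48 * d)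

/-- A merging link. -/
def CmM (G : SimpleGraph V) (p : ℕ → V) (n d : ℕ) (c : ℕ → V) (long : ℕ → Prop) (i : ℕ) : Prop :=
  CmClose G (cmO G p n (10 * d)) (6 * d) (c i) (c (i+1)) ∨
    (long i ∧ CmClose G (cmO G p n (10 * d)) (8 * d) (c i) (c (i+1)))

variable {d q : ℕ} {c : ℕ → V} {a b : ℕ → ℕ} {long : ℕ → Prop}

lemma CmData.cm_bmono (h : CmData G S T p n d c a b q long) {x y : ℕ} (hxy : x ≤ y) (hy : y ≤ q) :
    b x ≤ b y := by
  rcases Nat.eq_or_lt_of_le hxy with rfl | hlt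
  · exact le_rfl
  · have := h.bb x y hlt hy
    omega

lemma CmData.cm_bM (h : CmData G S T p n d c a b q long) {x : ℕ} (hx : x ≤ q) :
    2000 * d ≤ b x := by
  have := h.cm_bmono (Nat.zero_le x) hx
  have := h.b0
  omega

lemma CmData.cm_ne (h : CmData G S T p n d c a b q long) {x y : ℕ} (hxy : x < y) (hy : y ≤ q) :
    ¬ CmConn G (cmO G p n (10 * d)) (c x) (c y) := by
  intro hc
  have h1 := (h.hab x _ (cmPos_trans hc.cm_symm (h.hb y))).2
  have := h.bb x y hxy hy
  have := h.hd
  omega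

lemma CmData.cm_x1 (h : CmData G S T p n d c a b q long) {x : ℕ} (hx : x < q)
    (hX : ¬ CmM G p n d c long x) : a (x+1) + 24 * d ≤ b x := by
  by_cases hl : long x
  · rcases (h.lng x hx hl).1 with h1 | h1
    · omega
    · exact absurd (Or.inr ⟨hl, h1⟩) hX
  · have := (h.short x hx hl).1
    omega

/-- lower bound for the left end of a later component -/
lemma CmData.cm_x2 (h : CmData G S T p n d c a b q long) {x y : ℕ} (hxy : x + 2 ≤ y) (hy : y < q) :
    b x + 952 * d ≤ a (y+1) := by
  have := h.ba (x+1) (y+1) (by omega) (by omega)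
  have := h.bb x (x+1) (by omega) (by omega)
  omega

lemma CmData.cm_x3 (h : CmData G S T p n d c a b q long) {x y : ℕ} (hxy : x < y) (hy : y < q)
    (hX : ¬ CmM G p n d c long x) : a (x+1) + 24 * d ≤ a (y+1) := by
  have h0 := h.cm_x1 (by omega) hX
  rcases Nat.eq_or_lt_of_le (show x + 1 ≤ y from hxy) with rfl | hlt
  · by_cases hl : long x
    · have := (h.lng x (by omega) hl).2.2 (by omega)
      have : a (x+1+1) = a (x+2) := rfl
      omega
    · exact (h.short x (by omega) hl).2 (by omega)
  · have := h.cm_x2 (show x + 2 ≤ y from hlt) hy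
    omega

/-- The sets realising merging links. -/
lemma CmData.cm_W (h : CmData G S T p n d c a b q long) {i : ℕ} (hi : i < q)
    (hM : CmM G p n d c long i) :
    ∃ W : Set V, CmConnSet G W ∧ (∃ x ∈ W, CmConn G (cmO G p n (10 * d)) (c i) x) ∧
      (∃ x ∈ W, CmConn G (cmO G p n (10 * d)) (c (i+1)) x) ∧
      (∀ z ∈ W, CmLink G (cmO G p n (10 * d)) (8 * d) (c i) (c (i+1)) z) ∧
      (¬ long i → ∀ z ∈ W, CmLink G (cmO G p n (10 * d)) (6 * d) (c i) (c (i+1)) z) ∧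
      ∃ t ≤ n, t + 1000 * d ≤ b i ∧ a (i+1) ≤ t + 1000 * d + 36 * d ∧
        ∀ z ∈ W, DistLE G z (p t) (18 * d) := by
  have hne := h.cm_ne (show i < i + 1 by omega) hi
  by_cases h6 : CmClose G (cmO G p n (10 * d)) (6 * d) (c i) (c (i+1))
  · obtain ⟨W, h1, h2, h3, h4, t, t', ht, h5, h7, h8, h9⟩ := cm_linkset (M := 1000 * d) h.hg h6 hne
    have e1 := h.hab _ _ h5
    have e2 := h.hab _ _ h7
    refine ⟨W, h1, h2, h3, ?_, fun _ => h4, t, ht, e1.2, by omega,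
      fun z hz => (h9 z hz).cm_mono (by omega)⟩
    intro z hz
    obtain ⟨x, y, y1, y2, hx, hy, hs, hh⟩ := h4 z hz
    exact ⟨x, y, y1, y2, hx, hy, by omega, hh⟩
  · obtain ⟨hl, h8⟩ := hM.resolve_left h6
    obtain ⟨W, h1, h2, h3, h4, t, t', ht, h5, h7, h8, h9⟩ := cm_linkset (M := 1000 * d) h.hg h8 hne
    have e1 := h.hab _ _ h5
    have e2 := h.hab _ _ h7
    exact ⟨W, h1, h2, h3, h4, fun hn => absurd hl hn, t, ht, e1.2, by omega,
      fun z hz => (h9 z hz).cm_mono (by omega)⟩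

lemma CmSpike.cm_near {r t : ℕ} {v z : V} {O : Set V} (h : CmSpike G O p r v t z) :
    DistLE G z (p t) (r + 1) := by
  obtain ⟨x, δ, _, _, _, h2⟩ := h
  exact h2.cm_mono (by omega)

/-- Merging sets are far from the descents at right ends of components. -/
lemma CmData.cm_WD (h : CmData G S T p n d c a b q long) {i x t t' : ℕ} {z u : V} (hi : i < q)
    (hx : x < q) (hne : i ≠ x)
    (ht' : t' ≤ n) (hbx : t' + 1000 * d = b x)
    (hu : CmSpike G (cmO G p n (10 * d)) p (10 * d) (c x) t' u)
    (hz : ¬ long i → CmLink G (cmO G p n (10 * d)) (6 * d) (c i) (c (i+1)) z)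
    (ht : t ≤ n) (hti : t + 1000 * d ≤ b i) (hta : a (i+1) ≤ t + 1000 * d + 36 * d)
    (hzt : DistLE G z (p t) (18 * d)) : ¬ DistLE G z u d := by
  have hd := h.hd
  have far := cm_far (d := d) h.hg ht ht' hzt hu.cm_near
  rcases Nat.lt_or_gt_of_ne hne with hlt | hgt
  · have := h.bb i x hlt (by omega)
    exact far (by omega)
  · rcases Nat.eq_or_lt_of_le (show x + 1 ≤ i from hgt) with rfl | hlt
    · by_cases hl : long x
      · have := (h.lng x hx hl).2.2 (by omega)
        have e : a (x+1+1) = a (x+2) := rfl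
        exact far (by omega)
      · by_cases hl' : long (x+1)
        · have := (h.lng (x+1) hi hl').2.1
          have := h.bb x (x+1) (by omega) (by omega)
          exact far (by omega)
        · intro hdist
          have := (cm_spike_link ht' hu (hz hl') hdist).2
          exact h.ncl x (x+2) le_rfl (by omega) (this.cm_mono (by omega))
    · have := h.cm_x2 (show x + 2 ≤ i from hlt) hi
      exact far (by omega)

/-- Merging sets are far from the descents at left ends of components. -/
lemma CmData.cm_WA (h : CmData G S T p n d c a b q long) {i x t t' : ℕ} {z u : V} (hi : i < q)
    (hx : x < q) (hne : i ≠ x) (hne' : i ≠ x + 1) (hX : ¬ CmM G p n d c long x)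
    (ht' : t' ≤ n) (hax : t' + 1000 * d = a (x+1))
    (hu : CmSpike G (cmO G p n (10 * d)) p (10 * d) (c (x+1)) t' u)
    (hz : ¬ long i → CmLink G (cmO G p n (10 * d)) (6 * d) (c i) (c (i+1)) z)
    (ht : t ≤ n) (hti : t + 1000 * d ≤ b i) (hta : a (i+1) ≤ t + 1000 * d + 36 * d)
    (hzt : DistLE G z (p t) (18 * d)) : ¬ DistLE G z u d := by
  have hd := h.hd
  have far := cm_far (d := d) h.hg ht ht' hzt hu.cm_near
  have h1 := h.cm_x1 hx hX
  rcases Nat.lt_or_gt_of_ne hne with hlt | hgt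
  · rcases Nat.eq_or_lt_of_le (show i + 1 ≤ x from hlt) with rfl | hlt
    · by_cases hl : long i
      · have := (h.lng i hi hl).2.2 (by omega)
        have e : a (i+1+1) = a (i+2) := rfl
        exact far (by omega)
      · by_cases hl' : long (i+1)
        · have := (h.lng (i+1) hx hl').2.1
          have := h.bb i (i+1) (by omega) (by omega)
          exact far (by omega)
        · intro hdist
          have := (cm_spike_link ht' hu (hz hl) hdist).1
          exact h.ncl i (i+2) le_rfl (by omega) (this.cm_symm.cm_mono (by omega))
    · have := h.cm_x2 (show i + 2 ≤ x from hlt) hx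
      exact far (by omega)
  · have := h.cm_x2 (show x + 2 ≤ i by omega) hi
    exact far (by omega)

lemma CmData.cm_main1 (h : CmData G S T p n d c a b q long) : HasKPaths G S T 2 d := by
  classical
  have hd := h.hd
  have hM0 : 0 < 1000 * d := by omega
  obtain ⟨blk, hb0, hbX, hbM, hbmono, hbex⟩ :=
    cm_blocks (fun i => i < q ∧ ¬ CmM G p n d c long i)
  obtain ⟨m, hm⟩ : ∃ m, m = blk q := ⟨_, rfl⟩
  have hex : ∀ k, ∃ x, k < m → x < q ∧ ¬ CmM G p n d c long x ∧ blk x = k ∧ blk (x+1) = k + 1 := by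
    intro k
    by_cases hk : k < m
    · obtain ⟨x, hx, hX, hbx⟩ := hbex q k (by omega)
      exact ⟨x, fun _ => ⟨hx, hX.2, hbx, by rw [hbX x hX, hbx]⟩⟩
    · exact ⟨0, fun hk' => absurd hk' hk⟩
  choose xk hxk using hex
  have hxlt : ∀ k k', k < k' → k' < m → xk k < xk k' := by
    intro k k' hk hk'
    by_contra hcon
    have := hbmono (xk k') (xk k) (by omega)
    rw [(hxk k' hk').2.2.1, (hxk k (by omega)).2.2.1] at this
    omega
  -- components in different blocks are far apart
  have nc' : ∀ i j, i < j → j ≤ q → blk i ≠ blk j →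
      ¬ CmClose G (cmO G p n (10 * d)) (6 * d) (c i) (c j) := by
    intro i j hij hj hne hc
    rcases Nat.eq_or_lt_of_le (show i + 1 ≤ j from hij) with rfl | hlt
    · by_cases hX : CmM G p n d c long i
      · exact hne (hbM i (fun hh => hh.2 hX)).symm
      · exact hX (Or.inl hc)
    · exact h.ncl i j hlt hj (hc.cm_mono (by omega))
  have nc : ∀ i j, i ≤ q → j ≤ q → blk i ≠ blk j → ∀ e, e ≤ 6 * d →
      ¬ CmClose G (cmO G p n (10 * d)) e (c i) (c j) := by
    intro i j hi hj hne e he hc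
    rcases Nat.lt_trichotomy i j with hlt | rfl | hgt
    · exact nc' i j hlt hj hne (hc.cm_mono he)
    · exact hne rfl
    · exact nc' j i hgt hi hne.symm (hc.cm_symm.cm_mono he)
  -- merging sets
  have hW : ∀ i, ∃ W : Set V, ∃ t : ℕ, i < q → CmM G p n d c long i → CmConnSet G W ∧
      (∃ x ∈ W, CmConn G (cmO G p n (10 * d)) (c i) x) ∧
      (∃ x ∈ W, CmConn G (cmO G p n (10 * d)) (c (i+1)) x) ∧
      (∀ z ∈ W, CmLink G (cmO G p n (10 * d)) (8 * d) (c i) (c (i+1)) z) ∧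
      (¬ long i → ∀ z ∈ W, CmLink G (cmO G p n (10 * d)) (6 * d) (c i) (c (i+1)) z) ∧
      t ≤ n ∧ t + 1000 * d ≤ b i ∧ a (i+1) ≤ t + 1000 * d + 36 * d ∧
        ∀ z ∈ W, DistLE G z (p t) (18 * d) := by
    intro i
    by_cases hi : i < q ∧ CmM G p n d c long i
    · obtain ⟨W, h1, h2, h3, h4, h5, t, ht⟩ := h.cm_W hi.1 hi.2
      exact ⟨W, t, fun _ _ => ⟨h1, h2, h3, h4, h5, ht⟩⟩
    · exact ⟨∅, 0, fun h1 h2 => absurd ⟨h1, h2⟩ hi⟩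
  choose W tw hW using hW
  have hMblk : ∀ i, CmM G p n d c long i → blk (i+1) = blk i := fun i hi =>
    hbM i (fun hh => hh.2 hi)
  -- left ends of rails
  have hLP : ∀ k, ∃ LP : Set V, ∃ t : ℕ, k ≤ m → CmConnSet G LP ∧ p t ∈ LP ∧ t ≤ n ∧
      (k = 0 → t = 0 ∧ ∀ z ∈ LP, z = p t) ∧
      (0 < k → t + 1000 * d = b (xk (k-1)) ∧
        (∃ x ∈ LP, CmConn G (cmO G p n (10 * d)) (c (xk (k-1))) x) ∧
        ∀ z ∈ LP, CmSpike G (cmO G p n (10 * d)) p (10 * d) (c (xk (k-1))) t z) := by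
    intro k
    by_cases hk : k = 0
    · refine ⟨{p 0}, 0, fun _ => ⟨?_, rfl, by omega, fun _ => ⟨rfl, fun z hz => hz⟩,
        fun h => by omega⟩⟩
      rintro u rfl v rfl
      exact CmConn.cm_refl rfl
    · by_cases hkm : k ≤ m
      · have hx := hxk (k-1) (by omega)
        have e1 := h.bn _ hx.1
        have e2 := h.cm_bM hx.1.le
        obtain ⟨D, h1, h2, h3, h4⟩ := cm_desc (S := S) (T := T) (M := 1000 * d) (p := p) (n := n)
          (t := b (xk (k-1)) - 1000 * d) (v := c (xk (k-1))) (r := 10 * d) (G := G) hM0 (by omega)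
          (by rw [Nat.sub_add_cancel (by omega)]; exact h.hb _)
        exact ⟨D, _, fun _ => ⟨h1, h2, by omega, fun h => absurd h hk,
          fun _ => ⟨by omega, h3, h4⟩⟩⟩
      · exact ⟨∅, 0, fun h => absurd h hkm⟩
  choose LP tl hLP using hLP
  have hRP : ∀ k, ∃ RP : Set V, ∃ t : ℕ, k ≤ m → CmConnSet G RP ∧ p t ∈ RP ∧ t ≤ n ∧
      (k = m → t = n ∧ ∀ z ∈ RP, z = p t) ∧
      (k < m → t + 1000 * d = a (xk k + 1) ∧
        (∃ x ∈ RP, CmConn G (cmO G p n (10 * d)) (c (xk k + 1)) x) ∧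
        ∀ z ∈ RP, CmSpike G (cmO G p n (10 * d)) p (10 * d) (c (xk k + 1)) t z) := by
    intro k
    by_cases hk : k = m
    · refine ⟨{p n}, n, fun _ => ⟨?_, rfl, by omega, fun _ => ⟨rfl, fun z hz => hz⟩,
        fun h => by omega⟩⟩
      rintro u rfl v rfl
      exact CmConn.cm_refl rfl
    · by_cases hkm : k ≤ m
      · have hx := hxk k (by omega)
        have e1 := h.bn _ hx.1
        have e2 := h.aM (xk k + 1) (by omega) (by omega)
        have e3 := h.cm_x1 hx.1 hx.2.1
        obtain ⟨D, h1, h2, h3, h4⟩ := cm_desc (S := S) (T := T) (M := 1000 * d) (p := p) (n := n)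
          (t := a (xk k + 1) - 1000 * d) (v := c (xk k + 1)) (r := 10 * d) (G := G) hM0 (by omega)
          (by rw [Nat.sub_add_cancel (by omega)]; exact h.ha _)
        exact ⟨D, _, fun _ => ⟨h1, h2, by omega, fun h => absurd h hk,
          fun _ => ⟨by omega, h3, h4⟩⟩⟩
      · exact ⟨∅, 0, fun h => absurd h hkm⟩
  choose RP tr hRP using hRP
  let U : ℕ → Set V := fun k => {v | ∃ i ≤ q, blk i = k ∧ (CmConn G (cmO G p n (10 * d)) (c i) v ∨
    (i < q ∧ CmM G p n d c long i ∧ v ∈ W i))}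
  let R : ℕ → Set V := fun k => (LP k ∪
    {z | ∃ t, min (tl k) (tr k) ≤ t ∧ t ≤ max (tl k) (tr k) ∧ z = p t}) ∪ RP k
  -- location of the rails
  have hRloc : ∀ k ≤ m, ∀ z ∈ R k, ∃ t ≤ n, min (tl k) (tr k) ≤ t ∧ t ≤ max (tl k) (tr k) ∧
      DistLE G z (p t) (10 * d + 1) := by
    intro k hk z hz
    obtain ⟨h1, h2, h3, h4, h5⟩ := hLP k hk
    obtain ⟨g1, g2, g3, g4, g5⟩ := hRP k hk
    rcases hz with (hz | ⟨t, ht, ht', rfl⟩) | hz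
    · refine ⟨tl k, h3, by omega, by omega, ?_⟩
      by_cases hk0 : k = 0
      · rw [(h4 hk0).2 z hz]; exact DistLE.cm_refl _ _
      · exact ((h5 (by omega)).2.2 z hz).cm_near
    · exact ⟨t, by omega, ht, ht', DistLE.cm_refl _ _⟩
    · refine ⟨tr k, g3, by omega, by omega, ?_⟩
      by_cases hk0 : k = m
      · rw [(g4 hk0).2 z hz]; exact DistLE.cm_refl _ _
      · exact ((g5 (by omega)).2.2 z hz).cm_near
  have hord : ∀ k k', k < k' → k' ≤ m → max (tl k) (tr k) + 24 * d ≤ min (tl k') (tr k') := by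
    intro k k' hk hk'
    obtain ⟨_, _, _, h4, h5⟩ := hLP k (by omega)
    obtain ⟨_, _, _, h4', h5'⟩ := hLP k' (by omega)
    obtain ⟨_, _, _, g4, g5⟩ := hRP k (by omega)
    obtain ⟨_, _, _, g4', g5'⟩ := hRP k' (by omega)
    have r1 := (g5 (by omega)).1
    have l1 := (h5' (by omega)).1
    have x0 := hxk k (by omega)
    have x1 := hxk (k'-1) (by omega)
    have hle : xk k ≤ xk (k'-1) := by
      rcases Nat.eq_or_lt_of_le (show k ≤ k' - 1 by omega) with he | hlt
      · rw [← he]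
      · exact (hxlt _ _ hlt (by omega)).le
    have f0 := h.cm_x1 x0.1 x0.2.1
    have f1 := h.cm_bmono hle x1.1.le
    have f2 := h.bn _ x1.1
    have f3 := h.cm_bM x1.1.le
    have A1 : tr k + 24 * d ≤ tl k' := by omega
    have A2 : tl k + 24 * d ≤ tl k' := by
      by_cases hk0 : k = 0
      · have := (h4 hk0).1
        omega
      · have := (h5 (by omega)).1
        have := h.bb _ _ (hxlt (k-1) (k'-1) (by omega) (by omega)) x1.1.le
        omega
    have A3 : tr k + 24 * d ≤ tr k' := by
      by_cases hkm : k' = m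
      · have := (g4' hkm).1
        omega
      · have := (g5' (by omega)).1
        have := h.cm_x3 (hxlt k k' hk (by omega)) (hxk k' (by omega)).1 x0.2.1
        omega
    have A4 : tl k + 24 * d ≤ tr k' := by
      by_cases hkm : k' = m
      · have := (g4' hkm).1
        omega
      · have e1 := (g5' (by omega)).1
        have x2 := hxk k' (by omega)
        have e2 := hxlt k k' hk (by omega)
        by_cases hk0 : k = 0
        · have := (h4 hk0).1
          have := h.ba 0 (xk k' + 1) (by omega) (by omega)
          have := h.b0
          omega
        · have := (h5 (by omega)).1
          have e3 := hxlt (k-1) k (by omega) (by omega)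
          have := h.cm_x2 (show xk (k-1) + 2 ≤ xk k' by omega) x2.1
          omega
    omega
  -- a component or merging set in another block is far from a rail
  have hUR : ∀ k k', k ≤ m → k' ≤ m → k' ≠ k + 1 → k ≠ k' + 1 →
      ∀ u ∈ U k, ∀ v ∈ R k', ¬ DistLE G u v d := by
    intro k k' hk hk' hne hne' u hu v hv hdist
    obtain ⟨_, _, h3, h4, h5⟩ := hLP k' hk'
    obtain ⟨_, _, g3, g4, g5⟩ := hRP k' hk'
    obtain ⟨i, hi, hbi, hu⟩ := hu
    have seg : ∀ t ≤ n, v = p t → False := by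
      rintro t ht rfl
      rcases hu with hu | ⟨hiq, hMi, hu⟩
      · have := cm_high hu.cm_right ht hdist
        omega
      · have := cm_link_high ((hW i hiq hMi).2.2.2.1 u hu) ht hdist
        omega
    rcases hv with (hv | ⟨t, _, ht, rfl⟩) | hv
    · by_cases hk0 : k' = 0
      · exact seg _ h3 ((h4 hk0).2 v hv)
      · obtain ⟨e1, _, e2⟩ := h5 (by omega)
        have x1 := hxk (k'-1) (by omega)
        rcases hu with hu | ⟨hiq, hMi, hu⟩
        · exact nc _ _ x1.1.le hi (by omega) _ (by omega)
            (cm_spike_class h3 (e2 v hv) hu hdist)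
        · obtain ⟨_, _, _, _, w5, w6, w7, w8, w9⟩ := hW i hiq hMi
          exact h.cm_WD hiq x1.1 (by rintro rfl; exact x1.2.1 hMi) h3 e1 (e2 v hv)
            (fun hl => w5 hl u hu) w6 w7 w8 (w9 u hu) hdist
    · exact seg t (by omega) rfl
    · by_cases hk0 : k' = m
      · exact seg _ g3 ((g4 hk0).2 v hv)
      · obtain ⟨e1, _, e2⟩ := g5 (by omega)
        have x1 := hxk k' (by omega)
        rcases hu with hu | ⟨hiq, hMi, hu⟩
        · exact nc _ _ (show xk k' + 1 ≤ q by omega) hi (by omega) _ (by omega)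
            (cm_spike_class g3 (e2 v hv) hu hdist)
        · obtain ⟨_, _, _, _, w5, w6, w7, w8, w9⟩ := hW i hiq hMi
          exact h.cm_WA hiq x1.1 (by rintro rfl; exact x1.2.1 hMi) (by rintro rfl; omega)
            x1.2.1 g3 e1 (e2 v hv) (fun hl => w5 hl u hu) w6 w7 w8 (w9 u hu) hdist
  have hCW : ∀ i j, i ≤ q → j < q → blk i ≠ blk j → CmM G p n d c long j → ∀ u v,
      CmConn G (cmO G p n (10 * d)) (c i) u → v ∈ W j → ¬ DistLE G u v d := by
    intro i j hi hj hne hMj u v hu hv hdist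
    rcases cm_link_class ((hW j hj hMj).2.2.2.1 v hv) hu hdist with e | e
    · exact nc i j hi hj.le hne _ (by omega) e
    · exact nc i (j+1) hi hj (by rw [hMblk j hMj]; exact hne) _ (by omega) e
  have hUU : ∀ k k', k < k' → k' ≤ m → ∀ u ∈ U k, ∀ v ∈ U k', ¬ DistLE G u v d := by
    rintro k k' hk hk' u ⟨i, hi, rfl, hu⟩ v ⟨j, hj, rfl, hv⟩ hdist
    rcases hu with hu | ⟨hiq, hMi, hu⟩
    · rcases hv with hv | ⟨hjq, hMj, hv⟩
      · exact nc i j hi hj hk.ne d (by omega) ⟨u, v, hu, hv, hdist⟩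
      · exact hCW i j hi hjq hk.ne hMj u v hu hv hdist
    · rcases hv with hv | ⟨hjq, hMj, hv⟩
      · exact hCW j i hj hiq hk.ne' hMi v u hv hu hdist.cm_symm
      · have hij : i + 2 ≤ j := by
          by_contra hcon
          have e1 : j ≤ i + 1 := by omega
          have := hbmono _ _ e1
          rw [hMblk i hMi] at this
          omega
        obtain ⟨_, _, _, _, _, w6, w7, w8, w9⟩ := hW i hiq hMi
        obtain ⟨_, _, _, _, _, w6', w7', w8', w9'⟩ := hW j hjq hMj
        have := h.cm_x2 hij hjq
        exact cm_far h.hg w6 w6' (w9 u hu) (w9' v hv) (by omega) hdist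
  -- connectivity of the blocks
  have hclass : ∀ i ≤ q, ∀ u v, CmConn G (cmO G p n (10 * d)) (c i) u →
      CmConn G (cmO G p n (10 * d)) (c i) v → CmConn G (U (blk i)) u v := by
    intro i hi u v hu hv
    obtain ⟨w, hw⟩ := hu.cm_symm.cm_trans hv
    refine ⟨w, fun x hx => ⟨i, hi, rfl, Or.inl ?_⟩⟩
    obtain ⟨w1, hw1⟩ := cm_support_connSet w u w.start_mem_support x hx
    exact hu.cm_trans ⟨w1, fun y hy => hw y (hw1 y hy)⟩
  have hself : ∀ i, CmConn G (cmO G p n (10 * d)) (c i) (c i) := fun i => CmConn.cm_refl (h.hO i)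
  have hstep : ∀ i j, i ≤ j → j ≤ q → blk i = blk j → CmConn G (U (blk i)) (c i) (c j) := by
    intro i j hij
    induction j, hij using Nat.le_induction with
    | base => intro hi _; exact hclass i hi _ _ (hself i) (hself i)
    | succ j hij ih =>
      intro hj hbj
      have e1 := hbmono i j hij
      have e2 := hbmono j (j+1) (by omega)
      have hMj : CmM G p n d c long j := by
        by_contra hX
        have := hbX j ⟨by omega, hX⟩
        omega
      have hi := ih (by omega) (by omega)
      obtain ⟨w1, ⟨x, hx, hx'⟩, ⟨y, hy, hy'⟩, _⟩ := hW j (by omega) hMj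
      have c1 := hclass j (by omega) _ _ (hself j) hx'
      have c2 := hclass (j+1) hj _ _ hy' (hself (j+1))
      have c3 : CmConn G (U (blk i)) x y := (w1 x hx y hy).cm_mono
        (fun z hz => ⟨j, by omega, by omega, Or.inr ⟨by omega, hMj, hz⟩⟩)
      rw [← hbj] at c2
      rw [show blk j = blk i by omega] at c1
      exact ((hi.cm_trans c1).cm_trans c3).cm_trans c2
  have hUc : ∀ k ≤ m, CmConnSet G (U k) := by
    have key : ∀ k, ∀ u ∈ U k, ∃ i ≤ q, blk i = k ∧ CmConn G (U k) (c i) u := by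
      rintro k u ⟨i, hi, rfl, hu⟩
      refine ⟨i, hi, rfl, ?_⟩
      rcases hu with hu | ⟨hiq, hMi, hu⟩
      · exact hclass i hi _ _ (hself i) hu
      · obtain ⟨w1, ⟨x, hx, hx'⟩, _⟩ := hW i hiq hMi
        exact (hclass i hi _ _ (hself i) hx').cm_trans ((w1 x hx u hu).cm_mono
          (fun z hz => ⟨i, hi, rfl, Or.inr ⟨hiq, hMi, hz⟩⟩))
    intro k _ u hu v hv
    obtain ⟨i, hi, hbi, hu⟩ := key k u hu
    obtain ⟨j, hj, hbj, hv⟩ := key k v hv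
    refine hu.cm_symm.cm_trans (CmConn.cm_trans ?_ hv)
    subst hbi
    rcases Nat.le_total i j with hij | hij
    · exact hstep i j hij hj hbj.symm
    · have := hstep j i hij hi hbj
      rw [hbj] at this
      exact this.cm_symm
  refine cm_assemble S T d U R m hUc ?_ hUU ?_ hUR ?_ ?_ ?_ ?_ ?_ ?_
  · intro k hk
    obtain ⟨h1, h2, h3, _⟩ := hLP k hk
    obtain ⟨g1, g2, g3, _⟩ := hRP k hk
    refine CmConnSet.cm_union (CmConnSet.cm_union h1 (cm_seg h.hg.adj _ _ (by omega)) ?_) g1 ?_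
    · exact ⟨p (tl k), h2, tl k, by omega, by omega, rfl⟩
    · exact ⟨p (tr k), Or.inr ⟨tr k, by omega, by omega, rfl⟩, g2⟩
  · intro k k' hk hk' u hu v hv
    obtain ⟨t, ht, t1, t2, t3⟩ := hRloc k (by omega) u hu
    obtain ⟨t', ht', t1', t2', t3'⟩ := hRloc k' hk' v hv
    have := hord k k' hk hk'
    exact cm_far h.hg ht ht' t3 t3' (by omega)
  · intro k hk
    obtain ⟨_, _, _, _, h5⟩ := hLP (k+1) (by omega)
    obtain ⟨_, ⟨x, hx, hx'⟩, _⟩ := h5 (by omega)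
    have x1 := hxk k hk
    exact ⟨x, ⟨xk k, x1.1.le, x1.2.2.1, Or.inl hx'⟩, Or.inl (Or.inl hx)⟩
  · intro k hk
    obtain ⟨_, _, _, _, h5⟩ := hRP k (by omega)
    obtain ⟨_, ⟨x, hx, hx'⟩, _⟩ := h5 (by omega)
    have x1 := hxk k hk
    exact ⟨x, Or.inr hx, ⟨xk k + 1, x1.1, x1.2.2.2, Or.inl hx'⟩⟩
  · have := h.ha 0
    rw [h.a0] at this
    rcases this with ⟨_, u, hu, hc⟩ | ⟨e, _⟩ | ⟨t, _, e, _⟩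
    · exact ⟨u, ⟨0, by omega, hb0, Or.inl hc⟩, hu⟩
    · omega
    · omega
  · obtain ⟨_, h2, _, h4, _⟩ := hLP 0 (by omega)
    rw [(h4 rfl).1] at h2
    exact ⟨p 0, Or.inl (Or.inl h2), h.hg.p0⟩
  · have := h.hb q
    rw [h.bq] at this
    rcases this with ⟨e, _⟩ | ⟨_, u, hu, hc⟩ | ⟨t, _, e, _⟩
    · omega
    · exact ⟨u, ⟨q, le_rfl, hm.symm, Or.inl hc⟩, hu⟩
    · omega
  · obtain ⟨_, h2, _, h4, _⟩ := hRP m le_rfl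
    rw [(h4 rfl).1] at h2
    exact ⟨p n, Or.inr h2, h.hg.pn⟩

lemma cm_main2 (hd : 1 ≤ d) (hg : CmGeo G S T p n)
    (hno : ∀ i ≤ n, ∃ u ∈ S, ∃ v ∈ T, ∃ w : G.Walk u v,
      ∀ y ∈ w.support, ¬ DistLE G (p i) y (2000 * d)) : HasKPaths G S T 2 d := by
  classical
  let P : V → Set ℕ := fun v => cmPos G S T p n (10 * d) (1000 * d) v
  let ι : Type := {v : V // v ∈ cmO G p n (10 * d) ∧ (P v).Nonempty}
  let α : ι → ℕ := fun v => sInf (P v.1)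
  let β : ι → ℕ := fun v => sSup (P v.1)
  have hval : ∀ v, ∀ x ∈ P v, x = 0 ∨ x = n + 2 * (1000 * d) ∨
      (1000 * d ≤ x ∧ x ≤ n + 1000 * d) := by
    rintro v x (⟨e, _⟩ | ⟨e, _⟩ | ⟨t, ht, e, _⟩)
    · exact Or.inl e
    · exact Or.inr (Or.inl e)
    · exact Or.inr (Or.inr (by omega))
  have hbdd : ∀ v, BddAbove (P v) := fun v => ⟨n + 2 * (1000 * d), fun x hx => by
    rcases hval v x hx with e | e | e <;> omega⟩
  have hα : ∀ v : ι, α v ∈ P v.1 := fun v => Nat.sInf_mem v.2.2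
  have hβ : ∀ v : ι, β v ∈ P v.1 := fun v => Nat.sSup_mem v.2.2 (hbdd _)
  have hαβ : ∀ v : ι, ∀ x ∈ P v.1, α v ≤ x ∧ x ≤ β v := fun v x hx =>
    ⟨Nat.sInf_le hx, le_csSup (hbdd _) hx⟩
  obtain ⟨c, q, long, h1, h2, h3, h4, h5, h6, h7, h8, h9, h10⟩ := cm_chain α β
    (fun v v' => CmClose G (cmO G p n (10 * d)) (8 * d) v.1 v'.1)
    (1000 * d) n (1000 * d) (48 * d) (24 * d) (36 * d) (by omega) (by omega)
    (fun v => by rcases hval _ _ (hβ v) with e | e | e <;> omega)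
    (fun v => by rcases hval _ _ (hα v) with e | e | e <;> omega)
    (by
      intro x hx hx'
      obtain ⟨v, hv, s, hs, t, ht, e1, e2⟩ := cm_cover hg (10 * d) (1000 * d) (1000 * d) (2000 * d)
        le_rfl (by omega) (by omega) hno x hx hx'
      let v' : ι := ⟨v, hv, s, hs⟩
      have := (hαβ v' s hs).1
      have := (hαβ v' t ht).2
      exact ⟨v', by omega, by omega⟩)
    (by
      intro v v' hc hlt
      have hne : ¬ CmConn G (cmO G p n (10 * d)) v.1 v'.1 := by
        intro hcon
        have := (hαβ v _ (cmPos_trans hcon.cm_symm (hβ v'))).2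
        omega
      obtain ⟨W, _, _, _, _, t, t', ht, e1, e2, e3, _⟩ := cm_linkset (M := 1000 * d) hg hc hne
      have := (hαβ v _ e1).2
      have := (hαβ v' _ e2).1
      omega)
  have hdata : CmData G S T p n d (fun i => (c i).1) (fun i => α (c i)) (fun i => β (c i)) q long :=
    { hd := hd, hg := hg, hO := fun i => (c i).2.1, ha := fun i => hα _, hb := fun i => hβ _,
      hab := fun i => hαβ _, a0 := h1, b0 := h2, bq := h3, bn := h4, aM := h5, bb := h6, ba := h7,
      ncl := h8, short := h9, lng := h10 }
  exact hdata.cm_main1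

end cm_final

/-- The coarse Menger conjecture holds for `k = 2`. -/
theorem stmt_12 (k d : ℕ) (hk : 1 ≤ k) (hd : 1 ≤ d) :
    ∃ ℓ : ℕ, 0 < ℓ ∧ ∀ (V : Type) (G : SimpleGraph V) (S T : Set V),
      HasKPaths G S T 2 d ∨ CoarseSeparator G S T 1 ℓ := by
  refine ⟨2000 * d, by omega, fun V G S T => ?_⟩
  by_cases hST : ∃ u ∈ S, ∃ v ∈ T, ∃ _ : G.Walk u v, True
  · obtain ⟨p, n, hg⟩ := cm_exists_geo hST
    by_cases hno : ∀ i ≤ n, ∃ u ∈ S, ∃ v ∈ T, ∃ w : G.Walk u v,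
        ∀ y ∈ w.support, ¬ DistLE G (p i) y (2000 * d)
    · exact Or.inl (cm_main2 hd hg hno)
    · right
      push Not at hno
      obtain ⟨i, _, hi⟩ := hno
      refine ⟨{p i}, by simp, fun u v w _ hu hv => ?_⟩
      obtain ⟨y, hy, hy'⟩ := hi u hu v hv w
      exact ⟨y, hy, p i, by simp, hy'⟩
  · right
    exact ⟨∅, by simp, fun u v w _ hu hv => absurd ⟨u, hu, v, hv, w, trivial⟩ hST⟩
end
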